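/- arXiv:1605.08509 — 2 statements merged into one kernel-verified Lean document; each statement's English description precedes it below -/
import Mathlib

section
/- Let $n \geq 2$, let $\alpha_1,\dots,\alpha_n$ be integers with $\alpha_j \geq 3$ for all $j$, set $\alpha_{\max} = \max\{\alpha_1,\dots,\alpha_n\}$, and let $m$ be an integer with $n < m \leq n\alpha_{\max}$. If $1 \leq p \leq \frac{2n\alpha_{\max}}{2n\alpha_{\max} - m}$, then there exists a constant $A_{\alpha,n,m} > 0$ such that for every Schwartz function $f$ on $\mathbb{R}^n$, $\left(\int_{\mathbb{S}^{n-1}} |T_{\alpha,m}f(x)|^2 \, d\sigma(x)\right)^{1/2} \leq A_{\alpha,n,m} \|f\|_{L^p(\mathbb{R}^n)}$. -/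
open MeasureTheory Filter
open scoped ENNReal

/-- The oscillatory integral operator
`T_{α,m} f (x) = ∫ e^{i (x₁^{α₁} y₁^m + ⋯ + xₙ^{αₙ} yₙ^m)} f(y) dy`. -/
noncomputable def oscOp {n : ℕ} (α : Fin n → ℕ) (m : ℕ)
    (f : EuclideanSpace ℝ (Fin n) → ℂ) (x : EuclideanSpace ℝ (Fin n)) : ℂ :=
  ∫ y : EuclideanSpace ℝ (Fin n),
    Complex.exp (Complex.I * Complex.ofReal (∑ j, (x j) ^ (α j) * (y j) ^ m)) * f y

/-- integration by parts bound -/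
lemma osc_ibp (φ φ' φ'' G g : ℝ → ℝ) (x y ρ : ℝ) (hxy : x ≤ y) (hρ : 0 < ρ)
    (h1 : ∀ t, HasDerivAt φ (φ' t) t) (h2 : ∀ t, HasDerivAt φ' (φ'' t) t)
    (hc : Continuous φ'')
    (h3 : ∀ t ∈ Set.Icc x y, ρ ≤ |φ' t|)
    (hG : ∀ t ∈ Set.Icc x y, HasDerivAt G (g t) t)
    (hg : ContinuousOn g (Set.Icc x y))
    (hb : ∀ t ∈ Set.Icc x y, |φ'' t| / (φ' t)^2 ≤ g t) :
    ‖∫ t in x..y, Complex.exp (Complex.I * (φ t : ℂ))‖ ≤ 2 / ρ + (G y - G x) := by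
  have hne : ∀ t ∈ Set.Icc x y, φ' t ≠ 0 := by
    intro t ht h0
    have := h3 t ht
    rw [h0, abs_zero] at this
    linarith
  have hcφ : Continuous φ := continuous_iff_continuousAt.2 fun t => (h1 t).continuousAt
  have hcφ' : Continuous φ' := continuous_iff_continuousAt.2 fun t => (h2 t).continuousAt
  have huI : Set.uIcc x y = Set.Icc x y := Set.uIcc_of_le hxy
  let u : ℝ → ℂ := fun t => (Complex.I * (φ' t : ℂ))⁻¹
  let u' : ℝ → ℂ := fun t => -(Complex.I * (φ'' t : ℂ)) / (Complex.I * (φ' t : ℂ))^2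
  let v : ℝ → ℂ := fun t => Complex.exp (Complex.I * (φ t : ℂ))
  let v' : ℝ → ℂ := fun t => Complex.exp (Complex.I * (φ t : ℂ)) * (Complex.I * (φ' t : ℂ))
  have hu : ∀ t ∈ Set.uIcc x y, HasDerivAt u (u' t) t := by
    intro t ht
    rw [huI] at ht
    have h := ((h2 t).ofReal_comp).const_mul Complex.I
    have hn : Complex.I * (φ' t : ℂ) ≠ 0 := mul_ne_zero Complex.I_ne_zero (by exact_mod_cast hne t ht)
    exact h.inv hn
  have hv : ∀ t ∈ Set.uIcc x y, HasDerivAt v (v' t) t := by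
    intro t ht
    exact (((h1 t).ofReal_comp).const_mul Complex.I).cexp
  have hu'c : ContinuousOn u' (Set.Icc x y) := by
    apply ContinuousOn.div
    · fun_prop
    · fun_prop
    · intro t ht
      exact pow_ne_zero 2 (mul_ne_zero Complex.I_ne_zero (by exact_mod_cast hne t ht))
  have hu'i : IntervalIntegrable u' volume x y := by
    apply ContinuousOn.intervalIntegrable
    rwa [huI]
  have hv'i : IntervalIntegrable v' volume x y := by
    apply Continuous.intervalIntegrable
    fun_prop
  have hibp := intervalIntegral.integral_mul_deriv_eq_deriv_mul hu hv hu'i hv'i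
  have heq : ∫ t in x..y, Complex.exp (Complex.I * (φ t : ℂ)) = ∫ t in x..y, u t * v' t := by
    apply intervalIntegral.integral_congr
    intro t ht
    rw [huI] at ht
    have hn : (φ' t : ℂ) ≠ 0 := by exact_mod_cast hne t ht
    simp only [u, v']
    field_simp [Complex.I_ne_zero]
  have hnv : ∀ t, ‖v t‖ = 1 := by
    intro t
    simp only [v]
    rw [mul_comm]
    exact Complex.norm_exp_ofReal_mul_I _
  have hnu : ∀ t ∈ Set.Icc x y, ‖u t‖ ≤ 1 / ρ := by
    intro t ht
    simp only [u, norm_inv, norm_mul, Complex.norm_I, one_mul, Complex.norm_real, Real.norm_eq_abs]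
    rw [← one_div]
    exact one_div_le_one_div_of_le hρ (h3 t ht)
  have hgI : IntervalIntegrable g volume x y := by
    apply ContinuousOn.intervalIntegrable
    rwa [huI]
  have hint : ‖∫ t in x..y, u' t * v t‖ ≤ G y - G x := by
    have e : ∫ t in x..y, g t = G y - G x := by
      apply intervalIntegral.integral_eq_sub_of_hasDerivAt _ hgI
      rwa [huI]
    rw [← e]
    apply intervalIntegral.norm_integral_le_of_norm_le hxy _ hgI
    refine Filter.Eventually.of_forall fun t ht => ?_
    have ht' : t ∈ Set.Icc x y := ⟨ht.1.le, ht.2⟩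
    rw [norm_mul, hnv, mul_one]
    refine le_trans (le_of_eq ?_) (hb t ht')
    simp [u']
  rw [heq, hibp]
  calc _ ≤ ‖u y * v y‖ + ‖u x * v x‖ + ‖∫ t in x..y, u' t * v t‖ :=
        (norm_sub_le _ _).trans (add_le_add_left (norm_sub_le _ _) _)
    _ ≤ 1 / ρ + 1 / ρ + (G y - G x) := by
        rw [norm_mul, norm_mul, hnv, hnv, mul_one, mul_one]
        gcongr
        · exact hnu y ⟨hxy, le_rfl⟩
        · exact hnu x ⟨le_rfl, hxy⟩
    _ = _ := by ring

noncomputable def ohh (k l : ℕ) (A B t : ℝ) : ℝ :=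
  (l+3) * B * Real.sin t ^ (l+1) - (k+3) * A * Real.cos t ^ (k+1)
noncomputable def ohh' (k l : ℕ) (A B t : ℝ) : ℝ :=
  (l+3) * (l+1) * B * Real.sin t ^ l * Real.cos t + (k+3) * (k+1) * A * Real.cos t ^ k * Real.sin t
noncomputable def oph (k l : ℕ) (A B t : ℝ) : ℝ :=
  A * Real.cos t ^ (k+3) + B * Real.sin t ^ (l+3)

lemma ohh_deriv (k l : ℕ) (A B t : ℝ) : HasDerivAt (ohh k l A B) (ohh' k l A B t) t := by
  have h1 := ((Real.hasDerivAt_sin t).pow (l+1)).const_mul ((l+3) * B)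
  have h2 := ((Real.hasDerivAt_cos t).pow (k+1)).const_mul ((k+3) * A)
  have h3 : HasDerivAt (ohh k l A B) _ t := h1.sub h2
  refine h3.congr_deriv ?_
  simp [ohh']
  ring

lemma oph_deriv (k l : ℕ) (A B t : ℝ) :
    HasDerivAt (oph k l A B) (Real.sin t * Real.cos t * ohh k l A B t) t := by
  have h1 := ((Real.hasDerivAt_sin t).pow (l+3)).const_mul B
  have h2 := ((Real.hasDerivAt_cos t).pow (k+3)).const_mul A
  have h3 : HasDerivAt (oph k l A B) _ t := h2.add h1
  refine h3.congr_deriv ?_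
  simp [ohh]
  ring

lemma oph_deriv2 (k l : ℕ) (A B t : ℝ) :
    HasDerivAt (fun t => Real.sin t * Real.cos t * ohh k l A B t)
      ((Real.cos t ^ 2 - Real.sin t ^ 2) * ohh k l A B t
        + Real.sin t * Real.cos t * ohh' k l A B t) t := by
  refine (((Real.hasDerivAt_sin t).mul (Real.hasDerivAt_cos t)).mul (ohh_deriv k l A B t)).congr_deriv ?_
  simp only [Pi.mul_apply]
  ring

lemma ohh_cont (k l : ℕ) (A B : ℝ) : Continuous (ohh k l A B) := by unfold ohh; fun_prop
lemma ohh'_cont (k l : ℕ) (A B : ℝ) : Continuous (ohh' k l A B) := by unfold ohh'; fun_prop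

lemma trig_bd (t : ℝ) (h0 : 0 ≤ t) (h1 : t ≤ Real.pi / 4) :
    t / 2 ≤ Real.sin t ∧ Real.sin t ≤ t ∧ 1 / 2 ≤ Real.cos t ∧ Real.cos t ≤ 1 ∧ t ≤ 1 ∧ Real.sin t ≤ 1 := by
  have hp := Real.pi_lt_four
  have hp0 := Real.pi_pos
  have ht1 : t ≤ 1 := by linarith
  refine ⟨?_, Real.sin_le h0, ?_, Real.cos_le_one _, ht1, Real.sin_le_one _⟩
  · have := Real.mul_le_sin h0 (by linarith)
    refine le_trans ?_ this
    have : (1:ℝ) / 2 ≤ 2 / Real.pi := by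
      rw [div_le_div_iff₀ (by norm_num) hp0]; linarith
    nlinarith
  · have := Real.one_sub_sq_div_two_le_cos (x := t)
    nlinarith

lemma ratio_bd (s c h h' t : ℝ) (ht : 0 < t) (hs : t / 2 ≤ s) (hs1 : s ≤ 1) (hc : 1 / 2 ≤ c) (hc1 : c ≤ 1)
    (hh : h ≠ 0) :
    |(c^2 - s^2) * h + s * c * h'| / (s * c * h)^2 ≤ 16 / (t^2 * |h|) + 4 * |h'| / (t * h^2) := by
  have hw : t / 4 ≤ s * c := by nlinarith
  have hw0 : 0 < s * c := by linarith
  have hh0 : 0 < |h| := abs_pos.2 hh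
  have hcs : |c^2 - s^2| ≤ 1 := by rw [abs_le]; constructor <;> nlinarith
  have e1 : |(c^2 - s^2) * h + s * c * h'| ≤ |h| + (s * c) * |h'| := by
    refine (abs_add_le _ _).trans ?_
    rw [abs_mul, abs_mul (s*c), abs_of_pos hw0]
    gcongr
    nlinarith
  have hsq : h^2 = |h|^2 := (sq_abs h).symm
  calc _ ≤ (|h| + (s * c) * |h'|) / (s * c * h)^2 := by gcongr
    _ = 1 / ((s*c)^2 * |h|) + |h'| / ((s * c) * h^2) := by
        rw [mul_pow, hsq]; field_simp
    _ ≤ 1 / ((t/4)^2 * |h|) + |h'| / ((t/4) * h^2) := by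
        gcongr
    _ = _ := by field_simp; ring

lemma case_mono (k l : ℕ) (A B : ℝ) (u v ε lam : ℝ) (hε : 0 < ε) (hu : ε ≤ u) (huv : u ≤ v)
    (hv : v ≤ Real.pi / 4) (hlam : 0 < lam) (hA : 0 ≤ A) (hB : 0 ≤ B)
    (hh : ∀ t ∈ Set.Icc u v, lam ≤ |ohh k l A B t|) :
    ‖∫ t in u..v, Complex.exp (Complex.I * (oph k l A B t : ℂ))‖ ≤ 32 / (ε * lam) := by
  have hne : ∀ t ∈ Set.Icc u v, ohh k l A B t ≠ 0 := fun t ht h0 => by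
    have := hh t ht
    rw [h0, abs_zero] at this; linarith
  have key := osc_ibp (oph k l A B) _ _
    (fun t => (-16 / lam) * t⁻¹ + (-4 / ε) * (ohh k l A B t)⁻¹)
    (fun t => (-16 / lam) * (-(t^2)⁻¹) + (-4 / ε) * (-(ohh' k l A B t) / (ohh k l A B t)^2))
    u v (ε * lam / 4) huv (by positivity)
    (oph_deriv k l A B) (oph_deriv2 k l A B)
    (by have := ohh_cont k l A B
        have := ohh'_cont k l A B
        fun_prop)
    ?_ ?_ ?_ ?_
  · refine key.trans ?_
    have b : ∀ t ∈ Set.Icc u v, |(ohh k l A B t)⁻¹| ≤ 1 / lam := by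
      intro t ht
      rw [abs_inv, ← one_div]
      exact one_div_le_one_div_of_le hlam (hh t ht)
    have b1 := abs_le.1 (b u ⟨le_rfl, huv⟩)
    have b2 := abs_le.1 (b v ⟨huv, le_rfl⟩)
    have hu0 : u⁻¹ ≤ ε⁻¹ := by gcongr
    have hv0 : 0 ≤ v⁻¹ := by have : 0 < v := by linarith
                             positivity
    have : (-4 / ε) * (ohh k l A B v)⁻¹ - (-4 / ε) * (ohh k l A B u)⁻¹ ≤ (4/ε) * (2 / lam) := by
      rw [← mul_sub, neg_div, neg_mul, ← mul_neg]
      gcongr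
      have : 2 / lam = 1 / lam + 1/ lam := by ring
      linarith
    have t2 : (-16 / lam) * v⁻¹ - (-16 / lam) * u⁻¹ ≤ (16/lam) * ε⁻¹ := by
      rw [← mul_sub, neg_div, neg_mul, ← mul_neg]
      gcongr
      linarith
    have e : 32 / (ε * lam) = 2 / (ε * lam / 4) + ((16/lam) * ε⁻¹ + (4/ε) * (2 / lam)) := by
      field_simp; norm_num
    rw [e]
    linarith
  · intro t ht
    obtain ⟨b1, b2, b3, b4, b5, b6⟩ := trig_bd t (by linarith [ht.1]) (ht.2.trans hv)
    rw [abs_mul, abs_of_nonneg (by apply mul_nonneg <;> linarith [ht.1])]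
    have : ε / 4 ≤ Real.sin t * Real.cos t := by nlinarith [ht.1]
    calc ε * lam / 4 = (ε/4) * lam := by ring
      _ ≤ _ := mul_le_mul this (hh t ht) hlam.le (by linarith)
  · intro t ht
    have ht0 : t ≠ 0 := by linarith [ht.1]
    exact ((hasDerivAt_inv ht0).const_mul _).add (((ohh_deriv k l A B t).inv (hne t ht)).const_mul _)
  · have := ohh_cont k l A B
    have := ohh'_cont k l A B
    have h1 : ContinuousOn (fun t : ℝ => (t^2)⁻¹) (Set.Icc u v) :=
      ContinuousOn.inv₀ (by fun_prop) (fun t ht => pow_ne_zero 2 (by linarith [ht.1]))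
    have h2 : ContinuousOn (fun t : ℝ => -(ohh' k l A B t) / (ohh k l A B t)^2) (Set.Icc u v) :=
      ContinuousOn.div (by fun_prop) (by fun_prop) (fun t ht => pow_ne_zero 2 (hne t ht))
    fun_prop
  · intro t ht
    have ht0 : 0 < t := by linarith [ht.1]
    obtain ⟨b1, b2, b3, b4, b5, b6⟩ := trig_bd t ht0.le (ht.2.trans hv)
    refine (ratio_bd _ _ _ _ t ht0 b1 b6 b3 b4 (hne t ht)).trans ?_
    have hs0 : 0 ≤ Real.sin t := by linarith
    have hc0 : 0 ≤ Real.cos t := by linarith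
    have hp : 0 ≤ ohh' k l A B t := by unfold ohh'; positivity
    rw [abs_of_nonneg hp]
    have hl := hh t ht
    have hne' := hne t ht
    have e1 : 16 / (t^2 * |ohh k l A B t|) ≤ 16 / (t^2 * lam) := by gcongr
    have hte := ht.1
    have e2 : 4 * ohh' k l A B t / (t * ohh k l A B t ^ 2) ≤ 4 * ohh' k l A B t / (ε * ohh k l A B t ^ 2) := by
      have : 0 < ohh k l A B t ^ 2 := by positivity
      gcongr
      linarith
    refine (add_le_add e1 e2).trans (le_of_eq ?_)
    field_simp

lemma case_N (k l : ℕ) (c : ℝ) (hc : 0 < c) : ∃ C : ℝ, 0 ≤ C ∧ ∀ A B M ε y : ℝ, 0 < ε → ε ≤ y →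
    y ≤ Real.pi / 4 → M = max |A| |B| → M * ε ^ (l+3) = 1 →
    (∀ t, 0 ≤ t → t ≤ Real.pi / 4 → c * (|A| + |B| * t^(l+1)) ≤ |ohh k l A B t|) →
    ‖∫ t in ε..y, Complex.exp (Complex.I * (oph k l A B t : ℂ))‖ ≤ C * ε := by
  set D : ℝ := (k+3)*(k+1) + (l+3)*(l+1) with hD
  have hD0 : 0 ≤ D := by positivity
  refine ⟨8 / c + (16 + 4 * (D / c)) / c, by positivity, ?_⟩
  intro A B M ε y hε hεy hy hM hMe hh
  have hM0 : 0 < M := by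
    by_contra hneg
    have : M = 0 := le_antisymm (not_lt.1 hneg) (by rw [hM]; positivity)
    rw [this] at hMe; simp at hMe
  have hlow : ∀ t ∈ Set.Icc ε y, c * (M * ε^(l+1)) ≤ |ohh k l A B t| := by
    intro t ht
    have ht0 : 0 < t := by linarith [ht.1]
    obtain ⟨b1, b2, b3, b4, b5, b6⟩ := trig_bd t ht0.le (ht.2.trans hy)
    refine le_trans ?_ (hh t ht0.le (ht.2.trans hy))
    gcongr
    have h1 : ε^(l+1) ≤ t^(l+1) := by gcongr; exact ht.1
    have h2 : t^(l+1) ≤ 1 := pow_le_one₀ ht0.le b5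
    have hA := abs_nonneg A
    have hB := abs_nonneg B
    have h3 : 0 < t^(l+1) := by positivity
    rcases le_total |A| |B| with h | h
    · rw [hM, max_eq_right h]; nlinarith
    · rw [hM, max_eq_left h]; nlinarith
  set lam := c * (M * ε^(l+1)) with hlamdef
  have hlam : 0 < lam := by positivity
  have hne : ∀ t ∈ Set.Icc ε y, ohh k l A B t ≠ 0 := fun t ht h0 => by
    have := hlow t ht
    rw [h0, abs_zero] at this; linarith
  set E := (16 + 4 * (D / c)) / lam with hE
  have hE0 : 0 ≤ E := by positivity
  have key := osc_ibp (oph k l A B) _ _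
    (fun t => (-E) * t⁻¹)
    (fun t => (-E) * (-(t^2)⁻¹))
    ε y (ε * lam / 4) hεy (by positivity)
    (oph_deriv k l A B) (oph_deriv2 k l A B)
    (by have := ohh_cont k l A B
        have := ohh'_cont k l A B
        fun_prop)
    ?_ ?_ ?_ ?_
  · refine key.trans ?_
    have hv0 : 0 ≤ E * y⁻¹ := by have : 0 < y := by linarith
                                 positivity
    have e : (8 / c + (16 + 4 * (D / c)) / c) * ε = 2 / (ε * lam / 4) + E * ε⁻¹ := by
      have hMM : M = 1 / ε^(l+3) := by field_simp; linarith
      rw [hE, hlamdef, hMM]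
      field_simp
      ring
    rw [e]
    linarith
  · intro t ht
    obtain ⟨b1, b2, b3, b4, b5, b6⟩ := trig_bd t (by linarith [ht.1]) (ht.2.trans hy)
    rw [abs_mul, abs_of_nonneg (by apply mul_nonneg <;> linarith [ht.1])]
    have : ε / 4 ≤ Real.sin t * Real.cos t := by nlinarith [ht.1]
    calc ε * lam / 4 = (ε/4) * lam := by ring
      _ ≤ _ := mul_le_mul this (hlow t ht) hlam.le (by linarith)
  · intro t ht
    have ht0 : t ≠ 0 := by linarith [ht.1]
    exact ((hasDerivAt_inv ht0).const_mul _)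
  · have h1 : ContinuousOn (fun t : ℝ => (t^2)⁻¹) (Set.Icc ε y) :=
      ContinuousOn.inv₀ (by fun_prop) (fun t ht => pow_ne_zero 2 (by linarith [ht.1]))
    fun_prop
  · intro t ht
    have ht0 : 0 < t := by linarith [ht.1]
    obtain ⟨b1, b2, b3, b4, b5, b6⟩ := trig_bd t ht0.le (ht.2.trans hy)
    refine (ratio_bd _ _ _ _ t ht0 b1 b6 b3 b4 (hne t ht)).trans ?_
    have hs0 : 0 ≤ Real.sin t := by linarith
    have hc0 : 0 ≤ Real.cos t := by linarith
    have hl := hlow t ht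
    have hne' := hne t ht
    have hup : t * |ohh' k l A B t| ≤ (D / c) * |ohh k l A B t| := by
      have h1 : |ohh' k l A B t| ≤ (l+3)*(l+1)*|B| *t^l + (k+3)*(k+1)*|A| := by
        unfold ohh'
        refine (abs_add_le _ _).trans ?_
        simp only [abs_mul, abs_pow, abs_of_nonneg hs0, abs_of_nonneg hc0,
          abs_of_nonneg (by positivity : (0:ℝ) ≤ (l:ℝ)+3), abs_of_nonneg (by positivity : (0:ℝ) ≤ (l:ℝ)+1),
          abs_of_nonneg (by positivity : (0:ℝ) ≤ (k:ℝ)+3), abs_of_nonneg (by positivity : (0:ℝ) ≤ (k:ℝ)+1)]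
        have p1 : Real.sin t ^ l * Real.cos t ≤ t^l * 1 := by gcongr
        have p2 : Real.cos t ^ k * Real.sin t ≤ 1 * 1 := by
          gcongr
          exact pow_le_one₀ hc0 b4
        calc _ = (l+3)*(l+1)*|B| *(Real.sin t ^ l * Real.cos t) + (k+3)*(k+1)*|A| *(Real.cos t ^ k * Real.sin t) := by ring
          _ ≤ (l+3)*(l+1)*|B| *(t^l * 1) + (k+3)*(k+1)*|A| *(1*1) := by gcongr
          _ = _ := by ring
      have h2 := hh t ht0.le (ht.2.trans hy)
      calc t * |ohh' k l A B t| ≤ t * ((l+3)*(l+1)*|B| *t^l + (k+3)*(k+1)*|A|) := by gcongr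
        _ = (l+3)*(l+1)*(|B| *t^(l+1)) + (k+3)*(k+1)*|A| *t := by ring
        _ ≤ (l+3)*(l+1)*(|B| *t^(l+1)) + (k+3)*(k+1)*|A| *1 := by gcongr
        _ ≤ D * (|A| + |B| * t^(l+1)) := by
            have : 0 ≤ |B| * t^(l+1) := by positivity
            have : 0 ≤ ((k:ℝ)+3)*(k+1) * (|B| * t^(l+1)) := by positivity
            have : 0 ≤ ((l:ℝ)+3)*(l+1) * |A| := by positivity
            rw [hD]; linarith
        _ = (D/c) * (c * (|A| + |B| * t^(l+1))) := by field_simp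
        _ ≤ _ := by gcongr
    have hh0 : 0 < |ohh k l A B t| := by linarith
    have hsq : ohh k l A B t ^ 2 = |ohh k l A B t| ^ 2 := (sq_abs _).symm
    rw [hsq]
    calc _ = (16 * |ohh k l A B t| + 4 * (t * |ohh' k l A B t|)) / (t^2 * |ohh k l A B t|^2) := by field_simp
      _ ≤ (16 * |ohh k l A B t| + 4 * ((D / c) * |ohh k l A B t|)) / (t^2 * |ohh k l A B t|^2) := by gcongr
      _ = (16 + 4 * (D/c)) / (t^2 * |ohh k l A B t|) := by field_simp
      _ ≤ (16 + 4 * (D/c)) / (t^2 * lam) := by gcongr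
      _ = _ := by rw [hE]; field_simp

lemma osc_trivial (φ : ℝ → ℝ) (x y : ℝ) (hxy : x ≤ y) :
    ‖∫ t in x..y, Complex.exp (Complex.I * (φ t : ℂ))‖ ≤ y - x := by
  have := intervalIntegral.norm_integral_le_of_norm_le_const (a := x) (b := y)
    (f := fun t => Complex.exp (Complex.I * (φ t : ℂ))) (C := 1) (fun t _ => by
      rw [mul_comm]; exact (Complex.norm_exp_ofReal_mul_I _).le)
  rwa [one_mul, abs_of_nonneg (by linarith)] at this

lemma slope_split (h h' : ℝ → ℝ) (x y κ : ℝ) (hxy : x ≤ y)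
    (hd : ∀ t, HasDerivAt h (h' t) t) (hκ : ∀ t ∈ Set.Icc x y, κ ≤ h' t) :
    ∃ z ∈ Set.Icc x y, (∀ t ∈ Set.Ioc z y, κ * (t - z) ≤ h t) ∧
      (∀ t ∈ Set.Ico x z, h t ≤ - (κ * (z - t))) := by
  have hc : Continuous h := continuous_iff_continuousAt.2 fun t => (hd t).continuousAt
  have sl : ∀ s ∈ Set.Icc x y, ∀ t ∈ Set.Icc x y, s ≤ t → κ * (t - s) ≤ h t - h s := by
    apply Convex.mul_sub_le_image_sub_of_le_deriv (convex_Icc x y) hc.continuousOn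
    · intro t _; exact (hd t).differentiableAt.differentiableWithinAt
    · intro t ht
      rw [(hd t).deriv]
      exact hκ t (interior_subset ht)
  have hxm : x ∈ Set.Icc x y := ⟨le_rfl, hxy⟩
  have hym : y ∈ Set.Icc x y := ⟨hxy, le_rfl⟩
  by_cases h1 : 0 ≤ h x
  · refine ⟨x, hxm, ?_, ?_⟩
    · intro t ht
      have := sl x hxm t ⟨ht.1.le, ht.2⟩ ht.1.le
      linarith
    · intro t ht
      exact absurd ht.2 (not_lt.2 ht.1)
  by_cases h2 : h y ≤ 0
  · refine ⟨y, hym, ?_, ?_⟩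
    · intro t ht
      exact absurd ht.1 (not_lt.2 ht.2)
    · intro t ht
      have := sl t ⟨ht.1, ht.2.le⟩ y hym ht.2.le
      linarith
  obtain ⟨z, hz, hz0⟩ := intermediate_value_Icc hxy hc.continuousOn
    (show (0:ℝ) ∈ Set.Icc (h x) (h y) from ⟨by linarith, by linarith⟩)
  refine ⟨z, hz, ?_, ?_⟩
  · intro t ht
    have := sl z hz t ⟨hz.1.trans ht.1.le, ht.2⟩ ht.1.le
    linarith
  · intro t ht
    have := sl t ⟨ht.1, ht.2.le.trans hz.2⟩ z hz ht.2.le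
    linarith

lemma oph_int (k l : ℕ) (A B x y : ℝ) : IntervalIntegrable
    (fun t => Complex.exp (Complex.I * (oph k l A B t : ℂ))) volume x y := by
  apply Continuous.intervalIntegrable
  unfold oph
  fun_prop

lemma case_M (k l : ℕ) (A B ε y κ lam : ℝ) (hε : 0 < ε) (hεy : ε ≤ y)
    (hy : y ≤ Real.pi / 4) (hA : 0 ≤ A) (hB : 0 ≤ B) (hlam : 0 < lam) (hκ : 0 < κ)
    (hd : ∀ t ∈ Set.Icc ε y, κ ≤ ohh' k l A B t) :
    ‖∫ t in ε..y, Complex.exp (Complex.I * (oph k l A B t : ℂ))‖ ≤ 64 / (ε * lam) + 2 * (lam / κ) := by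
  obtain ⟨z, hz, hz1, hz2⟩ := slope_split _ _ ε y κ hεy (ohh_deriv k l A B) hd
  set δ := lam / κ with hδ
  have hδ0 : 0 < δ := by positivity
  have hκδ : κ * δ = lam := by rw [hδ]; field_simp
  set u := max (z - δ) ε with hu
  set v := min (z + δ) y with hv
  have huz : u ≤ z := max_le (by linarith) hz.1
  have hzv : z ≤ v := le_min (by linarith) hz.2
  have hεu : ε ≤ u := le_max_right _ _
  have hvy : v ≤ y := min_le_right _ _
  have hb1 : ‖∫ t in ε..u, Complex.exp (Complex.I * (oph k l A B t : ℂ))‖ ≤ 32 / (ε * lam) := by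
    rcases le_total (z - δ) ε with h | h
    · rw [hu, max_eq_right h]; simp; positivity
    · rw [max_eq_left h] at hu
      apply case_mono k l A B ε u ε lam hε le_rfl hεu (by linarith) hlam hA hB
      intro t ht
      have h1 := hz2 t ⟨ht.1, by linarith [ht.2]⟩
      have h2 : lam ≤ κ * (z - t) := by
        rw [← hκδ]; gcongr; linarith [ht.2]
      rw [abs_of_nonpos (by linarith)]; linarith
  have hb3 : ‖∫ t in v..y, Complex.exp (Complex.I * (oph k l A B t : ℂ))‖ ≤ 32 / (ε * lam) := by
    rcases le_total y (z + δ) with h | h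
    · rw [hv, min_eq_right h]; simp; positivity
    · rw [min_eq_left h] at hv
      apply case_mono k l A B v y ε lam hε (by linarith) hvy hy hlam hA hB
      intro t ht
      have h1 := hz1 t ⟨by linarith [ht.1], ht.2⟩
      have h2 : lam ≤ κ * (t - z) := by
        rw [← hκδ]; gcongr; linarith [ht.1]
      rw [abs_of_nonneg (by linarith)]; linarith
  have hb2 := osc_trivial (oph k l A B) u v (huz.trans hzv)
  have hl : v - u ≤ 2 * δ := by
    have := le_max_left (z - δ) ε
    have := min_le_left (z + δ) y
    linarith
  rw [← intervalIntegral.integral_add_adjacent_intervals (oph_int k l A B ε v) (oph_int k l A B v y),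
    ← intervalIntegral.integral_add_adjacent_intervals (oph_int k l A B ε u) (oph_int k l A B u v)]
  have e : 64 / (ε * lam) = 32 / (ε * lam) + 32 / (ε * lam) := by ring
  refine (norm_add_le _ _).trans ?_
  have := norm_add_le (∫ t in ε..u, Complex.exp (Complex.I * (oph k l A B t : ℂ))) (∫ t in u..v, Complex.exp (Complex.I * (oph k l A B t : ℂ)))
  linarith

/-- cancellation case -/
lemma case_M' (k l : ℕ) : ∃ C : ℝ, 0 ≤ C ∧ ∀ A B M ε y : ℝ, 0 < ε → ε ≤ y →
    y ≤ Real.pi / 4 → M = max |A| |B| → M * ε ^ (l+3) = 1 → 0 ≤ A → 0 < B →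
    A ≤ 2^(k+2) * (l+3) * B →
    ‖∫ t in ε..y, Complex.exp (Complex.I * (oph k l A B t : ℂ))‖ ≤ C * ε := by
  refine ⟨64 + 2 * (2^(l+1) * (2^(k+2) * (l+3))), by positivity, ?_⟩
  intro A B M ε y hε hεy hy hM hMe hA hB hAB
  have h := case_M k l A B ε y (B * (ε/2)^l / 2) (1 / ε^2) hε hεy hy hA hB.le (by positivity) (by positivity) ?_
  · refine h.trans ?_
    have hMB : M ≤ 2^(k+2) * (l+3) * B := by
      rw [hM, abs_of_nonneg hA, abs_of_pos hB]
      apply max_le hAB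
      have : (1:ℝ) ≤ 2^(k+2) := one_le_pow₀ (by norm_num)
      have : (1:ℝ) * 1 ≤ 2^(k+2) * (l+3) := by gcongr; linarith [(Nat.cast_nonneg l : (0:ℝ) ≤ l)]
      nlinarith
    have hB1 : 1 ≤ (2^(k+2) * (l+3) * B) * ε^(l+3) := by rw [← hMe]; gcongr
    have e1 : 64 / (ε * (1 / ε^2)) = 64 * ε := by field_simp
    have e2 : 1 / ε^2 / (B * (ε/2)^l / 2) = 2^(l+1) / (B * ε^(l+2)) := by
      rw [div_pow]; field_simp; try ring
    have e3 : 2^(l+1) / (B * ε^(l+2)) ≤ 2^(l+1) * (2^(k+2) * (l+3)) * ε := by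
      rw [div_le_iff₀ (by positivity)]
      calc (2:ℝ)^(l+1) = 2^(l+1) * 1 := by ring
        _ ≤ 2^(l+1) * ((2^(k+2) * (l+3) * B) * ε^(l+3)) := by gcongr
        _ = _ := by ring
    rw [e1, e2]
    linarith
  · intro t ht
    have ht0 : 0 < t := by linarith [ht.1]
    obtain ⟨b1, b2, b3, b4, b5, b6⟩ := trig_bd t ht0.le (ht.2.trans hy)
    have hs0 : 0 ≤ Real.sin t := by linarith
    have hc0 : 0 ≤ Real.cos t := by linarith
    have h1 : (ε/2)^l ≤ Real.sin t ^ l := by gcongr; linarith [ht.1]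
    have h2 : 0 ≤ (k+3) * (k+1) * A * Real.cos t ^ k * Real.sin t := by positivity
    have h3 : (1:ℝ) ≤ (l+3) * (l+1) := by nlinarith [(Nat.cast_nonneg l : (0:ℝ) ≤ l)]
    unfold ohh'
    calc B * (ε/2)^l / 2 = 1 * B * (ε/2)^l * (1/2) := by ring
      _ ≤ (l+3) * (l+1) * B * Real.sin t ^ l * Real.cos t := by gcongr
      _ ≤ _ := by linarith

lemma oph_neg (k l : ℕ) (A B x y : ℝ) :
    ‖∫ t in x..y, Complex.exp (Complex.I * (oph k l (-A) (-B) t : ℂ))‖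
     = ‖∫ t in x..y, Complex.exp (Complex.I * (oph k l A B t : ℂ))‖ := by
  rw [← Complex.norm_conj (∫ t in x..y, Complex.exp (Complex.I * (oph k l A B t : ℂ)))]
  rw [intervalIntegral, intervalIntegral, map_sub, ← integral_conj, ← integral_conj]
  have : ∀ t, Complex.exp (Complex.I * (oph k l (-A) (-B) t : ℂ)) = (starRingEnd ℂ) (Complex.exp (Complex.I * (oph k l A B t : ℂ))) := by
    intro t
    rw [← Complex.exp_conj]
    have e : oph k l (-A) (-B) t = - oph k l A B t := by unfold oph; ring
    congr 1
    rw [e, map_mul, Complex.conj_I, Complex.conj_ofReal]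
    push_cast
    ring
  simp_rw [this]

lemma octant_bd (k l : ℕ) : ∃ C : ℝ, 0 ≤ C ∧ ∀ A B M ε y : ℝ, 0 < ε → 0 ≤ y →
    y ≤ Real.pi / 4 → M = max |A| |B| → M * ε ^ (l+3) = 1 →
    ‖∫ t in (0:ℝ)..y, Complex.exp (Complex.I * (oph k l A B t : ℂ))‖ ≤ C * ε := by
  set c : ℝ := (1/2)^(k+l+3) with hc
  have hc0 : 0 < c := by positivity
  obtain ⟨C1, hC1, H1⟩ := case_N k l c hc0
  obtain ⟨C2, hC2, H2⟩ := case_M' k l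
  refine ⟨1 + C1 + C2, by positivity, ?_⟩
  intro A B M ε y hε hy0 hy hM hMe
  rcases le_total y ε with h | h
  · have := osc_trivial (oph k l A B) 0 y hy0
    nlinarith
  rw [← intervalIntegral.integral_add_adjacent_intervals (oph_int k l A B 0 ε) (oph_int k l A B ε y)]
  have h0 := osc_trivial (oph k l A B) 0 ε hε.le
  suffices hs : ‖∫ t in ε..y, Complex.exp (Complex.I * (oph k l A B t : ℂ))‖ ≤ (C1 + C2) * ε by
    refine (norm_add_le _ _).trans ?_
    linarith
  have w1 : C1 * ε ≤ (C1 + C2) * ε := by gcongr; linarith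
  have w2 : C2 * ε ≤ (C1 + C2) * ε := by gcongr; linarith
  have hl0 : (0:ℝ) ≤ l := Nat.cast_nonneg l
  have hk0 : (0:ℝ) ≤ k := Nat.cast_nonneg k
  have hck : c ≤ (1/2)^(k+2) := by
    apply pow_le_pow_of_le_one <;> [norm_num; norm_num; omega]
  have hcl : c ≤ (1/2)^(l+1) := by
    apply pow_le_pow_of_le_one <;> [norm_num; norm_num; omega]
  by_cases hN2 : 2 * (l+3) * |B| ≤ (k+3) * |A| * (1/2)^(k+1)
  · refine (H1 A B M ε y hε h hy hM hMe ?_).trans w1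
    intro t ht0 ht
    obtain ⟨b1, b2, b3, b4, b5, b6⟩ := trig_bd t ht0 ht
    have hs0 : 0 ≤ Real.sin t := by linarith
    have hc0 : 0 ≤ Real.cos t := by linarith
    have e1 : |ohh k l A B t| ≥ (k+3) * |A| * Real.cos t ^ (k+1) - (l+3) * |B| * Real.sin t ^ (l+1) := by
      unfold ohh
      have := abs_sub_abs_le_abs_sub ((k+3) * A * Real.cos t ^ (k+1)) ((l+3) * B * Real.sin t ^ (l+1))
      rw [abs_sub_comm]
      refine le_trans (le_of_eq ?_) this
      simp only [abs_mul, abs_pow, abs_of_nonneg hs0, abs_of_nonneg hc0,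
          abs_of_nonneg (by positivity : (0:ℝ) ≤ (l:ℝ)+3),
          abs_of_nonneg (by positivity : (0:ℝ) ≤ (k:ℝ)+3)]
    have e2 : (k+3) * |A| * (1/2)^(k+1) ≤ (k+3) * |A| * Real.cos t ^ (k+1) := by gcongr
    have e3 : (l+3) * |B| * Real.sin t ^ (l+1) ≤ (l+3) * |B| * 1 := by
      gcongr; exact pow_le_one₀ hs0 b6
    have e4 : |B| * t^(l+1) ≤ |B| * 1 := by gcongr; exact pow_le_one₀ ht0 b5
    have e5 : c * |A| ≤ (1/2)^(k+2) * |A| := by gcongr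
    have hc1 : c ≤ 1 := pow_le_one₀ (by norm_num) (by norm_num)
    have e6 : c * (|B| * t^(l+1)) ≤ 1 * (|B| * 1) := by gcongr
    have e7 : 0 ≤ |A| * (1/2)^(k+1) := by positivity
    have e8 : (1/2:ℝ)^(k+2) * |A| = |A| * (1/2)^(k+1) / 2 := by ring
    have e9 : 0 ≤ k * (|A| * (1/2)^(k+1)) := by positivity
    have e10 : 0 ≤ l * |B| := by positivity
    have e11 := abs_nonneg B
    nlinarith
  by_cases hN1 : A * B ≤ 0
  · refine (H1 A B M ε y hε h hy hM hMe ?_).trans w1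
    intro t ht0 ht
    obtain ⟨b1, b2, b3, b4, b5, b6⟩ := trig_bd t ht0 ht
    have hs0 : 0 ≤ Real.sin t := by linarith
    have hc0 : 0 ≤ Real.cos t := by linarith
    have e1 : |ohh k l A B t| = (k+3) * |A| * Real.cos t ^ (k+1) + (l+3) * |B| * Real.sin t ^ (l+1) := by
      have p1 : 0 ≤ Real.cos t ^ (k+1) := by positivity
      have p2 : 0 ≤ Real.sin t ^ (l+1) := by positivity
      unfold ohh
      rcases mul_nonpos_iff.1 hN1 with ⟨ha, hb⟩ | ⟨ha, hb⟩
      · rw [abs_of_nonneg ha, abs_of_nonpos hb, abs_of_nonpos]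
        · ring
        · have q1 : 0 ≤ (k+3) * A * Real.cos t ^ (k+1) := by positivity
          have q2 : 0 ≤ (l+3) * (-B) * Real.sin t ^ (l+1) := by
            have : 0 ≤ -B := by linarith
            positivity
          linarith
      · rw [abs_of_nonpos ha, abs_of_nonneg hb, abs_of_nonneg]
        · ring
        · have q1 : 0 ≤ (k+3) * (-A) * Real.cos t ^ (k+1) := by
            have : 0 ≤ -A := by linarith
            positivity
          have q2 : 0 ≤ (l+3) * B * Real.sin t ^ (l+1) := by positivity
          linarith
    rw [e1, mul_add]
    have hck' : c ≤ (1/2)^(k+1) := by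
      apply pow_le_pow_of_le_one <;> [norm_num; norm_num; omega]
    apply add_le_add
    · calc c * |A| ≤ (1/2)^(k+1) * |A| := by gcongr
        _ = 1 * |A| * (1/2)^(k+1) := by ring
        _ ≤ _ := by gcongr; linarith
    · calc c * (|B| * t^(l+1)) ≤ (1/2)^(l+1) * (|B| * t^(l+1)) := by gcongr
        _ = 1 * |B| * (t/2)^(l+1) := by rw [div_eq_mul_one_div, mul_pow]; ring
        _ ≤ _ := by gcongr; linarith
  push Not at hN1 hN2
  have key : |A| ≤ 2^(k+2) * (l+3) * |B| := by
    have e : (3:ℝ) * |A| * (1/2)^(k+1) ≤ (k+3) * |A| * (1/2)^(k+1) := by gcongr; linarith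
    have e2 : 3 * |A| * (1/2)^(k+1) ≤ 2 * (l+3) * |B| := by linarith
    have e3 : |A| = (3 * |A| * (1/2)^(k+1)) * (2^(k+1) / 3) := by
      rw [one_div, inv_pow]; field_simp
    rw [e3]
    calc _ ≤ (2 * (l+3) * |B|) * (2^(k+1) / 3) := by gcongr
      _ = 2^(k+2) * (l+3) * |B| * (1/3) := by ring
      _ ≤ 2^(k+2) * (l+3) * |B| * 1 := by gcongr; norm_num
      _ = _ := by ring
  rcases pos_and_pos_or_neg_and_neg_of_mul_pos hN1 with ⟨ha, hb⟩ | ⟨ha, hb⟩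
  · refine (H2 A B M ε y hε h hy hM hMe ha.le hb ?_).trans w2
    rwa [abs_of_pos ha, abs_of_pos hb] at key
  · rw [← oph_neg]
    refine (H2 (-A) (-B) M ε y hε h hy (by simpa using hM) hMe (by linarith) (by linarith) ?_).trans w2
    rwa [abs_of_neg ha, abs_of_neg hb] at key

noncomputable def oamp (μ ν t : ℝ) : ℝ := μ * Real.sin t ^ 2 + ν * Real.cos t ^ 2

lemma oamp_abs (μ ν t : ℝ) (hμ : |μ| ≤ 1) (hν : |ν| ≤ 1) : |oamp μ ν t| ≤ 1 := by
  unfold oamp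
  refine (abs_add_le _ _).trans ?_
  rw [abs_mul, abs_mul, abs_of_nonneg (sq_nonneg (Real.sin t)), abs_of_nonneg (sq_nonneg (Real.cos t))]
  have := Real.sin_sq_add_cos_sq t
  nlinarith [sq_nonneg (Real.sin t), sq_nonneg (Real.cos t)]

noncomputable def oJ (a b : ℕ) (A B μ ν t : ℝ) : ℂ :=
  (oamp μ ν t : ℂ) * Complex.exp (Complex.I * ((A * Real.cos t ^ a + B * Real.sin t ^ b : ℝ) : ℂ))

lemma oJ_cont (a b : ℕ) (A B μ ν : ℝ) : Continuous (oJ a b A B μ ν) := by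
  unfold oJ oamp; fun_prop

lemma oJ_int (a b : ℕ) (A B μ ν x y : ℝ) : IntervalIntegrable (oJ a b A B μ ν) volume x y :=
  (oJ_cont a b A B μ ν).intervalIntegrable _ _

lemma oJ_norm (a b : ℕ) (A B μ ν t : ℝ) (hμ : |μ| ≤ 1) (hν : |ν| ≤ 1) : ‖oJ a b A B μ ν t‖ ≤ 1 := by
  unfold oJ
  rw [norm_mul, mul_comm Complex.I, Complex.norm_exp_ofReal_mul_I, mul_one, Complex.norm_real]
  exact oamp_abs μ ν t hμ hν

lemma octant_amp (k l : ℕ) : ∃ C : ℝ, 0 ≤ C ∧ ∀ A B μ ν M ε : ℝ, |μ| ≤ 1 → |ν| ≤ 1 → 0 < ε →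
    M = max |A| |B| → M * ε ^ (l+3) = 1 →
    ‖∫ t in (0:ℝ)..(Real.pi/4), oJ (k+3) (l+3) A B μ ν t‖ ≤ C * ε := by
  obtain ⟨C, hC, H⟩ := octant_bd k l
  refine ⟨6 * C, by positivity, ?_⟩
  intro A B μ ν M ε hμ hν hε hM hMe
  have hp : 0 ≤ Real.pi / 4 := by positivity
  let f : ℝ → ℂ := fun t => Complex.exp (Complex.I * (oph k l A B t : ℂ))
  have hf : Continuous f := by simp only [f]; unfold oph; fun_prop
  let E : ℝ → ℂ := fun y => ∫ t in (0:ℝ)..y, f t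
  have hE : ∀ y, HasDerivAt E (f y) y := fun y =>
    intervalIntegral.integral_hasDerivAt_right (hf.intervalIntegrable _ _)
      (hf.stronglyMeasurableAtFilter _ _) hf.continuousAt
  let g' : ℝ → ℝ := fun t => 2 * (μ - ν) * (Real.sin t * Real.cos t)
  have hg : ∀ t, HasDerivAt (oamp μ ν) (g' t) t := by
    intro t
    have h1 := ((Real.hasDerivAt_sin t).pow 2).const_mul μ
    have h2 := ((Real.hasDerivAt_cos t).pow 2).const_mul ν
    have h3 : HasDerivAt (oamp μ ν) _ t := h1.add h2
    refine h3.congr_deriv ?_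
    simp [g']
    ring
  have hgc : ∀ t, HasDerivAt (fun t => (oamp μ ν t : ℂ)) (g' t : ℂ) t := fun t => (hg t).ofReal_comp
  have hEb : ∀ y, 0 ≤ y → y ≤ Real.pi / 4 → ‖E y‖ ≤ C * ε := fun y h0 h1 => H A B M ε y hε h0 h1 hM hMe
  have ibp := intervalIntegral.integral_mul_deriv_eq_deriv_mul (a := 0) (b := Real.pi/4)
    (fun t _ => hgc t) (fun t _ => hE t)
    (by apply Continuous.intervalIntegrable; simp only [g']; fun_prop) (hf.intervalIntegrable _ _)
  have e : ∫ t in (0:ℝ)..(Real.pi/4), oJ (k+3) (l+3) A B μ ν t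
    = ∫ t in (0:ℝ)..(Real.pi/4), (oamp μ ν t : ℂ) * f t := rfl
  rw [e, ibp]
  have hE0 : E 0 = 0 := by simp [E]
  rw [hE0, mul_zero, sub_zero]
  have n1 : ‖(oamp μ ν (Real.pi/4) : ℂ) * E (Real.pi/4)‖ ≤ 1 * (C * ε) := by
    rw [norm_mul, Complex.norm_real]
    gcongr
    · exact oamp_abs μ ν _ hμ hν
    · exact hEb _ hp le_rfl
  have n2 : ‖∫ t in (0:ℝ)..(Real.pi/4), (g' t : ℂ) * E t‖ ≤ (4 * (C * ε)) * |Real.pi/4 - 0| := by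
    apply intervalIntegral.norm_integral_le_of_norm_le_const
    intro t ht
    rw [Set.uIoc_of_le hp] at ht
    rw [norm_mul, Complex.norm_real]
    gcongr
    · simp only [g', Real.norm_eq_abs]
      rw [abs_mul, abs_mul, abs_mul]
      have h1 : |μ - ν| ≤ 2 := (abs_sub _ _).trans (by linarith)
      have h2 := Real.abs_sin_le_one t
      have h3 := Real.abs_cos_le_one t
      calc |(2:ℝ)| * |μ - ν| * (|Real.sin t| * |Real.cos t|) ≤ 2 * 2 * (1 * 1) := by
            rw [abs_two]; gcongr
        _ = 4 := by norm_num
    · exact hEb t ht.1.le ht.2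
  rw [sub_zero, abs_of_nonneg hp] at n2
  have : 4 * (C * ε) * (Real.pi / 4) ≤ 4 * (C * ε) * 1 := by
    gcongr; linarith [Real.pi_lt_four]
  have hCe : 0 ≤ C * ε := by positivity
  refine (norm_sub_le _ _).trans ?_
  linarith

lemma octant_pow (a b : ℕ) (ha : 3 ≤ a) (hb : 3 ≤ b) (δ : ℝ) (hδ0 : 0 ≤ δ) (hδ : δ * b ≤ 1) :
    ∃ C : ℝ, 0 ≤ C ∧ ∀ A B μ ν M : ℝ, |μ| ≤ 1 → |ν| ≤ 1 → M = max |A| |B| → 0 < M →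
    ‖∫ t in (0:ℝ)..(Real.pi/4), oJ a b A B μ ν t‖ ≤ C * M ^ (-δ) := by
  obtain ⟨k, rfl⟩ := Nat.exists_eq_add_of_le' ha
  obtain ⟨l, rfl⟩ := Nat.exists_eq_add_of_le' hb
  obtain ⟨C, hC, H⟩ := octant_amp k l
  refine ⟨C + 1, by positivity, ?_⟩
  intro A B μ ν M hμ hν hM hM0
  have hMp : 0 < M ^ (-δ) := Real.rpow_pos_of_pos hM0 _
  rcases le_total 1 M with h | h
  · have hl : (0:ℝ) < ((l+3 : ℕ) : ℝ) := by positivity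
    have := H A B μ ν M (M ^ (-(1/((l+3 : ℕ):ℝ)))) hμ hν (Real.rpow_pos_of_pos hM0 _) hM ?_
    · refine this.trans ?_
      have : M ^ (-(1/((l+3 : ℕ):ℝ))) ≤ M ^ (-δ) := by
        apply Real.rpow_le_rpow_of_exponent_le h
        rw [neg_le_neg_iff, le_div_iff₀ hl]
        exact hδ
      nlinarith
    · rw [← Real.rpow_natCast (M ^ _), ← Real.rpow_mul hM0.le, neg_mul, one_div,
        inv_mul_cancel₀ hl.ne', Real.rpow_neg_one, mul_inv_cancel₀ hM0.ne']
  · have h1 : 1 ≤ M ^ (-δ) := Real.one_le_rpow_of_pos_of_le_one_of_nonpos hM0 h (by linarith)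
    have := intervalIntegral.norm_integral_le_of_norm_le_const (a := 0) (b := Real.pi/4)
      (f := oJ (k+3) (l+3) A B μ ν) (C := 1) (fun t _ => oJ_norm _ _ A B μ ν t hμ hν)
    rw [sub_zero, abs_of_nonneg (by positivity), one_mul] at this
    refine this.trans ?_
    have := Real.pi_lt_four
    nlinarith

lemma quad_pow (a b : ℕ) (ha : 3 ≤ a) (hb : 3 ≤ b) (δ : ℝ) (hδ0 : 0 ≤ δ) (hδa : δ * a ≤ 1) (hδ : δ * b ≤ 1) :
    ∃ C : ℝ, 0 ≤ C ∧ ∀ A B μ ν M : ℝ, |μ| ≤ 1 → |ν| ≤ 1 → M = max |A| |B| → 0 < M →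
    ‖∫ t in (0:ℝ)..(Real.pi/2), oJ a b A B μ ν t‖ ≤ C * M ^ (-δ) := by
  obtain ⟨C1, hC1, H1⟩ := octant_pow a b ha hb δ hδ0 hδ
  obtain ⟨C2, hC2, H2⟩ := octant_pow b a hb ha δ hδ0 hδa
  refine ⟨C1 + C2, by positivity, ?_⟩
  intro A B μ ν M hμ hν hM hM0
  rw [← intervalIntegral.integral_add_adjacent_intervals (oJ_int a b A B μ ν 0 (Real.pi/4)) (oJ_int a b A B μ ν (Real.pi/4) _)]
  have e : ∫ t in (Real.pi/4)..(Real.pi/2), oJ a b A B μ ν t = ∫ t in (0:ℝ)..(Real.pi/4), oJ b a B A ν μ t := by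
    have := intervalIntegral.integral_comp_sub_left (a := 0) (b := Real.pi/4) (oJ a b A B μ ν) (Real.pi/2)
    rw [sub_zero, show Real.pi/2 - Real.pi/4 = Real.pi/4 by ring] at this
    rw [← this]
    congr 1
    ext t
    simp only [oJ, oamp, Real.sin_pi_div_two_sub, Real.cos_pi_div_two_sub]
    rw [add_comm (μ * _), add_comm (A * _)]
  rw [e]
  refine (norm_add_le _ _).trans ?_
  rw [add_mul]
  exact add_le_add (H1 A B μ ν M hμ hν hM hM0) (H2 B A ν μ M hν hμ (by rw [hM, max_comm]) hM0)

lemma circle_pow (a b : ℕ) (ha : 3 ≤ a) (hb : 3 ≤ b) (δ : ℝ) (hδ0 : 0 ≤ δ) (hδa : δ * a ≤ 1) (hδ : δ * b ≤ 1) :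
    ∃ C : ℝ, 0 ≤ C ∧ ∀ A B μ ν : ℝ, |μ| ≤ 1 → |ν| ≤ 1 → A ≠ 0 →
    ‖∫ t in (0:ℝ)..(2 * Real.pi), oJ a b A B μ ν t‖ ≤ C * |A| ^ (-δ) := by
  obtain ⟨C, hC, H⟩ := quad_pow a b ha hb δ hδ0 hδa hδ
  refine ⟨4 * C, by positivity, ?_⟩
  have half : ∀ A B μ ν M : ℝ, |μ| ≤ 1 → |ν| ≤ 1 → M = max |A| |B| → 0 < M →
      ‖∫ t in (0:ℝ)..(Real.pi), oJ a b A B μ ν t‖ ≤ 2 * C * M ^ (-δ) := by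
    intro A B μ ν M hμ hν hM hM0
    rw [← intervalIntegral.integral_add_adjacent_intervals (oJ_int a b A B μ ν 0 (Real.pi/2)) (oJ_int a b A B μ ν (Real.pi/2) _)]
    have e : ∫ t in (Real.pi/2)..(Real.pi), oJ a b A B μ ν t = ∫ t in (0:ℝ)..(Real.pi/2), oJ a b ((-1)^a * A) B μ ν t := by
      have := intervalIntegral.integral_comp_sub_left (a := 0) (b := Real.pi/2) (oJ a b A B μ ν) (Real.pi)
      rw [sub_zero, show Real.pi - Real.pi/2 = Real.pi/2 by ring] at this
      rw [← this]
      congr 1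
      ext t
      simp only [oJ, oamp, Real.sin_pi_sub, Real.cos_pi_sub, neg_sq]
      rw [neg_pow (Real.cos t) a]
      congr 4
      ring
    rw [e]
    refine (norm_add_le _ _).trans ?_
    have h1 := H A B μ ν M hμ hν hM hM0
    have h2 := H ((-1)^a * A) B μ ν M hμ hν (by rw [hM, abs_mul, abs_pow, abs_neg, abs_one, one_pow, one_mul]) hM0
    linarith
  intro A B μ ν hμ hν hA
  rw [← intervalIntegral.integral_add_adjacent_intervals (oJ_int a b A B μ ν 0 (Real.pi)) (oJ_int a b A B μ ν (Real.pi) _)]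
  have e : ∫ t in (Real.pi)..(2 * Real.pi), oJ a b A B μ ν t = ∫ t in (0:ℝ)..(Real.pi), oJ a b A ((-1)^b * B) μ ν t := by
    have := intervalIntegral.integral_comp_sub_left (a := 0) (b := Real.pi) (oJ a b A B μ ν) (2 * Real.pi)
    rw [sub_zero, show 2 * Real.pi - Real.pi = Real.pi by ring] at this
    rw [← this]
    congr 1
    ext t
    simp only [oJ, oamp, Real.sin_two_pi_sub, Real.cos_two_pi_sub, neg_sq]
    rw [neg_pow (Real.sin t) b]
    congr 4
    ring
  rw [e]
  have hM0 : 0 < max |A| |B| := lt_max_of_lt_left (abs_pos.2 hA)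
  have h1 := half A B μ ν _ hμ hν rfl hM0
  have h2 := half A ((-1)^b * B) μ ν (max |A| |B|) hμ hν (by rw [abs_mul, abs_pow, abs_neg, abs_one, one_pow, one_mul]) hM0
  have h3 : (max |A| |B|) ^ (-δ) ≤ |A| ^ (-δ) :=
    Real.rpow_le_rpow_of_nonpos (abs_pos.2 hA) (le_max_left _ _) (by linarith)
  refine (norm_add_le _ _).trans ?_
  have : 4 * C * (max |A| |B|) ^ (-δ) ≤ 4 * C * |A| ^ (-δ) := by gcongr
  linarith

lemma sphere_finite (n : ℕ) (hn : 2 ≤ n) :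
    (μH[(n : ℝ) - 1] : Measure (EuclideanSpace ℝ (Fin n))) (Metric.sphere (0 : EuclideanSpace ℝ (Fin n)) 1) < ⊤ := by
  obtain ⟨k, rfl⟩ : ∃ k, n = k + 1 := ⟨n - 1, by omega⟩
  have hd : (((k + 1 : ℕ) : ℝ) - 1) = k := by push_cast; ring
  rw [hd]
  let w : Fin (k+1) × Bool → (Fin k → ℝ) → EuclideanSpace ℝ (Fin (k+1)) := fun q t =>
    WithLp.toLp 2 (q.1.insertNth (α := fun _ => ℝ) (if q.2 then 1 else -1) t)
  have hw0 : ∀ q t, w q t ≠ 0 := by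
    intro q t h
    have : (w q t) q.1 = 0 := by rw [h]; rfl
    simp only [w, Fin.insertNth_apply_same] at this
    split_ifs at this <;> norm_num at this
  have hwc : ∀ q, ContDiff ℝ 1 (w q) := by
    intro q
    rw [contDiff_euclidean]
    intro i
    simp only [w]
    rcases Fin.eq_self_or_eq_succAbove q.1 i with h | ⟨j, h⟩
    · rw [h]; simp only [Fin.insertNth_apply_same]; exact contDiff_const
    · rw [h]; simp only [Fin.insertNth_apply_succAbove]; fun_prop
  let ψ : Fin (k+1) × Bool → (Fin k → ℝ) → EuclideanSpace ℝ (Fin (k+1)) := fun q t =>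
    (‖w q t‖)⁻¹ • w q t
  have hψ : ∀ q, ContDiff ℝ 1 (ψ q) := by
    intro q
    exact (((hwc q).norm ℝ (hw0 q)).inv (fun t => norm_ne_zero_iff.2 (hw0 q t))).smul (hwc q)
  have hcov : Metric.sphere (0 : EuclideanSpace ℝ (Fin (k+1))) 1 ⊆ ⋃ q, ψ q '' (Set.Icc (-1) 1) := by
    intro x hx
    have hx1 : ‖x‖ = 1 := by simpa using hx
    obtain ⟨i, -, hi⟩ := Finset.exists_max_image Finset.univ (fun i => |x i|) Finset.univ_nonempty
    have hi0 : 0 < |x i| := by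
      by_contra hneg
      have h0 : |x i| = 0 := le_antisymm (not_lt.1 hneg) (abs_nonneg _)
      have : x = 0 := by
        ext j
        have := hi j (Finset.mem_univ _)
        rw [h0] at this
        simpa using abs_eq_zero.1 (le_antisymm this (abs_nonneg _))
      rw [this] at hx1; simp at hx1
    have hs : (if (decide (0 < x i)) then (1:ℝ) else -1) = |x i|⁻¹ * x i := by
      by_cases h : 0 < x i
      · simp only [h, decide_true, if_true]; rw [abs_of_pos h]; field_simp
      · have h' : x i < 0 := lt_of_le_of_ne (not_lt.1 h) (abs_pos.1 hi0)
        simp only [h, decide_false, Bool.false_eq_true, if_false]; rw [abs_of_neg h', inv_neg, neg_mul, inv_mul_cancel₀ h'.ne]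
    refine Set.mem_iUnion.2 ⟨(i, decide (0 < x i)), fun j => |x i|⁻¹ * x (i.succAbove j), ?_, ?_⟩
    · rw [← Set.pi_univ_Icc]
      intro j _
      have := hi (i.succAbove j) (Finset.mem_univ _)
      have h2 : |(|x i|⁻¹ * x (i.succAbove j))| ≤ 1 := by
        rw [abs_mul, abs_inv, abs_abs, inv_mul_le_iff₀ hi0, mul_one]; exact this
      exact abs_le.1 h2
    · have hwx : w (i, decide (0 < x i)) (fun j => |x i|⁻¹ * x (i.succAbove j)) = |x i|⁻¹ • x := by
        ext l
        simp only [w]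
        rcases Fin.eq_self_or_eq_succAbove i l with h | ⟨j, h⟩
        · rw [h]; simp only [Fin.insertNth_apply_same]; rw [hs]; rfl
        · rw [h]; simp only [Fin.insertNth_apply_succAbove]; rfl
      simp only [ψ]
      rw [hwx, norm_smul, hx1, norm_inv, Real.norm_eq_abs, abs_abs, mul_one, inv_inv, smul_smul,
        mul_inv_cancel₀ hi0.ne', one_smul]
  refine (measure_mono hcov).trans_lt ?_
  refine (measure_iUnion_le _).trans_lt ?_
  rw [tsum_fintype]
  refine ENNReal.sum_lt_top.2 fun q _ => ?_
  obtain ⟨K, hK⟩ := (hψ q).contDiffOn.exists_lipschitzOnWith (s := Set.Icc (-1) 1) one_ne_zero (convex_Icc _ _) isCompact_Icc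
  refine (hK.hausdorffMeasure_image_le (Nat.cast_nonneg k)).trans_lt ?_
  apply ENNReal.mul_lt_top
  · exact ENNReal.rpow_lt_top_of_nonneg (Nat.cast_nonneg k) (by simp)
  · have := hausdorffMeasure_pi_real (ι := Fin k)
    rw [Fintype.card_fin] at this
    rw [this]
    exact isCompact_Icc.measure_lt_top

noncomputable def rotF {n : ℕ} (i j : Fin n) (θ : ℝ) (x : EuclideanSpace ℝ (Fin n)) : EuclideanSpace ℝ (Fin n) :=
  WithLp.toLp 2 (fun k => if k = i then Real.cos θ * x i - Real.sin θ * x j else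
    if k = j then Real.sin θ * x i + Real.cos θ * x j else x k)

lemma rotF_i {n : ℕ} (i j : Fin n) (θ : ℝ) (x : EuclideanSpace ℝ (Fin n)) :
    rotF i j θ x i = Real.cos θ * x i - Real.sin θ * x j := by simp [rotF]
lemma rotF_j {n : ℕ} (i j : Fin n) (hij : i ≠ j) (θ : ℝ) (x : EuclideanSpace ℝ (Fin n)) :
    rotF i j θ x j = Real.sin θ * x i + Real.cos θ * x j := by simp [rotF, hij.symm]
lemma rotF_k {n : ℕ} (i j k : Fin n) (hi : k ≠ i) (hj : k ≠ j) (θ : ℝ) (x : EuclideanSpace ℝ (Fin n)) :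
    rotF i j θ x k = x k := by simp [rotF, hi, hj]

lemma rotF_sum {n : ℕ} (i j : Fin n) (hij : i ≠ j) (θ : ℝ) (x : EuclideanSpace ℝ (Fin n)) (g : Fin n → ℝ → ℝ) :
    ∑ k, g k (rotF i j θ x k) = ∑ k, g k (x k)
      + ((g i (rotF i j θ x i) + g j (rotF i j θ x j)) - (g i (x i) + g j (x j))) := by
  have : ∑ k, (g k (rotF i j θ x k) - g k (x k)) = (g i (rotF i j θ x i) - g i (x i)) + (g j (rotF i j θ x j) - g j (x j)) := by
    apply Fintype.sum_eq_add i j hij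
    rintro k ⟨h1, h2⟩
    rw [rotF_k i j k h1 h2, sub_self]
  rw [Finset.sum_sub_distrib] at this
  linarith

lemma rotF_norm {n : ℕ} (i j : Fin n) (hij : i ≠ j) (θ : ℝ) (x : EuclideanSpace ℝ (Fin n)) :
    ‖rotF i j θ x‖ = ‖x‖ := by
  rw [EuclideanSpace.norm_eq, EuclideanSpace.norm_eq]
  congr 1
  have := rotF_sum i j hij θ x (fun _ t => ‖t‖^2)
  rw [this]
  simp only [Real.norm_eq_abs, sq_abs, rotF_i, rotF_j i j hij]
  have := Real.sin_sq_add_cos_sq θ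
  linear_combination ((x i)^2 + (x j)^2) * this

noncomputable def rotE {n : ℕ} (i j : Fin n) (hij : i ≠ j) (θ : ℝ) :
    EuclideanSpace ℝ (Fin n) ≃ᵢ EuclideanSpace ℝ (Fin n) :=
  IsometryEquiv.mk' (rotF i j θ) (rotF i j (-θ)) (by
    intro x
    ext k
    have := Real.sin_sq_add_cos_sq θ
    by_cases h1 : k = i
    · subst h1
      rw [rotF_i, rotF_i, rotF_j _ _ hij, Real.cos_neg, Real.sin_neg]
      linear_combination (x k) * this
    by_cases h2 : k = j
    · subst h2
      rw [rotF_j _ _ hij, rotF_i, rotF_j _ _ hij, Real.cos_neg, Real.sin_neg]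
      linear_combination (x k) * this
    rw [rotF_k i j k h1 h2, rotF_k i j k h1 h2]) (by
    apply Isometry.of_dist_eq
    intro x y
    rw [dist_eq_norm, dist_eq_norm, ← rotF_norm i j hij θ (x - y)]
    congr 1
    ext k
    by_cases h1 : k = i
    · subst h1
      simp only [PiLp.sub_apply, rotF_i]; ring
    by_cases h2 : k = j
    · subst h2
      simp only [PiLp.sub_apply, rotF_j _ _ hij]; ring
    simp only [PiLp.sub_apply, rotF_k i j k h1 h2])

lemma rotF_cont {n : ℕ} (i j : Fin n) :
    Continuous (fun q : ℝ × EuclideanSpace ℝ (Fin n) => rotF i j q.1 q.2) := by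
  unfold rotF
  refine (PiLp.continuous_toLp 2 _).comp (continuous_pi fun k => ?_)
  split_ifs <;> fun_prop

noncomputable def sphM (n : ℕ) : Measure (EuclideanSpace ℝ (Fin n)) :=
  (μH[(n : ℝ) - 1] : Measure (EuclideanSpace ℝ (Fin n))).restrict (Metric.sphere 0 1)

lemma sphM_finite (n : ℕ) (hn : 2 ≤ n) : IsFiniteMeasure (sphM n) := by
  constructor
  rw [sphM, Measure.restrict_apply_univ]
  exact sphere_finite n hn

lemma sphM_ae (n : ℕ) : ∀ᵐ x ∂(sphM n), ‖x‖ = 1 := by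
  unfold sphM
  filter_upwards [ae_restrict_mem (Metric.isClosed_sphere.measurableSet)] with x hx
  simpa using hx

lemma rot_inv {n : ℕ} (i j : Fin n) (hij : i ≠ j) (θ : ℝ) (F : EuclideanSpace ℝ (Fin n) → ℂ) :
    ∫ x, F (rotF i j θ x) ∂(sphM n) = ∫ x, F x ∂(sphM n) := by
  have h1 : MeasurePreserving (rotE i j hij θ) (sphM n) (sphM n) := by
    have := ((rotE i j hij θ).measurePreserving_hausdorffMeasure ((n:ℝ)-1)).restrict_preimage
      (s := Metric.sphere 0 1) Metric.isClosed_sphere.measurableSet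
    have e : (rotE i j hij θ) ⁻¹' (Metric.sphere 0 1) = Metric.sphere 0 1 := by
      ext x
      have := rotF_norm i j hij θ x
      simp only [Set.mem_preimage, mem_sphere_iff_norm, sub_zero]
      rw [← this]; rfl
    rw [e] at this
    exact this
  exact h1.integral_comp (rotE i j hij θ).toHomeomorph.measurableEmbedding F

lemma rot_avg {n : ℕ} (hn : 2 ≤ n) (i j : Fin n) (hij : i ≠ j) (F : EuclideanSpace ℝ (Fin n) → ℂ)
    (hF : Continuous F) (C D : ℝ) (hC : ∀ x, ‖x‖ = 1 → ‖F x‖ ≤ C)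
    (hD : ∀ x, ‖x‖ = 1 → ‖∫ θ in (0:ℝ)..(2 * Real.pi), F (rotF i j θ x)‖ ≤ D) :
    ‖∫ x, F x ∂(sphM n)‖ ≤ D * (sphM n).real Set.univ := by
  haveI := sphM_finite n hn
  have hpi : (0:ℝ) ≤ 2 * Real.pi := by positivity
  have hint : Integrable (Function.uncurry fun θ x => F (rotF i j θ x))
      ((volume.restrict (Set.Ioc 0 (2 * Real.pi))).prod (sphM n)) := by
    have hc : Continuous (Function.uncurry fun θ x => F (rotF i j θ x)) := hF.comp (rotF_cont i j)
    refine Integrable.of_bound hc.aestronglyMeasurable C ?_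
    have hq : ∀ᵐ q ∂((volume.restrict (Set.Ioc 0 (2 * Real.pi))).prod (sphM n)), ‖q.2‖ = 1 :=
      Measure.quasiMeasurePreserving_snd.ae (sphM_ae n)
    filter_upwards [hq] with q h
    exact hC _ ((rotF_norm i j hij _ _).trans h)
  have h1 : ∫ θ in (0:ℝ)..(2 * Real.pi), (∫ x, F (rotF i j θ x) ∂(sphM n))
      = ∫ x, (∫ θ in (0:ℝ)..(2 * Real.pi), F (rotF i j θ x)) ∂(sphM n) := by
    simp only [intervalIntegral.integral_of_le hpi]
    exact integral_integral_swap hint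
  simp only [rot_inv i j hij] at h1
  rw [intervalIntegral.integral_const, sub_zero] at h1
  have h2 : ‖∫ x, (∫ θ in (0:ℝ)..(2 * Real.pi), F (rotF i j θ x)) ∂(sphM n)‖ ≤ D * (sphM n).real Set.univ := by
    apply norm_integral_le_of_norm_le_const
    filter_upwards [sphM_ae n] with x hx using hD x hx
  rw [← h1, norm_smul, Real.norm_eq_abs, abs_of_nonneg hpi] at h2
  have h3 := Real.pi_gt_three
  have h4 := norm_nonneg (∫ x, F x ∂(sphM n))
  nlinarith

lemma polar_pair (u v : ℝ) : ∃ r τ : ℝ, 0 ≤ r ∧ u = r * Real.cos τ ∧ v = r * Real.sin τ ∧ r^2 = u^2+v^2 := by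
  refine ⟨‖(⟨u,v⟩:ℂ)‖, Complex.arg ⟨u,v⟩, norm_nonneg _, ?_, ?_, ?_⟩
  · rw [Complex.norm_mul_cos_arg]
  · rw [Complex.norm_mul_sin_arg]
  · rw [Complex.sq_norm, Complex.normSq_apply]; ring

lemma oJ_periodic (a b : ℕ) (A B μ ν : ℝ) : Function.Periodic (oJ a b A B μ ν) (2 * Real.pi) := by
  intro t
  unfold oJ oamp
  rw [Real.sin_add_two_pi, Real.cos_add_two_pi]

lemma pair_sq_le {n : ℕ} (i j : Fin n) (hij : i ≠ j) (x : EuclideanSpace ℝ (Fin n)) (hx : ‖x‖ = 1) :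
    x i ^ 2 + x j ^ 2 ≤ 1 := by
  have h := EuclideanSpace.norm_sq_eq x
  rw [hx] at h
  simp only [Real.norm_eq_abs, sq_abs, one_pow] at h
  rw [h]
  have := Finset.sum_le_sum_of_subset_of_nonneg (f := fun k => x k ^ 2) (Finset.subset_univ {i, j})
    (fun _ _ _ => sq_nonneg _)
  rwa [Finset.sum_pair hij] at this

noncomputable def sphW {n : ℕ} (ν : ℝ) (i j : Fin n) (x : EuclideanSpace ℝ (Fin n)) : ℝ :=
  x j ^ 2 + ν * x i ^ 2

noncomputable def sphE {n : ℕ} (α : Fin n → ℕ) (ξ : Fin n → ℝ) (x : EuclideanSpace ℝ (Fin n)) : ℂ :=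
  Complex.exp (Complex.I * ((∑ k, ξ k * x k ^ α k : ℝ) : ℂ))

lemma sphE_norm {n : ℕ} (α : Fin n → ℕ) (ξ : Fin n → ℝ) (x : EuclideanSpace ℝ (Fin n)) : ‖sphE α ξ x‖ = 1 := by
  unfold sphE
  rw [mul_comm Complex.I, Complex.norm_exp_ofReal_mul_I]

lemma sphE_cont {n : ℕ} (α : Fin n → ℕ) (ξ : Fin n → ℝ) : Continuous (sphE α ξ) := by
  unfold sphE; fun_prop

lemma sphW_cont {n : ℕ} (ν : ℝ) (i j : Fin n) : Continuous (sphW ν i j) := by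
  unfold sphW; fun_prop

lemma sphW_abs {n : ℕ} (ν : ℝ) (hν0 : 0 ≤ ν) (hν : ν ≤ 1) (i j : Fin n) (hij : i ≠ j) (x : EuclideanSpace ℝ (Fin n)) (hx : ‖x‖ = 1) :
    |sphW ν i j x| ≤ 1 := by
  have := pair_sq_le i j hij x hx
  unfold sphW
  rw [abs_of_nonneg (by positivity)]
  nlinarith [sq_nonneg (x i)]

lemma pair_bd {n : ℕ} (hn : 2 ≤ n) (α : Fin n → ℕ) (hα : ∀ j, 3 ≤ α j) (δ : ℝ) (hδ0 : 0 ≤ δ)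
    (hδ : ∀ k, δ * α k ≤ 1) (ν : ℝ) (hν0 : 0 ≤ ν) (hν : ν ≤ 1) (i j : Fin n) (hij : i ≠ j) :
    ∃ C : ℝ, 0 ≤ C ∧ ∀ ξ : Fin n → ℝ, ξ i ≠ 0 →
      ‖∫ x, (sphW ν i j x : ℂ) * sphE α ξ x ∂(sphM n)‖ ≤ C * |ξ i| ^ (-δ) := by
  obtain ⟨C, hC, H⟩ := circle_pow (α i) (α j) (hα i) (hα j) δ hδ0 (hδ i) (hδ j)
  have := sphM_finite n hn
  refine ⟨C * (sphM n).real Set.univ, by positivity, fun ξ hξ => ?_⟩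
  have hξ' : 0 < |ξ i| := abs_pos.mpr hξ
  refine (rot_avg hn i j hij _ (by
    exact (Complex.continuous_ofReal.comp (sphW_cont ν i j)).mul (sphE_cont α ξ)) 1 (C * |ξ i| ^ (-δ)) ?_ ?_).trans
    (le_of_eq (by ring))
  · intro x hx
    rw [norm_mul, sphE_norm, mul_one, Complex.norm_real]
    exact sphW_abs ν hν0 hν i j hij x hx
  intro x hx
  obtain ⟨r, τ, hr, hu, hv, hr2⟩ := polar_pair (x i) (x j)
  have hr1 : r ≤ 1 := by
    have := pair_sq_le i j hij x hx
    nlinarith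
  have hri : ∀ θ, rotF i j θ x i = r * Real.cos (θ + τ) := by
    intro θ; rw [rotF_i, hu, hv, Real.cos_add]; ring
  have hrj : ∀ θ, rotF i j θ x j = r * Real.sin (θ + τ) := by
    intro θ; rw [rotF_j i j hij, hu, hv, Real.sin_add]; ring
  set c : ℝ := ∑ k, ξ k * x k ^ α k - (ξ i * x i ^ α i + ξ j * x j ^ α j) with hc
  have key : ∀ θ, (sphW ν i j (rotF i j θ x) : ℂ) * sphE α ξ (rotF i j θ x)
      = (((r^2 : ℝ) : ℂ) * Complex.exp (Complex.I * (c:ℂ))) *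
        oJ (α i) (α j) (ξ i * r ^ α i) (ξ j * r ^ α j) 1 ν (θ + τ) := by
    intro θ
    unfold sphW sphE oJ oamp
    have hs := rotF_sum i j hij θ x (fun k t => ξ k * t ^ α k)
    simp only at hs
    rw [hs, hri, hrj]
    have e : ∑ k, ξ k * x k ^ α k + (ξ i * (r * Real.cos (θ+τ)) ^ α i + ξ j * (r * Real.sin (θ+τ)) ^ α j
        - (ξ i * x i ^ α i + ξ j * x j ^ α j))
        = c + (ξ i * r ^ α i * Real.cos (θ+τ) ^ α i + ξ j * r ^ α j * Real.sin (θ+τ) ^ α j) := by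
      rw [hc, mul_pow, mul_pow]; ring
    rw [e, Complex.ofReal_add c, mul_add, Complex.exp_add]
    push_cast
    ring
  simp only [key]
  rw [intervalIntegral.integral_const_mul, norm_mul, norm_mul, mul_comm Complex.I,
    Complex.norm_exp_ofReal_mul_I, mul_one, Complex.norm_real, Real.norm_eq_abs,
    abs_of_nonneg (sq_nonneg r)]
  rw [intervalIntegral.integral_comp_add_right (fun t => oJ (α i) (α j) (ξ i * r ^ α i) (ξ j * r ^ α j) 1 ν t)]
  have hper := (oJ_periodic (α i) (α j) (ξ i * r ^ α i) (ξ j * r ^ α j) 1 ν).intervalIntegral_add_eq τ 0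
  rw [zero_add, add_comm (2 * Real.pi), hper, zero_add]
  rcases hr.eq_or_lt with h0 | hrp
  · rw [← h0]; simp; positivity
  have hA : ξ i * r ^ α i ≠ 0 := mul_ne_zero hξ (pow_ne_zero _ hrp.ne')
  have h1 := H (ξ i * r ^ α i) (ξ j * r ^ α j) 1 ν (by simp) (by rwa [abs_of_nonneg hν0]) hA
  refine (mul_le_mul_of_nonneg_left h1 (sq_nonneg r)).trans ?_
  rw [abs_mul, abs_of_nonneg (pow_nonneg hr _), Real.mul_rpow hξ'.le (pow_nonneg hr _), ← Real.rpow_natCast r (α i),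
    ← Real.rpow_mul hr, ← Real.rpow_natCast r 2]
  have h2 : r ^ ((2:ℕ):ℝ) * r ^ ((α i : ℝ) * -δ) ≤ 1 := by
    rw [← Real.rpow_add hrp]
    apply Real.rpow_le_one hr hr1
    have := hδ i
    push_cast
    nlinarith
  have h3 : 0 ≤ C * |ξ i| ^ (-δ) := by positivity
  nlinarith

lemma sph_decay {n : ℕ} (hn : 2 ≤ n) (α : Fin n → ℕ) (hα : ∀ j, 3 ≤ α j) (δ : ℝ) (hδ0 : 0 ≤ δ)
    (hδ : ∀ k, δ * α k ≤ 1) :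
    ∃ C : ℝ, 0 ≤ C ∧ ∀ ξ : Fin n → ℝ, ∀ i, ξ i ≠ 0 →
      ‖∫ x, sphE α ξ x ∂(sphM n)‖ ≤ C * |ξ i| ^ (-δ) := by
  have hn1 : (1:ℝ) ≤ (n:ℝ) - 1 := by
    have : (2:ℝ) ≤ n := by exact_mod_cast hn
    linarith
  set ν : ℝ := 1 / ((n:ℝ) - 1) with hν
  have hν0 : 0 ≤ ν := by positivity
  have hν1 : ν ≤ 1 := by rw [hν, div_le_one (by linarith)]; exact hn1
  have := fun i j (hij : i ≠ j) => pair_bd hn α hα δ hδ0 hδ ν hν0 hν1 i j hij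
  choose C hC H using this
  let D : Fin n → Fin n → ℝ := fun i j => if hij : i ≠ j then C i j hij else 0
  have hD : ∀ i j, 0 ≤ D i j := by
    intro i j; simp only [D]
    by_cases h : i ≠ j
    · rw [dif_pos h]; exact hC _ _ _
    · rw [dif_neg h]
  refine ⟨∑ i, ∑ j, D i j, Finset.sum_nonneg fun i _ => Finset.sum_nonneg fun j _ => hD i j, ?_⟩
  intro ξ i hξ
  have := sphM_finite n hn
  have hsum : ∫ x, sphE α ξ x ∂(sphM n) = ∑ j ∈ Finset.univ.erase i, ∫ x, (sphW ν i j x : ℂ) * sphE α ξ x ∂(sphM n) := by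
    rw [← integral_finsetSum]
    · apply integral_congr_ae
      filter_upwards [sphM_ae n] with x hx
      rw [← Finset.sum_mul]
      have h := EuclideanSpace.norm_sq_eq x
      rw [hx] at h
      simp only [Real.norm_eq_abs, sq_abs, one_pow] at h
      have : ∑ j ∈ Finset.univ.erase i, sphW ν i j x = 1 := by
        unfold sphW
        rw [Finset.sum_add_distrib, Finset.sum_const, Finset.card_erase_of_mem (Finset.mem_univ i), Finset.card_univ, Fintype.card_fin,
          nsmul_eq_mul, Nat.cast_sub (by omega), h, ← Finset.add_sum_erase _ _ (Finset.mem_univ i), Nat.cast_one, hν]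
        field_simp
        ring
      have h2 : ∑ j ∈ Finset.univ.erase i, (sphW ν i j x : ℂ) = 1 := by exact_mod_cast this
      rw [h2, one_mul]
    · intro j hj
      refine Integrable.of_bound ((Complex.continuous_ofReal.comp (sphW_cont ν i j)).mul (sphE_cont α ξ)).aestronglyMeasurable 1 ?_
      filter_upwards [sphM_ae n] with x hx
      rw [norm_mul, sphE_norm, mul_one, Complex.norm_real]
      exact sphW_abs ν hν0 hν1 i j (Finset.ne_of_mem_erase hj).symm x hx
  rw [hsum]
  refine (norm_sum_le _ _).trans ?_
  calc _ ≤ ∑ j ∈ Finset.univ.erase i, D i j * |ξ i| ^ (-δ) := by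
        apply Finset.sum_le_sum
        intro j hj
        have hij := (Finset.ne_of_mem_erase hj).symm
        have := H i j hij ξ hξ
        simpa only [D, dif_pos hij] using this
    _ = (∑ j ∈ Finset.univ.erase i, D i j) * |ξ i| ^ (-δ) := by rw [Finset.sum_mul]
    _ ≤ _ := by
        gcongr
        refine (Finset.sum_le_sum_of_subset_of_nonneg (Finset.erase_subset _ _) (fun j _ _ => hD i j)).trans ?_
        exact Finset.single_le_sum (f := fun i => ∑ j, D i j) (fun i _ => Finset.sum_nonneg fun j _ => hD i j) (Finset.mem_univ i)

noncomputable def kE (m : ℕ) (u v : ℝ) : ℝ≥0∞ := ENNReal.ofReal |u ^ m - v ^ m| ^ (-(1 / (m:ℝ)))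

lemma kE_ne_zero (m : ℕ) (u v : ℝ) : kE m u v ≠ 0 := by
  unfold kE
  rw [Ne, ENNReal.rpow_eq_zero_iff]
  rintro (⟨_, h⟩ | ⟨h, _⟩)
  · have : (0:ℝ) ≤ 1 / (m:ℝ) := by positivity
    linarith
  · exact ENNReal.ofReal_ne_top h

lemma kernel_bd {n : ℕ} (hn : 2 ≤ n) (α : Fin n → ℕ) (hα : ∀ j, 3 ≤ α j) (m : ℕ) (hm : 0 < m) (l : ℝ) (hl : 0 ≤ l)
    (hδ : ∀ k, (n * l / m) * α k ≤ 1) :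
    ∃ C : ℝ, 0 ≤ C ∧ ∀ y z : Fin n → ℝ,
      ‖∫ x, sphE α (fun k => y k ^ m - z k ^ m) x ∂(sphM n)‖ₑ ≤ ENNReal.ofReal C * (∏ j, kE m (y j) (z j)) ^ l := by
  have hn0 : (0:ℝ) < n := by exact_mod_cast (by omega : 0 < n)
  have hm0 : (0:ℝ) < m := by exact_mod_cast hm
  obtain ⟨C, hC, H⟩ := sph_decay hn α hα (n * l / m) (by positivity) hδ
  have := sphM_finite n hn
  set V := (sphM n).real Set.univ
  have hV : 0 ≤ V := by positivity
  refine ⟨C + V + 1, by positivity, fun y z => ?_⟩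
  rw [← ofReal_norm_eq_enorm]
  rcases hl.eq_or_lt with h0 | hl0
  · rw [← h0, ENNReal.rpow_zero, mul_one]
    apply ENNReal.ofReal_le_ofReal
    have : ‖∫ x, sphE α (fun k => y k ^ m - z k ^ m) x ∂(sphM n)‖ ≤ 1 * V := by
      apply norm_integral_le_of_norm_le_const
      exact Filter.Eventually.of_forall fun x => (sphE_norm _ _ _).le
    linarith
  by_cases hz : ∃ i, y i ^ m - z i ^ m = 0
  · obtain ⟨i, hi⟩ := hz
    have h1 : (∏ j, kE m (y j) (z j)) = ⊤ := by
      rw [← Finset.mul_prod_erase _ _ (Finset.mem_univ i)]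
      have : kE m (y i) (z i) = ⊤ := by
        unfold kE
        rw [hi, abs_zero, ENNReal.ofReal_zero, ENNReal.zero_rpow_of_neg]
        have : 0 < 1 / (m:ℝ) := by positivity
        linarith
      rw [this, ENNReal.top_mul]
      exact Finset.prod_ne_zero_iff.mpr fun j _ => kE_ne_zero _ _ _
    rw [h1, ENNReal.top_rpow_of_pos hl0, ENNReal.mul_top]
    · exact le_top
    · have : 0 < C + V + 1 := by positivity
      simpa using this
  push Not at hz
  set ξ : Fin n → ℝ := fun k => y k ^ m - z k ^ m with hξ
  have hp : ∀ j, 0 < |ξ j| := fun j => abs_pos.mpr (hz j)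
  set K := ‖∫ x, sphE α ξ x ∂(sphM n)‖ with hK
  have hK0 : 0 ≤ K := norm_nonneg _
  have h1 : ∀ j, kE m (y j) (z j) = ENNReal.ofReal (|ξ j| ^ (-(1/(m:ℝ)))) := by
    intro j
    rw [kE, ENNReal.ofReal_rpow_of_pos (hp j)]
  simp only [h1]
  rw [← ENNReal.ofReal_prod_of_nonneg (fun j _ => by positivity), ENNReal.ofReal_rpow_of_nonneg (Finset.prod_nonneg fun j _ => by positivity) hl,
    ← ENNReal.ofReal_mul (by positivity)]
  apply ENNReal.ofReal_le_ofReal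
  have h2 : K = ∏ _j : Fin n, K ^ (1/(n:ℝ)) := by
    rw [Finset.prod_const, Finset.card_univ, Fintype.card_fin, ← Real.rpow_natCast, ← Real.rpow_mul hK0]
    rw [one_div_mul_cancel hn0.ne', Real.rpow_one]
  have h3 : C = ∏ _j : Fin n, C ^ (1/(n:ℝ)) := by
    rw [Finset.prod_const, Finset.card_univ, Fintype.card_fin, ← Real.rpow_natCast, ← Real.rpow_mul hC]
    rw [one_div_mul_cancel hn0.ne', Real.rpow_one]
  have h4 : K ≤ C * (∏ j, |ξ j| ^ (-(1/(m:ℝ)))) ^ l := by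
    rw [h2]
    rw [← Real.finsetProd_rpow _ _ (fun j _ => by positivity)]
    conv_rhs => rw [h3]
    rw [← Finset.prod_mul_distrib]
    apply Finset.prod_le_prod
    · intro j _; positivity
    intro j _
    refine (Real.rpow_le_rpow hK0 (H ξ j (hz j)) (by positivity)).trans (le_of_eq ?_)
    rw [Real.mul_rpow hC (by positivity), ← Real.rpow_mul (hp j).le, ← Real.rpow_mul (hp j).le]
    congr 2
    field_simp
  have h5 : 0 ≤ (∏ j, |ξ j| ^ (-(1/(m:ℝ)))) ^ l := Real.rpow_nonneg (Finset.prod_nonneg fun j _ => by positivity) _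
  nlinarith

noncomputable def hE (v : ℝ) : ℝ≥0∞ := ENNReal.ofReal |v| ^ (-(1/2:ℝ))

lemma hE_meas : Measurable hE := by unfold hE; fun_prop

lemma kE_meas (m : ℕ) : Measurable (fun q : ℝ × ℝ => kE m q.1 q.2) := by unfold kE; fun_prop

lemma kE_symm (m : ℕ) (u v : ℝ) : kE m u v = kE m v u := by unfold kE; rw [abs_sub_comm]

lemma fin_of (s : Set ℝ) (hs : MeasurableSet s) (g : ℝ → ℝ≥0∞) (G : ℝ → ℝ) (hG : IntegrableOn G s)
    (h : ∀ t ∈ s, g t ≤ ENNReal.ofReal (G t)) : ∫⁻ t in s, g t < ⊤ :=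
  (setLIntegral_mono' hs h).trans_lt hG.lintegral_lt_top

lemma g_bd (m : ℕ) (t d : ℝ) (hd : 0 < d) (ht : 0 < t) (h : d ≤ |1 - t ^ m|) :
    kE m 1 t * hE t ≤ ENNReal.ofReal (d ^ (-(1/(m:ℝ))) * t ^ (-(1/2:ℝ))) := by
  have hd2 : 0 < |1 - t^m| := hd.trans_le h
  unfold kE hE
  rw [one_pow, abs_of_pos ht, ENNReal.ofReal_rpow_of_pos hd2, ENNReal.ofReal_rpow_of_pos ht, ← ENNReal.ofReal_mul (by positivity)]
  apply ENNReal.ofReal_le_ofReal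
  gcongr ?_ * _
  apply Real.rpow_le_rpow_of_nonpos hd h
  have : 0 ≤ 1/(m:ℝ) := by positivity
  linarith

lemma half_fin (m : ℕ) (hm : 3 ≤ m) : ∫⁻ t in Set.Ioi (0:ℝ), kE m 1 t * hE t < ⊤ := by
  have hm0 : (0:ℝ) < m := by exact_mod_cast (by omega : 0 < m)
  have hm1 : 1 / (m:ℝ) < 1 := by
    rw [div_lt_one hm0]; exact_mod_cast (by omega : 1 < m)
  have hmm : (1 / (m:ℝ)) * m = 1 := by field_simp
  set e := 1/(m:ℝ) with he
  have he0 : 0 < e := by positivity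
  have A1 : ∫⁻ t in Set.Ioc (0:ℝ) (1/2), kE m 1 t * hE t < ⊤ := by
    refine fin_of _ measurableSet_Ioc _ (fun t => (1/2:ℝ)^(-e) * t ^ (-(1/2:ℝ))) ?_ ?_
    · have := (intervalIntegral.intervalIntegrable_rpow' (a := 0) (b := 1/2) (r := -(1/2:ℝ)) (by norm_num)).const_mul ((1/2:ℝ)^(-e))
      rwa [intervalIntegrable_iff_integrableOn_Ioc_of_le (by norm_num)] at this
    · intro t ht
      refine g_bd m t (1/2) (by norm_num) ht.1 ?_
      have : t ^ m ≤ t ^ 1 := pow_le_pow_of_le_one ht.1.le (by linarith [ht.2]) (by omega)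
      rw [pow_one] at this
      refine le_trans ?_ (le_abs_self _)
      linarith [ht.2]
  have A2 : ∫⁻ t in Set.Ioc (1/2:ℝ) 1, kE m 1 t * hE t < ⊤ := by
    rw [← setLIntegral_congr Ioo_ae_eq_Ioc]
    refine fin_of _ measurableSet_Ioo _ (fun t => (1 - t)^(-e) * (1/2) ^ (-(1/2:ℝ))) ?_ ?_
    · have := ((intervalIntegral.intervalIntegrable_rpow' (a := 1/2) (b := 0) (r := -e) (by linarith)).comp_sub_left 1).mul_const ((1/2:ℝ)^(-(1/2:ℝ)))
      norm_num at this
      rw [intervalIntegrable_iff_integrableOn_Ioo_of_le (by norm_num)] at this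
      convert this using 3
    · intro t ht
      have h1 : t ^ m ≤ t ^ 1 := pow_le_pow_of_le_one (by linarith [ht.1]) (by linarith [ht.2]) (by omega)
      rw [pow_one] at h1
      refine (g_bd m t (1 - t) (by linarith [ht.2]) (by linarith [ht.1]) ?_).trans ?_
      · refine le_trans ?_ (le_abs_self _)
        linarith
      · apply ENNReal.ofReal_le_ofReal
        apply mul_le_mul_of_nonneg_left
        · exact Real.rpow_le_rpow_of_nonpos (by norm_num) ht.1.le (by norm_num)
        · exact Real.rpow_nonneg (by linarith [ht.2]) _
  have A3 : ∫⁻ t in Set.Ioc (1:ℝ) 2, kE m 1 t * hE t < ⊤ := by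
    refine fin_of _ measurableSet_Ioc _ (fun t => (t - 1)^(-e) * (1/2) ^ (-(1/2:ℝ))) ?_ ?_
    · have := ((intervalIntegral.intervalIntegrable_rpow' (a := 0) (b := 1) (r := -e) (by linarith)).comp_sub_right 1).mul_const ((1/2:ℝ)^(-(1/2:ℝ)))
      norm_num at this
      rw [intervalIntegrable_iff_integrableOn_Ioc_of_le (by norm_num)] at this
      convert this using 3
    · intro t ht
      have h1 : t ^ 1 ≤ t ^ m := pow_le_pow_right₀ (by linarith [ht.1]) (by omega)
      rw [pow_one] at h1
      refine (g_bd m t (t - 1) (by linarith [ht.1]) (by linarith [ht.1]) ?_).trans ?_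
      · rw [abs_sub_comm]
        refine le_trans ?_ (le_abs_self _)
        linarith
      · apply ENNReal.ofReal_le_ofReal
        apply mul_le_mul_of_nonneg_left
        · exact Real.rpow_le_rpow_of_nonpos (by norm_num) (by linarith [ht.1]) (by norm_num)
        · exact Real.rpow_nonneg (by linarith [ht.1]) _
  have A4 : ∫⁻ t in Set.Ioi (2:ℝ), kE m 1 t * hE t < ⊤ := by
    refine fin_of _ measurableSet_Ioi _ (fun t => (1/2:ℝ)^(-e) * t ^ (-(3/2:ℝ))) ?_ ?_
    · exact (integrableOn_Ioi_rpow_of_lt (by norm_num) (by norm_num)).const_mul _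
    · intro t ht
      have ht2 : 2 < t := ht
      have ht0 : 0 < t := by linarith
      have h1 : t ^ 1 ≤ t ^ m := pow_le_pow_right₀ (by linarith) (by omega)
      rw [pow_one] at h1
      refine (g_bd m t (1/2 * t^m) (by positivity) ht0 ?_).trans ?_
      · rw [abs_sub_comm]
        refine le_trans ?_ (le_abs_self _)
        linarith
      · apply ENNReal.ofReal_le_ofReal
        rw [Real.mul_rpow (by norm_num) (by positivity), ← Real.rpow_natCast t m, ← Real.rpow_mul ht0.le, mul_assoc, ← Real.rpow_add ht0]
        apply le_of_eq
        congr 2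
        rw [← he]
        linarith
  have hc : Set.Ioi (0:ℝ) = (Set.Ioc 0 (1/2) ∪ Set.Ioc (1/2) 1) ∪ (Set.Ioc 1 2 ∪ Set.Ioi 2) := by
    rw [Set.Ioc_union_Ioc_eq_Ioc (by norm_num) (by norm_num), Set.Ioc_union_Ioi_eq_Ioi (by norm_num), Set.Ioc_union_Ioi_eq_Ioi (by norm_num)]
  rw [hc]
  refine (lintegral_union_le _ _ _).trans_lt (ENNReal.add_lt_top.mpr ⟨?_, ?_⟩)
  · exact (lintegral_union_le _ _ _).trans_lt (ENNReal.add_lt_top.mpr ⟨A1, A2⟩)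
  · exact (lintegral_union_le _ _ _).trans_lt (ENNReal.add_lt_top.mpr ⟨A3, A4⟩)

noncomputable def cE (m : ℕ) : ℝ≥0∞ := ∫⁻ t, kE m 1 t * hE t

lemma cE_fin (m : ℕ) (hm : 3 ≤ m) : cE m < ⊤ := by
  have hmm : Measurable (fun t => kE m 1 t * hE t) := by unfold kE hE; fun_prop
  have h2 : ∫⁻ t in Set.Iio (0:ℝ), kE m 1 t * hE t < ⊤ := by
    have e := (Measure.measurePreserving_neg (volume : Measure ℝ)).setLIntegral_comp_preimage (s := Set.Ioi 0) measurableSet_Ioi hmm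
    have e2 : (Neg.neg ⁻¹' (Set.Ioi (0:ℝ))) = Set.Iio 0 := by ext; simp
    rw [e2] at e
    refine lt_of_le_of_lt ?_ (half_fin m hm)
    rw [← e]
    apply setLIntegral_mono' measurableSet_Iio
    intro t ht
    have ht0 : t < 0 := ht
    gcongr
    · unfold kE
      rw [ENNReal.rpow_neg, ENNReal.rpow_neg, ENNReal.inv_le_inv]
      apply ENNReal.rpow_le_rpow _ (by positivity)
      apply ENNReal.ofReal_le_ofReal
      have := abs_abs_sub_abs_le ((1:ℝ)^m) (t^m)
      rw [abs_pow, abs_pow, abs_one, abs_of_neg ht0] at this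
      exact this
    · unfold hE; rw [abs_neg]
  unfold cE
  rw [← setLIntegral_univ, ← Set.Iio_union_Ici (a := (0:ℝ))]
  refine (lintegral_union_le _ _ _).trans_lt (ENNReal.add_lt_top.mpr ⟨h2, ?_⟩)
  rw [← setLIntegral_congr Ioi_ae_eq_Ici]
  exact half_fin m hm

lemma schur1 (m : ℕ) (hm : 3 ≤ m) (u : ℝ) (hu : u ≠ 0) : ∫⁻ v, kE m u v * hE v = cE m * hE u := by
  have hu' : 0 < |u| := abs_pos.mpr hu
  have hm0 : (m:ℝ) ≠ 0 := by exact_mod_cast (by omega : m ≠ 0)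
  have hmm : Measurable (fun t => kE m u t * hE t) := by unfold kE hE; fun_prop
  have hmm1 : Measurable (fun t => kE m 1 t * hE t) := by unfold kE hE; fun_prop
  conv_lhs => rw [← Real.smul_map_volume_mul_left hu]
  rw [lintegral_smul_measure, lintegral_map hmm (by fun_prop), smul_eq_mul]
  have : ∀ t, kE m u (u * t) * hE (u * t) = (ENNReal.ofReal |u|)⁻¹ * hE u * (kE m 1 t * hE t) := by
    intro t
    have e1 : kE m u (u * t) = (ENNReal.ofReal |u|)⁻¹ * kE m 1 t := by
      unfold kE
      rw [mul_pow, one_pow, ← mul_one_sub, abs_mul, ENNReal.ofReal_mul (abs_nonneg _), ENNReal.mul_rpow_of_ne_top ENNReal.ofReal_ne_top ENNReal.ofReal_ne_top]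
      congr 1
      rw [abs_pow, ENNReal.ofReal_pow (abs_nonneg _), ← ENNReal.rpow_natCast, ← ENNReal.rpow_mul, ← ENNReal.rpow_neg_one]
      congr 1
      field_simp
    have e2 : hE (u * t) = hE u * hE t := by
      unfold hE
      rw [abs_mul, ENNReal.ofReal_mul (abs_nonneg _), ENNReal.mul_rpow_of_ne_top ENNReal.ofReal_ne_top ENNReal.ofReal_ne_top]
    rw [e1, e2]; ring
  simp only [this]
  rw [lintegral_const_mul _ hmm1, ← cE, ← mul_assoc, ← mul_assoc, ENNReal.mul_inv_cancel (by simpa using hu) ENNReal.ofReal_ne_top, one_mul, mul_comm]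

lemma lint_prod (n : ℕ) (f : Fin n → ℝ → ℝ≥0∞) (hf : ∀ i, Measurable (f i)) :
    ∫⁻ x : Fin n → ℝ, ∏ i, f i (x i) = ∏ i, ∫⁻ x, f i x := by
  induction n with
  | zero => simp [volume_pi]
  | succ n ih =>
    have m1 : Measurable (fun x : Fin n → ℝ => ∏ i, f i.succ (x i)) :=
      Finset.measurable_fun_prod _ (fun i _ => (hf i.succ).comp (measurable_pi_apply i))
    have m2 : Measurable (fun x : Fin (n+1) → ℝ => ∏ i, f i (x i)) :=
      Finset.measurable_fun_prod _ (fun i _ => (hf i).comp (measurable_pi_apply i))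
    rw [Fin.prod_univ_succ, ← ih (fun i => f i.succ) (fun i => hf _), ← lintegral_prod_mul (hf 0).aemeasurable m1.aemeasurable]
    rw [← Measure.volume_eq_prod, ← ((volume_preserving_piFinSuccAbove (fun _ : Fin (n+1) => ℝ) 0).symm).lintegral_comp m2]
    apply lintegral_congr
    intro q
    rw [Fin.prod_univ_succ]
    rfl

lemma schurN (n m : ℕ) (hm : 3 ≤ m) (y : Fin n → ℝ) (hy : ∀ i, y i ≠ 0) :
    ∫⁻ z : Fin n → ℝ, (∏ j, kE m (y j) (z j)) * ∏ j, hE (z j) = cE m ^ n * ∏ j, hE (y j) := by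
  simp only [← Finset.prod_mul_distrib]
  rw [lint_prod n (fun j t => kE m (y j) t * hE t) (fun j => by unfold kE hE; fun_prop)]
  simp only [schur1 m hm _ (hy _), Finset.prod_mul_distrib]
  simp

lemma amgm (a b t s : ℝ≥0∞) (ht0 : t ≠ 0) (ht : t ≠ ⊤) (hs0 : s ≠ 0) (hs : s ≠ ⊤) :
    a * b ≤ a * a * t⁻¹ * s + b * b * s⁻¹ * t := by
  have e1 : t⁻¹ * t = 1 := ENNReal.inv_mul_cancel ht0 ht
  have e2 : s⁻¹ * s = 1 := ENNReal.inv_mul_cancel hs0 hs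
  rcases le_total (a * s) (b * t) with h | h
  · refine le_trans ?_ le_add_self
    calc a * b = (a * s) * (s⁻¹ * b) := by
          rw [show (a * s) * (s⁻¹ * b) = (s⁻¹ * s) * (a * b) by ring, e2, one_mul]
      _ ≤ (b * t) * (s⁻¹ * b) := by gcongr
      _ = _ := by ring
  · refine le_trans ?_ le_self_add
    calc a * b = (b * t) * (t⁻¹ * a) := by
          rw [show (b * t) * (t⁻¹ * a) = (t⁻¹ * t) * (a * b) by ring, e1, one_mul]
      _ ≤ (a * s) * (t⁻¹ * a) := by gcongr
      _ = _ := by ring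

lemma hE_ne (v : ℝ) (hv : v ≠ 0) : hE v ≠ 0 ∧ hE v ≠ ⊤ := by
  have : 0 < |v| := abs_pos.mpr hv
  unfold hE
  rw [ENNReal.ofReal_rpow_of_pos this]
  refine ⟨?_, ENNReal.ofReal_ne_top⟩
  have : 0 < |v| ^ (-(1/2:ℝ)) := by positivity
  simpa using this

lemma ae_nz (n : ℕ) : ∀ᵐ y : Fin n → ℝ, ∀ i, y i ≠ 0 := by
  rw [ae_all_iff]
  intro i
  exact Measure.ae_eval_ne (fun _ : Fin n => (volume : Measure ℝ)) i 0

noncomputable def kN (n m : ℕ) (y z : Fin n → ℝ) : ℝ≥0∞ := ∏ j, kE m (y j) (z j)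

lemma kN_meas (n m : ℕ) : Measurable (fun q : (Fin n → ℝ) × (Fin n → ℝ) => kN n m q.1 q.2) := by
  unfold kN kE
  fun_prop

lemma schur_gen {X : Type*} [MeasurableSpace X] (μ : Measure X) [SFinite μ] (K : X → X → ℝ≥0∞)
    (hK : Measurable (fun q : X × X => K q.1 q.2)) (hsym : ∀ y z, K y z = K z y)
    (H : X → ℝ≥0∞) (hHm : Measurable H) (hHne : ∀ᵐ y ∂μ, H y ≠ 0 ∧ H y ≠ ⊤) (c : ℝ≥0∞)
    (hS : ∀ᵐ y ∂μ, ∫⁻ z, K y z * H z ∂μ = c * H y)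
    (F : X → ℝ≥0∞) (hF : Measurable F) :
    ∫⁻ y, ∫⁻ z, F y * F z * K y z ∂μ ∂μ ≤ 2 * c * ∫⁻ y, F y * F y ∂μ := by
  have hk : ∀ y, Measurable (K y) := fun y => hK.comp measurable_prodMk_left
  have B : ∫⁻ y, ∫⁻ z, F y * F y * (H y)⁻¹ * H z * K y z ∂μ ∂μ ≤ c * ∫⁻ y, F y * F y ∂μ := by
    rw [← lintegral_const_mul _ (by fun_prop : Measurable fun y => F y * F y)]
    apply lintegral_mono_ae
    filter_upwards [hHne, hS] with y hy e
    have : ∀ z, F y * F y * (H y)⁻¹ * H z * K y z = F y * F y * (H y)⁻¹ * (K y z * H z) := fun z => by ring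
    simp only [this]
    rw [lintegral_const_mul _ (by have := hk y; fun_prop : Measurable fun z => K y z * H z), e]
    apply le_of_eq
    rw [show F y * F y * (H y)⁻¹ * (c * H y) = (H y)⁻¹ * H y * (c * (F y * F y)) by ring,
      ENNReal.inv_mul_cancel hy.1 hy.2, one_mul]
  have B' : ∫⁻ y, ∫⁻ z, F z * F z * (H z)⁻¹ * H y * K y z ∂μ ∂μ ≤ c * ∫⁻ y, F y * F y ∂μ := by
    rw [lintegral_lintegral_swap]
    · refine le_trans (le_of_eq ?_) B
      congr 1; ext y; congr 1; ext z
      rw [hsym]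
    · apply Measurable.aemeasurable
      simp only [Function.uncurry_def]
      fun_prop
  calc _ ≤ ∫⁻ y, ∫⁻ z, (F y * F y * (H y)⁻¹ * H z * K y z + F z * F z * (H z)⁻¹ * H y * K y z) ∂μ ∂μ := by
        apply lintegral_mono_ae
        filter_upwards [hHne] with y hy
        apply lintegral_mono_ae
        filter_upwards [hHne] with z hz
        rw [← add_mul]
        exact mul_le_mul_left (amgm _ _ _ _ hy.1 hy.2 hz.1 hz.2) _
    _ = (∫⁻ y, ∫⁻ z, F y * F y * (H y)⁻¹ * H z * K y z ∂μ ∂μ) + ∫⁻ y, ∫⁻ z, F z * F z * (H z)⁻¹ * H y * K y z ∂μ ∂μ := by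
        rw [← lintegral_add_left]
        · congr 1; ext y
          rw [lintegral_add_left]
          exact (hHm.const_mul _).mul (hk y)
        · apply Measurable.lintegral_prod_right'  (f := fun q : X × X => F q.1 * F q.1 * (H q.1)⁻¹ * H q.2 * K q.1 q.2)
          fun_prop
    _ ≤ _ := by
        rw [mul_assoc, two_mul]
        exact add_le_add B B'

lemma schur (n m : ℕ) (hm : 3 ≤ m) (F : (Fin n → ℝ) → ℝ≥0∞) (hF : Measurable F) :
    ∫⁻ y, ∫⁻ z, F y * F z * kN n m y z ≤ 2 * cE m ^ n * ∫⁻ y, F y * F y := by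
  refine schur_gen volume (kN n m) (kN_meas n m) ?_ (fun y => ∏ j, hE (y j)) ?_ ?_ _ ?_ F hF
  · intro y z
    unfold kN
    exact Finset.prod_congr rfl fun j _ => kE_symm _ _ _
  · exact Finset.measurable_fun_prod _ (fun i _ => hE_meas.comp (measurable_pi_apply i))
  · filter_upwards [ae_nz n] with y hy
    exact ⟨Finset.prod_ne_zero_iff.mpr fun j _ => (hE_ne _ (hy j)).1, ENNReal.prod_ne_top fun j _ => (hE_ne _ (hy j)).2⟩
  · filter_upwards [ae_nz n] with y hy
    exact schurN n m hm y hy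

noncomputable def kEu (n m : ℕ) (y z : EuclideanSpace ℝ (Fin n)) : ℝ≥0∞ := kN n m (WithLp.ofLp y) (WithLp.ofLp z)

lemma kEu_meas (n m : ℕ) : Measurable (fun q : EuclideanSpace ℝ (Fin n) × EuclideanSpace ℝ (Fin n) => kEu n m q.1 q.2) := by
  unfold kEu kN kE
  fun_prop

lemma schurEu (n m : ℕ) (hm : 3 ≤ m) (F : EuclideanSpace ℝ (Fin n) → ℝ≥0∞) (hF : Measurable F) :
    ∫⁻ y, ∫⁻ z, F y * F z * kEu n m y z ≤ 2 * cE m ^ n * ∫⁻ y, F y * F y := by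
  have hp := PiLp.volume_preserving_ofLp (Fin n)
  have hH : Measurable (fun y : Fin n → ℝ => ∏ j, hE (y j)) :=
    Finset.measurable_fun_prod _ (fun i _ => hE_meas.comp (measurable_pi_apply i))
  have hae : ∀ᵐ y : EuclideanSpace ℝ (Fin n), ∀ i, y i ≠ 0 := hp.quasiMeasurePreserving.ae (ae_nz n)
  refine schur_gen volume (kEu n m) (kEu_meas n m) ?_ (fun y => ∏ j, hE (y j)) (hH.comp hp.measurable) ?_ _ ?_ F hF
  · intro y z
    unfold kEu kN
    exact Finset.prod_congr rfl fun j _ => kE_symm _ _ _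
  · filter_upwards [hae] with y hy
    exact ⟨Finset.prod_ne_zero_iff.mpr fun j _ => (hE_ne _ (hy j)).1, ENNReal.prod_ne_top fun j _ => (hE_ne _ (hy j)).2⟩
  · filter_upwards [hae] with y hy
    have h1 := schurN n m hm (WithLp.ofLp y) hy
    have hk : Measurable (kN n m (WithLp.ofLp y)) := by
      unfold kN kE
      fun_prop
    rw [← hp.lintegral_comp (f := fun z => (∏ j, kE m (y j) (z j)) * ∏ j, hE (z j)) (hk.mul hH)] at h1
    exact h1

lemma holder_bd (n m : ℕ) (hm : 3 ≤ m) (p l : ℝ) (hp : 1 ≤ p) (hl0 : 0 ≤ l) (hl1 : l ≤ 1) (hpl : p * (1 - l / 2) = 1)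
    (g : EuclideanSpace ℝ (Fin n) → ℝ≥0∞) (hg : Measurable g) :
    ∫⁻ y, ∫⁻ z, g y * g z * kEu n m y z ^ l ≤ (2 * cE m ^ n) ^ l * (∫⁻ y, g y ^ p) ^ (2 - l) := by
  have hk := kEu_meas n m
  have hp0 : 0 < p := by linarith
  have e1 : ∀ y z, g y * g z * kEu n m y z ^ l = (g y ^ (p/2) * g z ^ (p/2) * kEu n m y z) ^ l * (g y ^ p * g z ^ p) ^ (1 - l) := by
    intro y z
    have key : ∀ a : ℝ≥0∞, a = (a ^ (p/2)) ^ l * (a ^ p) ^ (1 - l) := by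
      intro a
      rw [← ENNReal.rpow_mul, ← ENNReal.rpow_mul, ← ENNReal.rpow_add_of_nonneg _ _ (by positivity) (mul_nonneg hp0.le (by linarith))]
      rw [show p/2 * l + p * (1 - l) = 1 by linarith, ENNReal.rpow_one]
    rw [ENNReal.mul_rpow_of_nonneg _ _ hl0, ENNReal.mul_rpow_of_nonneg _ _ hl0, ENNReal.mul_rpow_of_nonneg _ _ (by linarith : 0 ≤ 1 - l)]
    conv_lhs => rw [key (g y), key (g z)]
    ring
  simp only [e1]
  have m1 : Measurable (fun q : EuclideanSpace ℝ (Fin n) × EuclideanSpace ℝ (Fin n) => g q.1 ^ (p/2) * g q.2 ^ (p/2) * kEu n m q.1 q.2) := by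
    fun_prop
  have m2 : Measurable (fun q : EuclideanSpace ℝ (Fin n) × EuclideanSpace ℝ (Fin n) => g q.1 ^ p * g q.2 ^ p) := by
    fun_prop
  have h := ENNReal.lintegral_mul_norm_pow_le (μ := (volume : Measure (EuclideanSpace ℝ (Fin n))).prod volume)
    m1.aemeasurable m2.aemeasurable hl0 (by linarith : 0 ≤ 1 - l) (by ring)
  have m3 : Measurable (fun q : EuclideanSpace ℝ (Fin n) × EuclideanSpace ℝ (Fin n) =>
    (g q.1 ^ (p/2) * g q.2 ^ (p/2) * kEu n m q.1 q.2) ^ l * (g q.1 ^ p * g q.2 ^ p) ^ (1 - l)) := by fun_prop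
  rw [lintegral_prod _ m3.aemeasurable, lintegral_prod _ m1.aemeasurable] at h
  refine h.trans ?_
  rw [lintegral_prod_mul (hg.pow_const p).aemeasurable (hg.pow_const p).aemeasurable]
  have hs := schurEu n m hm (fun y => g y ^ (p/2)) (hg.pow_const _)
  have e2 : ∀ y, g y ^ (p/2) * g y ^ (p/2) = g y ^ p := by
    intro y
    rw [← ENNReal.rpow_add_of_nonneg _ _ (by positivity) (by positivity), add_halves]
  simp only [e2] at hs
  set I := ∫⁻ y, g y ^ p
  calc _ ≤ (2 * cE m ^ n * I) ^ l * (I * I) ^ (1 - l) := by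
        gcongr
    _ = _ := by
        rw [ENNReal.mul_rpow_of_nonneg _ _ hl0, ENNReal.mul_rpow_of_nonneg _ _ (by linarith : 0 ≤ 1 - l), mul_assoc,
          ← ENNReal.rpow_add_of_nonneg _ _ (by linarith) (by linarith), ← ENNReal.rpow_add_of_nonneg _ _ (by linarith) (by linarith)]
        congr 2
        ring

lemma osc_tt {n : ℕ} (hn : 2 ≤ n) (α : Fin n → ℕ) (m : ℕ) (f : EuclideanSpace ℝ (Fin n) → ℂ)
    (hf : Integrable f) (hfc : Continuous f) :
    ∫ x, ((‖oscOp α m f x‖ ^ 2 : ℝ) : ℂ) ∂(sphM n) =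
      ∫ q : EuclideanSpace ℝ (Fin n) × EuclideanSpace ℝ (Fin n),
        (f q.1 * (starRingEnd ℂ) (f q.2)) * ∫ x, sphE α (fun k => q.1 k ^ m - q.2 k ^ m) x ∂(sphM n)
        ∂(volume.prod volume) := by
  have := sphM_finite n hn
  have h1 : ∀ x, ((‖oscOp α m f x‖ ^ 2 : ℝ) : ℂ) =
      ∫ q : EuclideanSpace ℝ (Fin n) × EuclideanSpace ℝ (Fin n),
        (f q.1 * (starRingEnd ℂ) (f q.2)) * sphE α (fun k => q.1 k ^ m - q.2 k ^ m) x ∂(volume.prod volume) := by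
    intro x
    rw [Complex.ofReal_pow, ← Complex.mul_conj']
    unfold oscOp
    rw [← integral_conj, ← integral_prod_mul]
    congr 1
    ext q
    rw [map_mul, ← Complex.exp_conj, map_mul, Complex.conj_I, Complex.conj_ofReal]
    have : sphE α (fun k => q.1 k ^ m - q.2 k ^ m) x =
        Complex.exp (Complex.I * Complex.ofReal (∑ j, (x j) ^ (α j) * (q.1 j) ^ m)) *
        Complex.exp (-Complex.I * Complex.ofReal (∑ j, (x j) ^ (α j) * (q.2 j) ^ m)) := by
      unfold sphE
      rw [← Complex.exp_add, neg_mul, ← sub_eq_add_neg, ← mul_sub, ← Complex.ofReal_sub, ← Finset.sum_sub_distrib]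
      congr 4
      ext k
      ring
    rw [this]
    ring
  simp only [h1]
  rw [integral_integral_swap]
  · congr 1
    ext q
    rw [integral_const_mul]
  · have i1 : Integrable (fun q : EuclideanSpace ℝ (Fin n) × EuclideanSpace ℝ (Fin n) => f q.1 * (starRingEnd ℂ) (f q.2)) (volume.prod volume) := by
      refine hf.mul_prod (g := fun z => (starRingEnd ℂ) (f z)) ?_
      exact (Complex.conjLIE.toContinuousLinearEquiv.integrable_comp_iff).mpr hf
    have i2 := i1.comp_snd (sphM n)
    refine i2.mono (Continuous.aestronglyMeasurable ?_) (Filter.Eventually.of_forall fun q => ?_)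
    · unfold Function.uncurry sphE
      have : Continuous (starRingEnd ℂ) := Complex.continuous_conj
      fun_prop
    · simp only [Function.uncurry, norm_mul, sphE_norm, mul_one]
      exact le_rfl

lemma final_bd (n : ℕ) (hn : 2 ≤ n) (α : Fin n → ℕ) (hα : ∀ j, 3 ≤ α j)
    (m : ℕ) (hm : 3 ≤ m) (p l : ℝ) (hp : 1 ≤ p) (hl0 : 0 ≤ l) (hl1 : l ≤ 1) (hpl : p * (1 - l / 2) = 1)
    (hδ : ∀ k, (n * l / m) * α k ≤ 1) :
    ∃ D : ℝ≥0∞, D ≠ ⊤ ∧ ∀ f : EuclideanSpace ℝ (Fin n) → ℂ, Integrable f → Continuous f →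
      ‖∫ x, ((‖oscOp α m f x‖ ^ 2 : ℝ) : ℂ) ∂(sphM n)‖ₑ ≤ D * (eLpNorm f (ENNReal.ofReal p) volume) ^ 2 := by
  obtain ⟨C, hC, H⟩ := kernel_bd hn α hα m (by omega) l hl0 hδ
  have hp0 : 0 < p := by linarith
  refine ⟨ENNReal.ofReal C * (2 * cE m ^ n) ^ l, ?_, fun f hf hfc => ?_⟩
  · apply ENNReal.mul_ne_top ENNReal.ofReal_ne_top
    apply ENNReal.rpow_ne_top_of_nonneg hl0
    exact ENNReal.mul_ne_top (by simp) (ENNReal.pow_ne_top (cE_fin m hm).ne)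
  rw [osc_tt hn α m f hf hfc]
  have hg : Measurable (fun y => ‖f y‖ₑ) := hfc.measurable.enorm
  have hk := kEu_meas n m
  have hgk : Measurable (fun q : EuclideanSpace ℝ (Fin n) × EuclideanSpace ℝ (Fin n) => ‖f q.1‖ₑ * ‖f q.2‖ₑ * kEu n m q.1 q.2 ^ l) := by
    fun_prop
  have hb := holder_bd n m hm p l hp hl0 hl1 hpl (fun y => ‖f y‖ₑ) hg
  have hN : eLpNorm f (ENNReal.ofReal p) volume ^ 2 = (∫⁻ y, ‖f y‖ₑ ^ p) ^ (2 - l) := by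
    rw [eLpNorm_eq_lintegral_rpow_enorm_toReal (by simpa using hp0) (by simp), ENNReal.toReal_ofReal hp0.le, ← ENNReal.rpow_natCast, ← ENNReal.rpow_mul]
    congr 1
    field_simp
    push_cast
    linarith
  rw [hN, mul_assoc]
  calc _ ≤ ∫⁻ q : EuclideanSpace ℝ (Fin n) × EuclideanSpace ℝ (Fin n),
        ‖(f q.1 * (starRingEnd ℂ) (f q.2)) * ∫ x, sphE α (fun k => q.1 k ^ m - q.2 k ^ m) x ∂(sphM n)‖ₑ ∂(volume.prod volume) :=
        enorm_integral_le_lintegral_enorm _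
    _ ≤ ∫⁻ q : EuclideanSpace ℝ (Fin n) × EuclideanSpace ℝ (Fin n), ENNReal.ofReal C *
        (‖f q.1‖ₑ * ‖f q.2‖ₑ * kEu n m q.1 q.2 ^ l) ∂(volume.prod volume) := by
        apply lintegral_mono
        intro q
        simp only
        have hc : ‖(starRingEnd ℂ) (f q.2)‖ₑ = ‖f q.2‖ₑ := by
          rw [← ofReal_norm, ← ofReal_norm, RCLike.norm_conj]
        rw [enorm_mul, enorm_mul, hc]
        have h2 := H (WithLp.ofLp q.1) (WithLp.ofLp q.2)
        refine (mul_le_mul_right h2 _).trans (le_of_eq ?_)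
        unfold kEu kN
        ring
    _ = ENNReal.ofReal C * ∫⁻ y, ∫⁻ z, ‖f y‖ₑ * ‖f z‖ₑ * kEu n m y z ^ l := by
        rw [lintegral_const_mul _ hgk, lintegral_prod _ hgk.aemeasurable]
    _ ≤ _ := by gcongr

/-- Restriction theorem for `T_{α,m}` on the sphere. -/
theorem restriction_theorem (n : ℕ) (hn : 2 ≤ n) (α : Fin n → ℕ) (hα : ∀ j, 3 ≤ α j)
    (αmax : ℕ) (hαmax : αmax = Finset.univ.sup α)
    (m : ℕ) (hm1 : n < m) (hm2 : m ≤ n * αmax)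
    (p : ℝ) (hp1 : 1 ≤ p) (hp2 : p ≤ (2 * n * αmax : ℝ) / (2 * n * αmax - m)) :
    ∃ A : ℝ, 0 < A ∧ ∀ f : SchwartzMap (EuclideanSpace ℝ (Fin n)) ℂ,
      (∫ x in Metric.sphere (0 : EuclideanSpace ℝ (Fin n)) 1,
          ‖oscOp α m (⇑f) x‖ ^ 2 ∂(μH[(n : ℝ) - 1])) ^ ((1 : ℝ) / 2)
        ≤ A * (eLpNorm (⇑f) (ENNReal.ofReal p) volume).toReal := by
  have hp0 : 0 < p := by linarith
  have hn0 : (0:ℝ) < n := by exact_mod_cast (by omega : 0 < n)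
  have hm0 : (0:ℝ) < m := by exact_mod_cast (by omega : 0 < m)
  have hm2' : (m:ℝ) ≤ n * αmax := by exact_mod_cast hm2
  have hle : ∀ k, (α k : ℝ) ≤ αmax := by
    intro k
    rw [hαmax]
    exact_mod_cast Finset.le_sup (f := α) (Finset.mem_univ k)
  have ha0 : (0:ℝ) < αmax := by
    by_contra h
    push Not at h
    nlinarith
  have hden : (0:ℝ) < 2 * n * αmax - m := by nlinarith
  rw [le_div_iff₀ hden] at hp2
  set l : ℝ := 2 - 2 / p with hl
  have hpp : 2 / p * p = 2 := by field_simp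
  have hlp : l * p = 2 * p - 2 := by rw [hl, sub_mul, hpp]
  have hl0 : 0 ≤ l := by
    by_contra h
    push Not at h
    nlinarith
  have hlm : n * l * αmax ≤ m := by
    have : n * l * αmax * p ≤ m * p := by
      have e : n * l * αmax * p = n * αmax * (l * p) := by ring
      rw [e, hlp]
      nlinarith
    exact le_of_mul_le_mul_right this hp0
  have hl1 : l ≤ 1 := by
    have h1 : n * αmax * l ≤ n * αmax * 1 := by nlinarith
    exact le_of_mul_le_mul_left h1 (by positivity)
  obtain ⟨D, hD, H⟩ := final_bd n hn α hα m (by omega) p l hp1 hl0 hl1 (by nlinarith) (by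
    intro k
    rw [div_mul_eq_mul_div, div_le_one hm0]
    refine le_trans ?_ hlm
    exact mul_le_mul_of_nonneg_left (hle k) (by positivity))
  refine ⟨Real.sqrt (D.toReal + 1), by positivity, fun f => ?_⟩
  have h := H f f.integrable f.continuous
  have hfin : eLpNorm f (ENNReal.ofReal p) volume ≠ ⊤ := (f.memLp (ENNReal.ofReal p) volume).2.ne
  rw [integral_complex_ofReal, ← ofReal_norm, Complex.norm_real] at h
  have h2 := ENNReal.toReal_mono (ENNReal.mul_ne_top hD (ENNReal.pow_ne_top hfin)) h
  rw [ENNReal.toReal_ofReal (norm_nonneg _), ENNReal.toReal_mul, ENNReal.toReal_pow] at h2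
  set N := (eLpNorm f (ENNReal.ofReal p) volume).toReal
  have hN : 0 ≤ N := ENNReal.toReal_nonneg
  rw [← Real.sqrt_eq_rpow]
  apply Real.sqrt_le_iff.mpr
  refine ⟨by positivity, ?_⟩
  rw [mul_pow, Real.sq_sqrt (by positivity)]
  refine (le_abs_self _).trans (le_trans h2 ?_)
  nlinarith [sq_nonneg N]
end

section
/- Let $n \geq 2$ and let $\beta_1, \dots, \beta_n$ be integers with $\beta_j \geq 3$ for all $j$, and set $\beta_{\max} = \max\{\beta_1,\dots,\beta_n\}$. For $\lambda = (\lambda_1,\dots,\lambda_n) \in \mathbb{R}^n$ define $I(\lambda) = \int_{\mathbb{S}^{n-1}} e^{i(\lambda_1 y_1^{\beta_1} + \cdots + \lambda_n y_n^{\beta_n})} d\sigma(y)$. Then there is a constant $C$ (depending only on $n$ and $\beta_1,\dots,\beta_n$) such that $|I(\lambda)| \leq C |\lambda|^{-1/\beta_{\max}}$ for all $\lambda \neq 0$, where $|\lambda|$ denotes the Euclidean norm of $\lambda$. -/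
open MeasureTheory
open scoped ENNReal


lemma vdc_base (D : ℕ → ℝ → ℝ) (hD : ∀ i x, HasDerivAt (D i) (D (i+1) x) x)
    (α β μ : ℝ) (hab : α ≤ β) (hμ : 0 < μ) (h : ∀ x ∈ Set.Icc α β, μ ≤ |D 1 x|) :
    ‖∫ x in α..β, Complex.exp (Complex.I * (D 0 x : ℂ))‖ ≤
      2 / μ + ∫ x in α..β, |D 2 x| / (D 1 x)^2 := by
  have hc : ∀ i, Continuous (D i) := fun i =>
    continuous_iff_continuousAt.2 fun x => (hD i x).continuousAt
  have hne : ∀ x ∈ Set.uIcc α β, D 1 x ≠ 0 := by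
    intro x hx
    rw [Set.uIcc_of_le hab] at hx
    have := h x hx
    intro h0
    rw [h0] at this; simp at this; linarith
  have hneC : ∀ x ∈ Set.uIcc α β, (D 1 x : ℂ) ≠ 0 := fun x hx => by exact_mod_cast hne x hx
  have hv : ∀ x, HasDerivAt (fun x => Complex.exp (Complex.I * (D 0 x : ℂ)))
      (Complex.exp (Complex.I * (D 0 x : ℂ)) * (Complex.I * (D 1 x : ℂ))) x := fun x =>
    (((hD 0 x).ofReal_comp).const_mul Complex.I).cexp
  have hu : ∀ x ∈ Set.uIcc α β, HasDerivAt (fun x => (Complex.I * (D 1 x : ℂ))⁻¹)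
      (-(Complex.I * (D 2 x : ℂ)) / (Complex.I * (D 1 x : ℂ))^2) x := fun x hx =>
    (((hD 1 x).ofReal_comp).const_mul Complex.I).fun_inv
      (mul_ne_zero Complex.I_ne_zero (hneC x hx))
  have cC : ∀ i, Continuous (fun x => (D i x : ℂ)) := fun i => Complex.continuous_ofReal.comp (hc i)
  have c1 : ContinuousOn (fun x => -(Complex.I * (D 2 x : ℂ)) / (Complex.I * (D 1 x : ℂ))^2)
      (Set.uIcc α β) := by
    apply ContinuousOn.div
    · have := cC 2; fun_prop
    · have := cC 1; fun_prop
    · intro x hx; exact pow_ne_zero _ (mul_ne_zero Complex.I_ne_zero (hneC x hx))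
  have key := intervalIntegral.integral_mul_deriv_eq_deriv_mul (a := α) (b := β)
    hu (fun x _ => hv x) c1.intervalIntegrable
    (by apply Continuous.intervalIntegrable; have := cC 0; have := cC 1; fun_prop)
  have e1 : ∫ x in α..β, Complex.exp (Complex.I * (D 0 x : ℂ)) =
      ∫ x in α..β, (Complex.I * (D 1 x : ℂ))⁻¹ *
        (Complex.exp (Complex.I * (D 0 x : ℂ)) * (Complex.I * (D 1 x : ℂ))) := by
    apply intervalIntegral.integral_congr
    intro x hx
    have := hneC x hx
    have := Complex.I_ne_zero
    simp only
    field_simp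
  have hexp : ∀ x, ‖Complex.exp (Complex.I * (D 0 x : ℂ))‖ = 1 := fun x => by
    rw [mul_comm]; exact Complex.norm_exp_ofReal_mul_I _
  have hb : ∀ x ∈ Set.Icc α β, ‖(Complex.I * (D 1 x : ℂ))⁻¹ * Complex.exp (Complex.I * (D 0 x : ℂ))‖ ≤ 1 / μ := by
    intro x hx
    rw [norm_mul, hexp, norm_inv, norm_mul, Complex.norm_I, Complex.norm_real, Real.norm_eq_abs,
      one_mul, mul_one, one_div]
    exact inv_anti₀ hμ (h x hx)
  have h3 : ‖∫ x in α..β, (-(Complex.I * (D 2 x : ℂ)) / (Complex.I * (D 1 x : ℂ))^2) *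
      Complex.exp (Complex.I * (D 0 x : ℂ))‖ ≤ ∫ x in α..β, |D 2 x| / (D 1 x)^2 := by
    refine (intervalIntegral.norm_integral_le_integral_norm hab).trans (le_of_eq ?_)
    apply intervalIntegral.integral_congr
    intro x hx
    simp only
    rw [norm_mul, hexp, norm_div, norm_neg, norm_mul, norm_pow, norm_mul, Complex.norm_I,
      Complex.norm_real, Complex.norm_real]
    simp
  rw [e1, key]
  have h1 := hb α (Set.left_mem_Icc.2 hab)
  have h2 := hb β (Set.right_mem_Icc.2 hab)
  have := norm_sub_le ((Complex.I * (D 1 β : ℂ))⁻¹ * Complex.exp (Complex.I * (D 0 β : ℂ)) -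
    (Complex.I * (D 1 α : ℂ))⁻¹ * Complex.exp (Complex.I * (D 0 α : ℂ)))
    (∫ x in α..β, (-(Complex.I * (D 2 x : ℂ)) / (Complex.I * (D 1 x : ℂ))^2) *
      Complex.exp (Complex.I * (D 0 x : ℂ)))
  have := norm_sub_le ((Complex.I * (D 1 β : ℂ))⁻¹ * Complex.exp (Complex.I * (D 0 β : ℂ)))
    ((Complex.I * (D 1 α : ℂ))⁻¹ * Complex.exp (Complex.I * (D 0 α : ℂ)))
  have : 2 / μ = 1 / μ + 1 / μ := by ring
  linarith

lemma vdc_mono (D : ℕ → ℝ → ℝ) (hD : ∀ i x, HasDerivAt (D i) (D (i+1) x) x)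
    (α β μ : ℝ) (hab : α ≤ β) (hμ : 0 < μ) (h : ∀ x ∈ Set.Icc α β, μ ≤ |D 1 x|)
    (hs : (∀ x ∈ Set.Icc α β, 0 ≤ D 2 x) ∨ (∀ x ∈ Set.Icc α β, D 2 x ≤ 0)) :
    ‖∫ x in α..β, Complex.exp (Complex.I * (D 0 x : ℂ))‖ ≤ 4 / μ := by
  have hc : ∀ i, Continuous (D i) := fun i =>
    continuous_iff_continuousAt.2 fun x => (hD i x).continuousAt
  have hne : ∀ x ∈ Set.uIcc α β, D 1 x ≠ 0 := by
    intro x hx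
    rw [Set.uIcc_of_le hab] at hx
    have := h x hx
    intro h0
    rw [h0] at this; simp at this; linarith
  have hu : ∀ x ∈ Set.uIcc α β, HasDerivAt (fun x => (D 1 x)⁻¹) (-D 2 x / (D 1 x)^2) x :=
    fun x hx => (hD 1 x).fun_inv (hne x hx)
  have c1 : ContinuousOn (fun x => -D 2 x / (D 1 x)^2) (Set.uIcc α β) := by
    apply ContinuousOn.div
    · have := hc 2; fun_prop
    · have := hc 1; fun_prop
    · intro x hx; exact pow_ne_zero _ (hne x hx)
  have key := intervalIntegral.integral_eq_sub_of_hasDerivAt hu c1.intervalIntegrable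
  have hb : ∀ x ∈ Set.Icc α β, |(D 1 x)⁻¹| ≤ 1 / μ := by
    intro x hx
    rw [abs_inv, one_div]
    exact inv_anti₀ hμ (h x hx)
  have h1 := abs_le.1 (hb α (Set.left_mem_Icc.2 hab))
  have h2 := abs_le.1 (hb β (Set.right_mem_Icc.2 hab))
  have hfin : ∫ x in α..β, |D 2 x| / (D 1 x)^2 ≤ 1 / μ + 1 / μ := by
    rcases hs with hs | hs
    · have : ∫ x in α..β, |D 2 x| / (D 1 x)^2 = - ∫ x in α..β, -D 2 x / (D 1 x)^2 := by
        rw [← intervalIntegral.integral_neg]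
        apply intervalIntegral.integral_congr
        intro x hx
        rw [Set.uIcc_of_le hab] at hx
        simp only
        rw [abs_of_nonneg (hs x hx)]; ring
      rw [this, key]; linarith
    · have : ∫ x in α..β, |D 2 x| / (D 1 x)^2 = ∫ x in α..β, -D 2 x / (D 1 x)^2 := by
        apply intervalIntegral.integral_congr
        intro x hx
        rw [Set.uIcc_of_le hab] at hx
        simp only
        rw [abs_of_nonpos (hs x hx)]
      rw [this, key]; linarith
  have := vdc_base D hD α β μ hab hμ h
  have : 4 / μ = 2 / μ + (1 / μ + 1 / μ) := by ring
  linarith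

lemma sign_const (f : ℝ → ℝ) (hf : Continuous f) (α β μ : ℝ) (hμ : 0 < μ)
    (h : ∀ x ∈ Set.Icc α β, μ ≤ |f x|) :
    (∀ x ∈ Set.Icc α β, μ ≤ f x) ∨ (∀ x ∈ Set.Icc α β, f x ≤ -μ) := by
  by_contra hcon
  push Not at hcon
  obtain ⟨⟨x, hx, hx'⟩, ⟨y, hy, hy'⟩⟩ := hcon
  have hx2 : f x ≤ 0 := by
    by_contra h0
    have := h x hx
    rw [abs_of_pos (by linarith)] at this; linarith
  have hy2 : 0 ≤ f y := by
    by_contra h0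
    have := h y hy
    rw [abs_of_neg (by linarith)] at this; linarith
  obtain ⟨z, hz, hz0⟩ := isPreconnected_Icc.intermediate_value hx hy hf.continuousOn ⟨hx2, hy2⟩
  have := h z hz
  rw [hz0] at this; simp at this; linarith

lemma center_pos (f f' : ℝ → ℝ) (hf : ∀ x, HasDerivAt f (f' x) x) (α β μ : ℝ) (hab : α ≤ β)
    (hμ : 0 < μ) (h : ∀ x ∈ Set.Icc α β, μ ≤ f' x) :
    ∃ c ∈ Set.Icc α β, ∀ x ∈ Set.Icc α β, μ * |x - c| ≤ |f x| := by
  have hcont : Continuous f := continuous_iff_continuousAt.2 fun x => (hf x).continuousAt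
  have mvt : ∀ x ∈ Set.Icc α β, ∀ y ∈ Set.Icc α β, x ≤ y → μ * (y - x) ≤ f y - f x := by
    intro x hx y hy hxy
    refine Convex.mul_sub_le_image_sub_of_le_deriv (convex_Icc α β) hcont.continuousOn
      (fun z _ => (hf z).differentiableAt.differentiableWithinAt) ?_ x hx y hy hxy
    intro z hz
    rw [(hf z).deriv]; exact h z (interior_subset hz)
  have hα := Set.left_mem_Icc.2 hab
  have hβ := Set.right_mem_Icc.2 hab
  have main : ∀ c ∈ Set.Icc α β, (0 ≤ f c ∨ c = β) → (f c ≤ 0 ∨ c = α) →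
      ∀ x ∈ Set.Icc α β, μ * |x - c| ≤ |f x| := by
    intro c hc h1 h2 x hx
    rcases le_total x c with hxc | hxc
    · rcases h2 with h2 | h2
      · have := mvt x hx c hc hxc
        rw [abs_of_nonpos (by linarith : x - c ≤ 0)]
        have h3 := neg_le_abs (f x)
        linarith
      · have : x = c := le_antisymm hxc (by rw [h2]; exact hx.1)
        rw [this]; simp
    · rcases h1 with h1 | h1
      · have := mvt c hc x hx hxc
        rw [abs_of_nonneg (by linarith : 0 ≤ x - c)]
        have h3 := le_abs_self (f x)
        linarith
      · have : x = c := le_antisymm (by rw [h1]; exact hx.2) hxc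
        rw [this]; simp
  rcases le_total 0 (f α) with h1 | h1
  · exact ⟨α, hα, main α hα (Or.inl h1) (Or.inr rfl)⟩
  rcases le_total (f β) 0 with h2 | h2
  · exact ⟨β, hβ, main β hβ (Or.inr rfl) (Or.inl h2)⟩
  obtain ⟨z, hz, hz0⟩ := isPreconnected_Icc.intermediate_value hα hβ hcont.continuousOn ⟨h1, h2⟩
  exact ⟨z, hz, main z hz (Or.inl hz0.ge) (Or.inl hz0.le)⟩

lemma center_abs (f f' : ℝ → ℝ) (hf : ∀ x, HasDerivAt f (f' x) x) (hf' : Continuous f')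
    (α β μ : ℝ) (hab : α ≤ β)
    (hμ : 0 < μ) (h : ∀ x ∈ Set.Icc α β, μ ≤ |f' x|) :
    ∃ c ∈ Set.Icc α β, ∀ x ∈ Set.Icc α β, μ * |x - c| ≤ |f x| := by
  rcases sign_const f' hf' α β μ hμ h with h1 | h1
  · exact center_pos f f' hf α β μ hab hμ h1
  · obtain ⟨c, hc, h2⟩ := center_pos (fun x => - f x) (fun x => - f' x) (fun x => (hf x).neg) α β μ hab hμ
      (fun x hx => by have := h1 x hx; linarith)
    exact ⟨c, hc, fun x hx => by simpa using h2 x hx⟩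

lemma vdc_step (D : ℕ → ℝ → ℝ) (hD : ∀ i x, HasDerivAt (D i) (D (i+1) x) x) (k : ℕ) (hk : 1 ≤ k)
    (C : ℝ)
    (ih : ∀ α β μ : ℝ, α ≤ β → 0 < μ → (∀ x ∈ Set.Icc α β, μ ≤ |D k x|) →
      ((∀ x ∈ Set.Icc α β, 0 ≤ D (k+1) x) ∨ (∀ x ∈ Set.Icc α β, D (k+1) x ≤ 0)) →
      ‖∫ x in α..β, Complex.exp (Complex.I * (D 0 x : ℂ))‖ ≤ C * μ ^ (-(1 / (k : ℝ))))
    (hC : 0 ≤ C)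
    (α β μ : ℝ) (hab : α ≤ β) (hμ : 0 < μ) (h : ∀ x ∈ Set.Icc α β, μ ≤ |D (k+1) x|) :
    ‖∫ x in α..β, Complex.exp (Complex.I * (D 0 x : ℂ))‖ ≤
      (2 * C + 2) * μ ^ (-(1 / ((k + 1 : ℕ) : ℝ))) := by
  have hc : ∀ i, Continuous (D i) := fun i =>
    continuous_iff_continuousAt.2 fun x => (hD i x).continuousAt
  obtain ⟨c, hcm, hcx⟩ := center_abs (D k) (D (k+1)) (hD k) (hc _) α β μ hab hμ h
  have hs : (∀ x ∈ Set.Icc α β, 0 ≤ D (k+1) x) ∨ (∀ x ∈ Set.Icc α β, D (k+1) x ≤ 0) := by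
    rcases sign_const _ (hc (k+1)) α β μ hμ h with h1 | h1
    · left; intro x hx; have := h1 x hx; linarith
    · right; intro x hx; have := h1 x hx; linarith
  set δ := μ ^ (-(1 / ((k + 1 : ℕ) : ℝ))) with hδ
  have hδ0 : 0 < δ := Real.rpow_pos_of_pos hμ _
  have hpow : (μ * δ) ^ (-(1 / (k : ℝ))) = δ := by
    have hk0 : (k : ℝ) ≠ 0 := by positivity
    have hk1 : ((k + 1 : ℕ) : ℝ) ≠ 0 := by positivity
    rw [hδ]
    nth_rewrite 1 [← Real.rpow_one μ]
    rw [← Real.rpow_add hμ, ← Real.rpow_mul hμ.le]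
    congr 1
    push_cast at hk1 ⊢
    field_simp
    ring
  have hint : ∀ a b : ℝ, IntervalIntegrable (fun x => Complex.exp (Complex.I * (D 0 x : ℂ))) volume a b := by
    intro a b
    apply Continuous.intervalIntegrable
    have := Complex.continuous_ofReal.comp (hc 0)
    simp only [Function.comp_def] at this
    fun_prop
  have hexp : ∀ x, ‖Complex.exp (Complex.I * (D 0 x : ℂ))‖ = 1 := fun x => by
    rw [mul_comm]; exact Complex.norm_exp_ofReal_mul_I _
  set u := max α (c - δ)
  set v := min β (c + δ)
  have hau : α ≤ u := le_max_left _ _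
  have huc : u ≤ c := max_le hcm.1 (by linarith)
  have hcv : c ≤ v := le_min hcm.2 (by linarith)
  have hvb : v ≤ β := min_le_left _ _
  have hμδ : 0 < μ * δ := by positivity
  have I1 : ‖∫ x in α..u, Complex.exp (Complex.I * (D 0 x : ℂ))‖ ≤ C * δ := by
    rcases le_total α (c - δ) with hle | hle
    · have hsub : Set.Icc α u ⊆ Set.Icc α β := Set.Icc_subset_Icc_right (by linarith)
      rw [← hpow]
      refine ih α u (μ * δ) hau hμδ ?_ ?_
      · intro x hx
        refine le_trans ?_ (hcx x (hsub hx))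
        have hxu : x ≤ c - δ := by rw [← max_eq_right hle]; exact hx.2
        gcongr
        rw [abs_of_nonpos (by linarith)]; linarith
      · exact hs.imp (fun g x hx => g x (hsub hx)) (fun g x hx => g x (hsub hx))
    · have : u = α := max_eq_left hle
      rw [this]; simp; positivity
  have I3 : ‖∫ x in v..β, Complex.exp (Complex.I * (D 0 x : ℂ))‖ ≤ C * δ := by
    rcases le_total (c + δ) β with hle | hle
    · have hsub : Set.Icc v β ⊆ Set.Icc α β := Set.Icc_subset_Icc_left (by linarith)
      rw [← hpow]
      refine ih v β (μ * δ) hvb hμδ ?_ ?_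
      · intro x hx
        refine le_trans ?_ (hcx x (hsub hx))
        have hxu : c + δ ≤ x := by rw [← min_eq_right hle]; exact hx.1
        gcongr
        rw [abs_of_nonneg (by linarith)]; linarith
      · exact hs.imp (fun g x hx => g x (hsub hx)) (fun g x hx => g x (hsub hx))
    · have : v = β := min_eq_left hle
      rw [this]; simp; positivity
  have I2 : ‖∫ x in u..v, Complex.exp (Complex.I * (D 0 x : ℂ))‖ ≤ 2 * δ := by
    have := intervalIntegral.norm_integral_le_of_norm_le_const (a := u) (b := v) (C := 1)
      (f := fun x => Complex.exp (Complex.I * (D 0 x : ℂ))) (fun x _ => (hexp x).le)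
    rw [abs_of_nonneg (by linarith)] at this
    have h1 : c - δ ≤ u := le_max_right _ _
    have h2 : v ≤ c + δ := min_le_right _ _
    linarith
  rw [← intervalIntegral.integral_add_adjacent_intervals (hint α u) (hint u β),
    ← intervalIntegral.integral_add_adjacent_intervals (hint u v) (hint v β)]
  refine (norm_add_le _ _).trans ?_
  have := norm_add_le (∫ x in u..v, Complex.exp (Complex.I * (D 0 x : ℂ)))
    (∫ x in v..β, Complex.exp (Complex.I * (D 0 x : ℂ)))
  linarith

lemma vdc_all (k : ℕ) (hk : 1 ≤ k) : ∃ C : ℝ, 0 ≤ C ∧ 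
    ∀ D : ℕ → ℝ → ℝ, (∀ i x, HasDerivAt (D i) (D (i+1) x) x) →
    ∀ α β μ : ℝ, α ≤ β → 0 < μ → (∀ x ∈ Set.Icc α β, μ ≤ |D k x|) →
      ((∀ x ∈ Set.Icc α β, 0 ≤ D (k+1) x) ∨ (∀ x ∈ Set.Icc α β, D (k+1) x ≤ 0)) →
      ‖∫ x in α..β, Complex.exp (Complex.I * (D 0 x : ℂ))‖ ≤ C * μ ^ (-(1 / (k : ℝ))) := by
  induction k, hk using Nat.le_induction with
  | base =>
    refine ⟨4, by norm_num, fun D hD α β μ hab hμ h hs => ?_⟩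
    have := vdc_mono D hD α β μ hab hμ h hs
    simpa [Real.rpow_neg_one, div_eq_mul_inv] using this
  | succ k hk ih =>
    obtain ⟨C, hC, ih⟩ := ih
    refine ⟨2 * C + 2, by positivity, fun D hD α β μ hab hμ h hs => ?_⟩
    exact vdc_step D hD k hk C (ih D hD) hC α β μ hab hμ h

lemma vdc (k : ℕ) (hk : 2 ≤ k) : ∃ C : ℝ, 0 ≤ C ∧ 
    ∀ D : ℕ → ℝ → ℝ, (∀ i x, HasDerivAt (D i) (D (i+1) x) x) →
    ∀ α β μ : ℝ, α ≤ β → 0 < μ → (∀ x ∈ Set.Icc α β, μ ≤ |D k x|) →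
      ‖∫ x in α..β, Complex.exp (Complex.I * (D 0 x : ℂ))‖ ≤ C * μ ^ (-(1 / (k : ℝ))) := by
  obtain ⟨k, rfl⟩ : ∃ m, k = m + 1 := ⟨k - 1, by omega⟩
  obtain ⟨C, hC, ih⟩ := vdc_all k (by omega)
  exact ⟨2 * C + 2, by positivity, fun D hD α β μ hab hμ h =>
    vdc_step D hD k (by omega) C (ih D hD) hC α β μ hab hμ h⟩


lemma amp_bound (D : ℕ → ℝ → ℝ) (hD : ∀ i x, HasDerivAt (D i) (D (i+1) x) x)
    (ψ ψ' : ℝ → ℝ) (hψ : ∀ x, HasDerivAt ψ (ψ' x) x) (hψ'c : Continuous ψ')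
    (h1 : ∀ x, |ψ x| ≤ 1) (h2 : ∀ x, |ψ' x| ≤ 2)
    (α β K : ℝ) (hab : α ≤ β)
    (hK : ∀ x ∈ Set.Icc α β, ‖∫ y in α..x, Complex.exp (Complex.I * (D 0 y : ℂ))‖ ≤ K) :
    ‖∫ x in α..β, (ψ x : ℂ) * Complex.exp (Complex.I * (D 0 x : ℂ))‖ ≤ (1 + 2 * (β - α)) * K := by
  have hc : Continuous (D 0) := continuous_iff_continuousAt.2 fun x => (hD 0 x).continuousAt
  have hcE : Continuous (fun x => Complex.exp (Complex.I * (D 0 x : ℂ))) := by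
    have := Complex.continuous_ofReal.comp hc
    simp only [Function.comp_def] at this
    fun_prop
  have hcψ' : Continuous (fun x => (ψ' x : ℂ)) := Complex.continuous_ofReal.comp hψ'c
  set F : ℝ → ℂ := fun x => ∫ y in α..x, Complex.exp (Complex.I * (D 0 y : ℂ)) with hF
  have hFd : ∀ x, HasDerivAt F (Complex.exp (Complex.I * (D 0 x : ℂ))) x := fun x =>
    intervalIntegral.integral_hasDerivAt_right (hcE.intervalIntegrable _ _)
      hcE.aestronglyMeasurable.stronglyMeasurableAtFilter hcE.continuousAt
  have key := intervalIntegral.integral_mul_deriv_eq_deriv_mul (a := α) (b := β)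
    (u := fun x => (ψ x : ℂ)) (u' := fun x => (ψ' x : ℂ)) (v := F)
    (fun x _ => (hψ x).ofReal_comp) (fun x _ => hFd x)
    (hcψ'.intervalIntegrable _ _) (hcE.intervalIntegrable _ _)
  rw [key]
  have hF0 : F α = 0 := by simp [hF]
  rw [hF0, mul_zero, sub_zero]
  have hK0 : 0 ≤ K := (norm_nonneg _).trans (hK α (Set.left_mem_Icc.2 hab))
  have e1 : ‖(ψ β : ℂ) * F β‖ ≤ 1 * K := by
    rw [norm_mul, Complex.norm_real]
    exact mul_le_mul (h1 β) (hK β (Set.right_mem_Icc.2 hab)) (norm_nonneg _) zero_le_one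
  have e2 : ‖∫ x in α..β, (ψ' x : ℂ) * F x‖ ≤ (2 * K) * |β - α| := by
    apply intervalIntegral.norm_integral_le_of_norm_le_const
    intro x hx
    rw [Set.uIoc_of_le hab] at hx
    rw [norm_mul, Complex.norm_real]
    exact mul_le_mul (h2 x) (hK x ⟨hx.1.le, hx.2⟩) (norm_nonneg _) zero_le_two
  rw [abs_of_nonneg (by linarith)] at e2
  refine (norm_sub_le _ _).trans ?_
  linarith

lemma local_one (N k : ℕ) (hk : 1 ≤ k) (hkN : k ≤ N) (c M : ℝ) (hc : 0 < c) (hM : 0 ≤ M) :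
    ∃ C : ℝ, 0 ≤ C ∧ ∀ D : ℕ → ℝ → ℝ, (∀ i x, HasDerivAt (D i) (D (i+1) x) x) →
    ∀ α β t : ℝ, α ≤ β → β - α ≤ 7 → 1 ≤ t → (∀ x ∈ Set.Icc α β, |D 2 x| ≤ M * t) →
    (∀ x ∈ Set.Icc α β, c * t ≤ |D k x|) →
    ‖∫ x in α..β, Complex.exp (Complex.I * (D 0 x : ℂ))‖ ≤ C * t ^ (-(1 / (N : ℝ))) := by
  have hkk : ∀ t : ℝ, 1 ≤ t → t ^ (-(1 / (k : ℝ))) ≤ t ^ (-(1 / (N : ℝ))) := by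
    intro t ht
    apply Real.rpow_le_rpow_of_exponent_le ht
    have : (0:ℝ) < k := by positivity
    have : (k:ℝ) ≤ N := by exact_mod_cast hkN
    have := one_div_le_one_div_of_le (by positivity) this
    linarith
  rcases Nat.eq_or_lt_of_le hk with h1 | h2
  · subst h1
    refine ⟨2 / c + 7 * (M / c ^ 2), by positivity, fun D hD α β t hab hL ht hM2 hlow => ?_⟩
    have ht0 : 0 < t := by linarith
    have hct : 0 < c * t := by positivity
    have hb := vdc_base D hD α β (c * t) hab hct hlow
    have e : ∫ x in α..β, |D 2 x| / (D 1 x)^2 ≤ (M * t / (c * t)^2) * 7 := by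
      have := intervalIntegral.norm_integral_le_of_norm_le_const (a := α) (b := β)
        (f := fun x => |D 2 x| / (D 1 x)^2) (C := M * t / (c * t)^2) ?_
      · rw [abs_of_nonneg (by linarith)] at this
        refine (le_abs_self _).trans (this.trans ?_)
        gcongr
      · intro x hx
        rw [Set.uIoc_of_le hab] at hx
        have hx' : x ∈ Set.Icc α β := ⟨hx.1.le, hx.2⟩
        rw [Real.norm_eq_abs, abs_of_nonneg (by positivity), ← sq_abs (D 1 x)]
        have := hlow x hx'
        have := hM2 x hx'
        gcongr
        
    refine (hb.trans (add_le_add_right e _)).trans ?_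
    have e3 : 2 / (c * t) + M * t / (c * t) ^ 2 * 7 = (2 / c + 7 * (M / c ^ 2)) * t⁻¹ := by
      field_simp
    rw [e3]
    have := hkk t ht
    simp only [Nat.cast_one, div_one, Real.rpow_neg_one] at this
    gcongr
  · obtain ⟨C, hC, hv⟩ := vdc k h2
    refine ⟨C * c ^ (-(1 / (k : ℝ))), by positivity, fun D hD α β t hab hL ht hM2 hlow => ?_⟩
    have ht0 : 0 < t := by linarith
    refine (hv D hD α β (c * t) hab (by positivity) hlow).trans ?_
    rw [Real.mul_rpow hc.le ht0.le, ← mul_assoc]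
    have := hkk t ht
    gcongr

lemma local_all (N : ℕ) (c M : ℝ) (hc : 0 < c) (hM : 0 ≤ M) :
    ∃ C : ℝ, 0 ≤ C ∧ ∀ D : ℕ → ℝ → ℝ, (∀ i x, HasDerivAt (D i) (D (i+1) x) x) →
    ∀ α β t : ℝ, α ≤ β → β - α ≤ 7 → 1 ≤ t → (∀ x ∈ Set.Icc α β, |D 2 x| ≤ M * t) →
    (∃ k, 1 ≤ k ∧ k ≤ N ∧ ∀ x ∈ Set.Icc α β, c * t ≤ |D k x|) →
    ‖∫ x in α..β, Complex.exp (Complex.I * (D 0 x : ℂ))‖ ≤ C * t ^ (-(1 / (N : ℝ))) := by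
  have : ∀ k : ℕ, ∃ C : ℝ, 0 ≤ C ∧ (1 ≤ k → k ≤ N → 
    ∀ D : ℕ → ℝ → ℝ, (∀ i x, HasDerivAt (D i) (D (i+1) x) x) →
    ∀ α β t : ℝ, α ≤ β → β - α ≤ 7 → 1 ≤ t → (∀ x ∈ Set.Icc α β, |D 2 x| ≤ M * t) →
    (∀ x ∈ Set.Icc α β, c * t ≤ |D k x|) →
    ‖∫ x in α..β, Complex.exp (Complex.I * (D 0 x : ℂ))‖ ≤ C * t ^ (-(1 / (N : ℝ)))) := by
    intro k
    by_cases h : 1 ≤ k ∧ k ≤ N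
    · obtain ⟨C, h0, h1⟩ := local_one N k h.1 h.2 c M hc hM
      exact ⟨C, h0, fun _ _ => h1⟩
    · exact ⟨0, le_rfl, fun a b => absurd ⟨a, b⟩ h⟩
  choose C hC0 hC using this
  refine ⟨∑ k ∈ Finset.range (N+1), C k, Finset.sum_nonneg fun _ _ => hC0 _, ?_⟩
  rintro D hD α β t hab hL ht hM2 ⟨k, hk1, hkN, hlow⟩
  refine (hC k hk1 hkN D hD α β t hab hL ht hM2 hlow).trans ?_
  have : C k ≤ ∑ k ∈ Finset.range (N+1), C k :=
    Finset.single_le_sum (f := C) (fun _ _ => hC0 _) (Finset.mem_range.2 (by omega))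
  have ht0 : 0 < t := by linarith
  gcongr

lemma hasDeriv_iter (f : ℝ → ℝ) (hf : ContDiff ℝ (⊤ : ℕ∞) f) (i : ℕ) (x : ℝ) :
    HasDerivAt (iteratedDeriv i f) (iteratedDeriv (i+1) f x) x := by
  rw [iteratedDeriv_succ]
  apply DifferentiableAt.hasDerivAt
  exact (hf.differentiable_iteratedDeriv i (by exact_mod_cast WithTop.coe_lt_top i)) x

lemma iter_pow (h h' : ℝ → ℝ) (hd : ∀ x, HasDerivAt h (h' x) x) (hd' : ∀ x, HasDerivAt h' (- h x) x)
    (hs : ContDiff ℝ (⊤ : ℕ∞) h) (hs' : ContDiff ℝ (⊤ : ℕ∞) h') (q k : ℕ) (hk : k ≤ q) :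
    ∃ R : ℝ → ℝ, ContDiff ℝ (⊤ : ℕ∞) R ∧ ∀ x, iteratedDeriv k (fun x => h x ^ q) x =
      (q.descFactorial k : ℝ) * h x ^ (q - k) * h' x ^ k + h x ^ (q - k + 1) * R x := by
  induction k with
  | zero => exact ⟨fun _ => 0, contDiff_const, fun x => by simp⟩
  | succ k ih =>
    obtain ⟨R, hR, hRe⟩ := ih (by omega)
    obtain ⟨m, hm⟩ : ∃ m, q - k = m + 1 := ⟨q - k - 1, by omega⟩
    have hm' : q - (k + 1) = m := by omega
    have hRd : ∀ x, HasDerivAt R (deriv R x) x := fun x =>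
      ((hR.differentiable (by simp)) x).hasDerivAt
    have hdR : ContDiff ℝ (⊤ : ℕ∞) (deriv R) := by
      have := (contDiff_infty_iff_deriv (f := R)).1 hR
      exact this.2
    refine ⟨fun x => -(q.descFactorial k : ℝ) * k * h' x ^ (k - 1) * h x + (m + 2) * h' x * R x
      + h x * deriv R x, by fun_prop, fun x => ?_⟩
    rw [iteratedDeriv_succ]
    have hfun : iteratedDeriv k (fun x => h x ^ q) = fun x =>
      (q.descFactorial k : ℝ) * h x ^ (m + 1) * h' x ^ k + h x ^ (m + 2) * R x := by
      funext x; rw [hRe x, hm]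
    rw [hfun]
    have e1 := ((((hd x).fun_pow (m+1)).const_mul (q.descFactorial k : ℝ)).mul ((hd' x).fun_pow k)).add
      (((hd x).fun_pow (m+2)).mul (hRd x))
    refine e1.deriv.trans ?_
    rw [hm', Nat.descFactorial_succ, hm]
    push_cast
    ring

lemma iter_pow_zero (h h' : ℝ → ℝ) (hd : ∀ x, HasDerivAt h (h' x) x) (hd' : ∀ x, HasDerivAt h' (- h x) x)
    (hs : ContDiff ℝ (⊤ : ℕ∞) h) (hs' : ContDiff ℝ (⊤ : ℕ∞) h') (q : ℕ) (x : ℝ) (hx : h x = 0)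
    (hx' : h' x ≠ 0) :
    iteratedDeriv q (fun x => h x ^ q) x ≠ 0 := by
  obtain ⟨R, -, hR⟩ := iter_pow h h' hd hd' hs hs' q q le_rfl
  rw [hR x, hx]
  simp [Nat.descFactorial_self, hx', Nat.factorial_ne_zero]

lemma iter_pow_one_two (h h' : ℝ → ℝ) (hd : ∀ x, HasDerivAt h (h' x) x)
    (hd' : ∀ x, HasDerivAt h' (- h x) x) (m : ℕ) (x : ℝ) :
    iteratedDeriv 1 (fun x => h x ^ (m + 3)) x = (m + 3) * h x ^ (m + 2) * h' x ∧
    iteratedDeriv 2 (fun x => h x ^ (m + 3)) x =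
      (m + 3) * h x ^ (m + 1) * ((m + 2) * h' x ^ 2 - h x ^ 2) := by
  have e1 : iteratedDeriv 1 (fun x => h x ^ (m + 3)) = fun x => (m + 3) * h x ^ (m + 2) * h' x := by
    funext x
    rw [iteratedDeriv_one, ((hd x).fun_pow (m+3)).deriv]
    push_cast; simp
  refine ⟨congrFun e1 x, ?_⟩
  rw [iteratedDeriv_succ, e1]
  refine (((((hd x).fun_pow (m+2)).const_mul ((m:ℝ) + 3))).mul (hd' x)).deriv.trans ?_
  simp only [show m + 2 - 1 = m + 1 by omega]
  push_cast
  ring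

lemma nondeg (p q : ℕ) (hp : 3 ≤ p) (hq : 3 ≤ q) (a b θ : ℝ) (hab : a ≠ 0 ∨ b ≠ 0) :
    ∃ k, 1 ≤ k ∧ k ≤ max p q ∧ a * iteratedDeriv k (fun x => Real.cos x ^ p) θ +
      b * iteratedDeriv k (fun x => Real.sin x ^ q) θ ≠ 0 := by
  by_contra hcon
  push Not at hcon
  have nc1 : ∀ x, HasDerivAt (fun x => - Real.sin x) (- Real.cos x) x := fun x => (Real.hasDerivAt_sin x).neg
  have zs := iter_pow_zero Real.sin Real.cos Real.hasDerivAt_sin Real.hasDerivAt_cos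
    Real.contDiff_sin Real.contDiff_cos q θ
  have zc := iter_pow_zero Real.cos (fun x => - Real.sin x) Real.hasDerivAt_cos nc1
    Real.contDiff_cos Real.contDiff_sin.neg p θ
  have hq' := hcon q (by omega) (le_max_right _ _)
  have hp' := hcon p (by omega) (le_max_left _ _)
  have F1 := hcon 1 le_rfl (by omega)
  have F2 := hcon 2 (by omega) (by omega)
  obtain ⟨m, rfl⟩ : ∃ m, p = m + 3 := ⟨p - 3, by omega⟩
  obtain ⟨l, rfl⟩ : ∃ l, q = l + 3 := ⟨q - 3, by omega⟩
  obtain ⟨s1, s2⟩ := iter_pow_one_two Real.sin Real.cos Real.hasDerivAt_sin Real.hasDerivAt_cos l θ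
  obtain ⟨c1, c2⟩ := iter_pow_one_two Real.cos (fun x => - Real.sin x) Real.hasDerivAt_cos nc1 m θ
  rw [s1, c1] at F1
  rw [s2, c2] at F2
  have hsc := Real.sin_sq_add_cos_sq θ
  set s := Real.sin θ
  set c := Real.cos θ
  have hm3 : (m:ℝ) + 3 ≠ 0 := by positivity
  have hl3 : (l:ℝ) + 3 ≠ 0 := by positivity
  by_cases hs : s = 0
  · have hc : c ≠ 0 := by rintro h; rw [hs, h] at hsc; norm_num at hsc
    have ha : a = 0 := by
      rw [hs] at F2
      simp [hc, hm3] at F2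
      exact F2
    rw [ha] at hq'
    have hz := zs hs hc
    have : b = 0 := by simpa [hz] using hq'
    tauto
  by_cases hc : c = 0
  · have hb : b = 0 := by
      rw [hc] at F2
      simp [hs, hl3] at F2
      exact F2
    rw [hb] at hp'
    have hz := zc hc (neg_ne_zero.2 hs)
    have : a = 0 := by simpa [hz] using hp'
    tauto
  have e1 : (a * (m+3) * c^(m+1) - b * (l+3) * s^(l+1)) = 0 := by
    have : s * c * (a * (m+3) * c^(m+1) - b * (l+3) * s^(l+1)) = 0 := by
      linear_combination -F1
    simpa [hs, hc] using this
  have e2 : a * (m+3) * c^(m+1) * ((m+1) * s^2 + (l+1) * c^2) = 0 := by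
    linear_combination F2 + ((l+2)*c^2 - s^2) * e1
  have pos : ((m:ℝ)+1) * s^2 + (l+1) * c^2 ≠ 0 := by positivity
  have ha : a = 0 := by simpa [pos, hm3, hc] using e2
  have hb : b = 0 := by rw [ha] at e1; simpa [hl3, hs] using e1
  tauto


lemma nondeg_unif (p q N : ℕ) (hp : 3 ≤ p) (hq : 3 ≤ q) (hN : max p q ≤ N) :
    ∃ c : ℝ, 0 < c ∧ ∀ a b θ : ℝ, θ ∈ Set.Icc 0 (2 * Real.pi) → ∃ k, 1 ≤ k ∧ k ≤ N ∧
      c * (|a| + |b|) ≤ |a * iteratedDeriv k (fun x => Real.cos x ^ p) θ +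
      b * iteratedDeriv k (fun x => Real.sin x ^ q) θ| := by
  have hsf : ContDiff ℝ (⊤ : ℕ∞) (fun x => Real.cos x ^ p) := Real.contDiff_cos.pow p
  have hsg : ContDiff ℝ (⊤ : ℕ∞) (fun x => Real.sin x ^ q) := Real.contDiff_sin.pow q
  set f := fun x => Real.cos x ^ p
  set g := fun x => Real.sin x ^ q
  have cf : ∀ k, Continuous (iteratedDeriv k f) := fun k =>
    continuous_iff_continuousAt.2 fun x => (hasDeriv_iter f hsf k x).continuousAt
  have cg : ∀ k, Continuous (iteratedDeriv k g) := fun k =>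
    continuous_iff_continuousAt.2 fun x => (hasDeriv_iter g hsg k x).continuousAt
  let G : ℝ × ℝ × ℝ → ℝ := fun z => ∑ k ∈ Finset.Icc 1 N,
    |z.1 * iteratedDeriv k f z.2.2 + z.2.1 * iteratedDeriv k g z.2.2|
  have hG : Continuous G := by
    apply continuous_finsetSum
    intro k _
    have := cf k
    have := cg k
    fun_prop
  let K : Set (ℝ × ℝ × ℝ) := (Set.Icc (-1) 1 ×ˢ Set.Icc (-1) 1 ×ˢ Set.Icc 0 (2 * Real.pi)) ∩
    {z | |z.1| + |z.2.1| = 1}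
  have hK : IsCompact K := by
    apply IsCompact.inter_right
    · exact isCompact_Icc.prod (isCompact_Icc.prod isCompact_Icc)
    · exact isClosed_eq (by fun_prop) continuous_const
  have hpos : ∀ z ∈ K, 0 < G z := by
    rintro ⟨a, b, θ⟩ ⟨-, h1⟩
    simp only [Set.mem_ofPred_eq] at h1
    have hab : a ≠ 0 ∨ b ≠ 0 := by
      by_contra h
      push Not at h
      rw [h.1, h.2] at h1; simp at h1
    obtain ⟨k, hk1, hk2, hk⟩ := nondeg p q hp hq a b θ hab
    apply Finset.sum_pos' (fun _ _ => abs_nonneg _)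
    exact ⟨k, Finset.mem_Icc.2 ⟨hk1, hk2.trans hN⟩, abs_pos.2 hk⟩
  obtain ⟨c, hc, hcG⟩ := hK.exists_forall_le' hG.continuousOn hpos
  have hN0 : 0 < N := by omega
  have hN0' : (0:ℝ) < N := by exact_mod_cast hN0
  refine ⟨c / N, by positivity, fun a b θ hθ => ?_⟩
  rcases eq_or_lt_of_le (by positivity : 0 ≤ |a| + |b|) with h0 | h0
  · exact ⟨1, le_rfl, hN0, by rw [← h0, mul_zero]; exact abs_nonneg _⟩
  set t := |a| + |b|
  have hz : ((a / t, b / t, θ) : ℝ × ℝ × ℝ) ∈ K := by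
    have e : |a / t| + |b / t| = 1 := by
      rw [abs_div, abs_div, abs_of_pos h0, ← add_div]; exact div_self h0.ne'
    refine ⟨⟨?_, ?_, hθ⟩, e⟩
    · apply abs_le.1; have := abs_nonneg (b / t); simp only; linarith
    · apply abs_le.1; have := abs_nonneg (a / t); simp only; linarith
  have h1 := hcG _ hz
  by_contra hcon
  push Not at hcon
  have h2 : G (a / t, b / t, θ) < ∑ k ∈ Finset.Icc 1 N, c / N := by
    apply Finset.sum_lt_sum_of_nonempty ⟨1, Finset.mem_Icc.2 ⟨le_rfl, hN0⟩⟩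
    intro k hk
    rw [Finset.mem_Icc] at hk
    have := hcon k hk.1 hk.2
    simp only
    have e : a / t * iteratedDeriv k f θ + b / t * iteratedDeriv k g θ =
      (a * iteratedDeriv k f θ + b * iteratedDeriv k g θ) / t := by ring
    rw [e, abs_div, abs_of_pos h0, div_lt_iff₀ h0]
    exact this
  simp at h2
  rw [mul_div_cancel₀ _ hN0'.ne'] at h2
  linarith

lemma osc_circle (p q N : ℕ) (hp : 3 ≤ p) (hq : 3 ≤ q) (hN : max p q ≤ N) :
    ∃ C : ℝ, 0 ≤ C ∧ ∀ a b : ℝ, a ≠ 0 → ∀ ψ ψ' : ℝ → ℝ, (∀ x, HasDerivAt ψ (ψ' x) x) →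
      Continuous ψ' → (∀ x, |ψ x| ≤ 1) → (∀ x, |ψ' x| ≤ 2) →
      ‖∫ x in (0:ℝ)..(2 * Real.pi), (ψ x : ℂ) *
        Complex.exp (Complex.I * ((a * Real.cos x ^ p + b * Real.sin x ^ q : ℝ) : ℂ))‖ ≤
      C * |a| ^ (-(1 / (N : ℝ))) := by
  obtain ⟨c, hc, hlow⟩ := nondeg_unif p q N hp hq hN
  have hsf : ContDiff ℝ (⊤ : ℕ∞) (fun x => Real.cos x ^ p) := Real.contDiff_cos.pow p
  have hsg : ContDiff ℝ (⊤ : ℕ∞) (fun x => Real.sin x ^ q) := Real.contDiff_sin.pow q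
  set f := fun x => Real.cos x ^ p with hf
  set g := fun x => Real.sin x ^ q with hg
  have df := hasDeriv_iter f hsf
  have dg := hasDeriv_iter g hsg
  have cf : ∀ k, Continuous (iteratedDeriv k f) := fun k =>
    continuous_iff_continuousAt.2 fun x => (df k x).continuousAt
  have cg : ∀ k, Continuous (iteratedDeriv k g) := fun k =>
    continuous_iff_continuousAt.2 fun x => (dg k x).continuousAt
  obtain ⟨M, hM1, hM⟩ : ∃ M : ℝ, 1 ≤ M ∧ ∀ k ≤ N + 1, ∀ x ∈ Set.Icc 0 (2 * Real.pi),
      |iteratedDeriv k f x| ≤ M ∧ |iteratedDeriv k g x| ≤ M := by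
    have hcont : Continuous (fun x => ∑ k ∈ Finset.range (N+2),
      (|iteratedDeriv k f x| + |iteratedDeriv k g x|)) := by
      apply continuous_finsetSum
      intro k _
      exact (cf k).abs.add (cg k).abs
    obtain ⟨M, hM⟩ := (isCompact_Icc (a := (0:ℝ)) (b := 2 * Real.pi)).exists_bound_of_continuousOn hcont.continuousOn
    refine ⟨max M 1, le_max_right _ _, fun k hk x hx => ?_⟩
    have h1 := (le_abs_self _).trans (hM x hx)
    have h2 := Finset.single_le_sum (f := fun k => |iteratedDeriv k f x| + |iteratedDeriv k g x|)
      (fun _ _ => by positivity) (Finset.mem_range.2 (by omega : k < N + 2))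
    have h3 := abs_nonneg (iteratedDeriv k f x)
    have h4 := abs_nonneg (iteratedDeriv k g x)
    have h5 := le_max_left M 1
    constructor <;> linarith
  obtain ⟨C, hC0, hC⟩ := local_all N (c / 2) M (by positivity) (by linarith)
  obtain ⟨m, hm⟩ := exists_nat_gt (2 * Real.pi * (2 * M / c) )
  have hpi := Real.pi_pos
  have hm0 : (0:ℝ) < m := lt_of_le_of_lt (by positivity) hm
  have hN0 : (0:ℝ) < N := by exact_mod_cast (by omega : 0 < N)
  refine ⟨2 * Real.pi + m * (15 * C), by positivity, fun a b ha ψ ψ' hψ hψ'c hψ1 hψ2 => ?_⟩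
  have ha0 : 0 < |a| := abs_pos.2 ha
  set t := |a| + |b| with ht
  have hat : |a| ≤ t := by have := abs_nonneg b; linarith
  have ht0 : 0 < t := by linarith
  have hta : t ^ (-(1 / (N : ℝ))) ≤ |a| ^ (-(1 / (N : ℝ))) :=
    Real.rpow_le_rpow_of_nonpos ha0 hat (by simp)
  let D : ℕ → ℝ → ℝ := fun i x => a * iteratedDeriv i f x + b * iteratedDeriv i g x
  have hD : ∀ i x, HasDerivAt (D i) (D (i+1) x) x := fun i x =>
    ((df i x).const_mul a).add ((dg i x).const_mul b)
  have hD0 : ∀ x, D 0 x = a * Real.cos x ^ p + b * Real.sin x ^ q := fun x => by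
    simp [D, hf, hg]
  simp only [← hD0]
  have hexp : ∀ x, ‖Complex.exp (Complex.I * (D 0 x : ℂ))‖ = 1 := fun x => by
    rw [mul_comm]; exact Complex.norm_exp_ofReal_mul_I _
  have hcD : ∀ i, Continuous (D i) := fun i =>
    continuous_iff_continuousAt.2 fun x => (hD i x).continuousAt
  have hcψ : Continuous ψ := continuous_iff_continuousAt.2 fun x => (hψ x).continuousAt
  have hcI : Continuous (fun x => (ψ x : ℂ) * Complex.exp (Complex.I * (D 0 x : ℂ))) := by
    have h1 := Complex.continuous_ofReal.comp (hcD 0)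
    have h2 := Complex.continuous_ofReal.comp hcψ
    simp only [Function.comp_def] at h1 h2
    fun_prop
  rcases lt_or_ge t 1 with ht1 | ht1
  · have h1 : ‖∫ x in (0:ℝ)..(2 * Real.pi), (ψ x : ℂ) * Complex.exp (Complex.I * (D 0 x : ℂ))‖ ≤
        1 * |2 * Real.pi - 0| := by
      apply intervalIntegral.norm_integral_le_of_norm_le_const
      intro x _
      rw [norm_mul, hexp, mul_one, Complex.norm_real]; exact hψ1 x
    rw [sub_zero, abs_of_pos (by positivity), one_mul] at h1
    refine h1.trans ?_
    have h2 : 1 ≤ |a| ^ (-(1 / (N : ℝ))) :=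
      Real.one_le_rpow_of_pos_of_le_one_of_nonpos ha0 (by linarith) (by simp)
    nlinarith [mul_nonneg (mul_nonneg hm0.le (by positivity : 0 ≤ 15 * C)) (zero_le_one.trans h2)]
  · have hDb : ∀ k ≤ N + 1, ∀ x ∈ Set.Icc 0 (2 * Real.pi), |D k x| ≤ M * t := by
      intro k hk x hx
      obtain ⟨h1, h2⟩ := hM k hk x hx
      refine (abs_add_le _ _).trans ?_
      rw [abs_mul, abs_mul, ht]
      have := mul_le_mul_of_nonneg_left h1 (abs_nonneg a)
      have := mul_le_mul_of_nonneg_left h2 (abs_nonneg b)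
      linarith
    let s : ℕ → ℝ := fun i => i * (2 * Real.pi / m)
    have hs0 : s 0 = 0 := by simp [s]
    have hsm : s m = 2 * Real.pi := by simp only [s]; field_simp
    have hstep : 2 * Real.pi / m ≤ c / (2 * M) := by
      rw [div_le_div_iff₀ hm0 (by positivity)]
      have := mul_lt_mul_of_pos_right hm hc
      have e : 2 * Real.pi * (2 * M / c) * c = 2 * Real.pi * (2 * M) := by field_simp
      linarith
    have hstep7 : 2 * Real.pi / m ≤ 7 := by
      have : (1:ℝ) ≤ m := by exact_mod_cast (by exact_mod_cast hm0 : 0 < m)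
      have h1 : 2 * Real.pi / m ≤ 2 * Real.pi := div_le_self (by positivity) this
      have := Real.pi_lt_d2
      linarith
    have hpiece : ∀ i < m, ‖∫ x in (s i)..(s (i+1)), (ψ x : ℂ) * Complex.exp (Complex.I * (D 0 x : ℂ))‖
        ≤ 15 * C * t ^ (-(1 / (N : ℝ))) := by
      intro i hi
      have hd : s (i+1) - s i = 2 * Real.pi / m := by simp only [s]; push_cast; ring
      have hdpos : 0 < 2 * Real.pi / m := by positivity
      have hi0 : 0 ≤ s i := by simp only [s]; positivity
      have hi1 : s (i+1) ≤ 2 * Real.pi := by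
        rw [← hsm]; simp only [s]
        have : ((i+1 : ℕ):ℝ) ≤ m := by exact_mod_cast hi
        gcongr
      obtain ⟨k, hk1, hkN, hk⟩ := hlow a b (s i) ⟨hi0, by linarith⟩
      have hlow2 : ∀ x ∈ Set.Icc (s i) (s (i+1)), c / 2 * t ≤ |D k x| := by
        intro x hx
        have hb := Convex.norm_image_sub_le_of_norm_hasDerivWithin_le (f := D k) (f' := D (k+1))
          (s := Set.Icc (s i) (s (i+1))) (C := M * t) (x := s i) (y := x)
          (fun y _ => (hD k y).hasDerivWithinAt)
          (fun y hy => hDb (k+1) (by omega) y ⟨by linarith [hy.1], by linarith [hy.2]⟩)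
          (convex_Icc _ _) (Set.left_mem_Icc.2 (by linarith)) hx
        rw [Real.norm_eq_abs, Real.norm_eq_abs, abs_of_nonneg (by linarith [hx.1] : 0 ≤ x - s i)] at hb
        have h1 : M * t * (x - s i) ≤ M * t * (c / (2 * M)) := by
          have : x - s i ≤ c / (2 * M) := by linarith [hx.2]
          have : 0 ≤ M * t := by positivity
          gcongr
        have e : M * t * (c / (2 * M)) = c / 2 * t := by field_simp
        have h2 : |D k (s i)| - |D k x| ≤ |D k x - D k (s i)| := by
          rw [abs_sub_comm]; exact abs_sub_abs_le_abs_sub _ _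
        have hk' : c * t ≤ |D k (s i)| := hk
        linarith
      have hb := amp_bound D hD ψ ψ' hψ hψ'c hψ1 hψ2 (s i) (s (i+1)) (C * t ^ (-(1 / (N : ℝ))))
        (by linarith) (fun x hx => hC D hD (s i) x t hx.1 (by linarith [hx.2]) ht1
          (fun y hy => hDb 2 (by omega) y ⟨by linarith [hy.1], by linarith [hy.2, hx.2]⟩)
          ⟨k, hk1, hkN, fun y hy => hlow2 y ⟨hy.1, hy.2.trans hx.2⟩⟩)
      refine hb.trans ?_
      rw [mul_assoc 15]
      gcongr
      linarith
    have hsum := intervalIntegral.sum_integral_adjacent_intervals (a := s) (n := m) (μ := volume)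
      (f := fun x => (ψ x : ℂ) * Complex.exp (Complex.I * (D 0 x : ℂ)))
      (fun k _ => hcI.intervalIntegrable _ _)
    rw [hs0, hsm] at hsum
    rw [← hsum]
    refine (norm_sum_le _ _).trans ?_
    refine (Finset.sum_le_sum (fun i hi => hpiece i (Finset.mem_range.1 hi))).trans ?_
    rw [Finset.sum_const, Finset.card_range, nsmul_eq_mul]
    have h1 : (m:ℝ) * (15 * C * t ^ (-(1 / (N : ℝ)))) ≤ (m * (15 * C)) * |a| ^ (-(1 / (N : ℝ))) := by
      rw [← mul_assoc]; gcongr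
    have h2 : 0 ≤ 2 * Real.pi * |a| ^ (-(1 / (N : ℝ))) := by positivity
    linarith


/-- Rotation of the coordinates `j`, `k`, as a linear map. -/
noncomputable def rotLin {n : ℕ} (j k : Fin n) (θ : ℝ) :
    EuclideanSpace ℝ (Fin n) →ₗ[ℝ] EuclideanSpace ℝ (Fin n) where
  toFun y := WithLp.toLp 2 (fun i => if i = j then Real.cos θ * y j - Real.sin θ * y k
    else if i = k then Real.sin θ * y j + Real.cos θ * y k else y i)
  map_add' x y := by
    ext i
    simp only [PiLp.add_apply]
    split_ifs <;> ring
  map_smul' c y := by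
    ext i
    simp only [PiLp.smul_apply, smul_eq_mul, RingHom.id_apply]
    split_ifs <;> ring

lemma rotLin_apply {n : ℕ} (j k : Fin n) (θ : ℝ) (y : EuclideanSpace ℝ (Fin n)) (i : Fin n) :
    rotLin j k θ y i = if i = j then Real.cos θ * y j - Real.sin θ * y k
    else if i = k then Real.sin θ * y j + Real.cos θ * y k else y i := rfl

lemma rotLin_norm {n : ℕ} (j k : Fin n) (hjk : j ≠ k) (θ : ℝ) (y : EuclideanSpace ℝ (Fin n)) :
    ‖rotLin j k θ y‖ = ‖y‖ := by
  rw [EuclideanSpace.norm_eq, EuclideanSpace.norm_eq]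
  congr 1
  rw [← sub_eq_zero, ← Finset.sum_sub_distrib]
  rw [Finset.sum_eq_add j k hjk]
  · simp only [rotLin_apply, Real.norm_eq_abs, sq_abs, if_true, hjk.symm, if_false]
    linear_combination (y j ^ 2 + y k ^ 2) * Real.sin_sq_add_cos_sq θ
  · intro i _ hi
    simp [rotLin_apply, hi.1, hi.2]
  · simp
  · simp

/-- Rotation of the coordinates `j`, `k`, as an isometry. -/
noncomputable def rot {n : ℕ} (j k : Fin n) (hjk : j ≠ k) (θ : ℝ) :
    EuclideanSpace ℝ (Fin n) ≃ₗᵢ[ℝ] EuclideanSpace ℝ (Fin n) :=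
  LinearIsometry.toLinearIsometryEquiv ⟨rotLin j k θ, rotLin_norm j k hjk θ⟩ rfl

lemma rot_apply {n : ℕ} (j k : Fin n) (hjk : j ≠ k) (θ : ℝ) (y : EuclideanSpace ℝ (Fin n)) :
    rot j k hjk θ y = rotLin j k θ y := rfl

lemma integral_rot {n : ℕ} (j k : Fin n) (hjk : j ≠ k) (θ : ℝ) (d : ℝ)
    (f : EuclideanSpace ℝ (Fin n) → ℂ) :
    ∫ y in Metric.sphere (0 : EuclideanSpace ℝ (Fin n)) 1, f (rotLin j k θ y) ∂(μH[d]) =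
    ∫ y in Metric.sphere (0 : EuclideanSpace ℝ (Fin n)) 1, f y ∂(μH[d]) := by
  have hmp := (rot j k hjk θ).toIsometryEquiv.measurePreserving_hausdorffMeasure d
  have h := hmp.setIntegral_preimage_emb
    ((rot j k hjk θ).toIsometryEquiv.toHomeomorph.measurableEmbedding) f
    (Metric.sphere (0 : EuclideanSpace ℝ (Fin n)) 1)
  rw [← h]
  have : (rot j k hjk θ).toIsometryEquiv ⁻¹' (Metric.sphere (0 : EuclideanSpace ℝ (Fin n)) 1) =
      Metric.sphere (0 : EuclideanSpace ℝ (Fin n)) 1 := by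
    ext y
    simp only [Set.mem_preimage, mem_sphere_zero_iff_norm]
    rw [show ((rot j k hjk θ).toIsometryEquiv y) = rot j k hjk θ y from rfl,
      LinearIsometryEquiv.norm_map]
  rw [this]
  rfl

lemma avg_bound {n : ℕ} (j k : Fin n) (hjk : j ≠ k) (d : ℝ)
    (hfin : μH[d] (Metric.sphere (0 : EuclideanSpace ℝ (Fin n)) 1) < ⊤)
    (f : EuclideanSpace ℝ (Fin n) → ℂ) (hf : Continuous f) (K : ℝ)
    (hK : ∀ y ∈ Metric.sphere (0 : EuclideanSpace ℝ (Fin n)) 1,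
      ‖∫ θ in (0:ℝ)..(2 * Real.pi), f (rotLin j k θ y)‖ ≤ K) :
    ‖∫ y in Metric.sphere (0 : EuclideanSpace ℝ (Fin n)) 1, f y ∂(μH[d])‖ ≤
      K * (μH[d] (Metric.sphere (0 : EuclideanSpace ℝ (Fin n)) 1)).toReal := by
  set S := Metric.sphere (0 : EuclideanSpace ℝ (Fin n)) 1 with hS
  have hSm : MeasurableSet S := Metric.isClosed_sphere.measurableSet
  have : IsFiniteMeasure ((μH[d] : Measure (EuclideanSpace ℝ (Fin n))).restrict S) :=
    ⟨by rw [Measure.restrict_apply_univ]; exact hfin⟩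
  have hpi := Real.pi_pos
  have hcont : Continuous (fun z : ℝ × EuclideanSpace ℝ (Fin n) => f (rotLin j k z.1 z.2)) := by
    apply hf.comp
    refine (PiLp.continuous_toLp 2 _).comp (continuous_pi fun i => ?_)
    split_ifs <;> fun_prop
  obtain ⟨B, hB⟩ := (isCompact_sphere (0 : EuclideanSpace ℝ (Fin n)) 1).exists_bound_of_continuousOn
    hf.continuousOn
  have hInt : Integrable (Function.uncurry fun (θ : ℝ) y => f (rotLin j k θ y))
      ((volume.restrict (Set.Ioc 0 (2 * Real.pi))).prod ((μH[d]).restrict S)) := by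
    refine Integrable.of_bound (C := B) hcont.aestronglyMeasurable ?_
    have : ∀ᵐ z ∂((volume.restrict (Set.Ioc 0 (2 * Real.pi))).prod
        ((μH[d] : Measure (EuclideanSpace ℝ (Fin n))).restrict S)), z.2 ∈ S :=
      Measure.quasiMeasurePreserving_snd.ae (ae_restrict_mem hSm)
    filter_upwards [this] with z hz
    apply hB
    rw [mem_sphere_zero_iff_norm, rotLin_norm j k hjk]
    exact mem_sphere_zero_iff_norm.1 hz
  have hsw : ∫ θ in (0:ℝ)..(2 * Real.pi), (∫ y in S, f (rotLin j k θ y) ∂(μH[d])) =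
      ∫ y in S, (∫ θ in (0:ℝ)..(2 * Real.pi), f (rotLin j k θ y)) ∂(μH[d]) := by
    simp only [intervalIntegral.integral_of_le (by positivity : (0:ℝ) ≤ 2 * Real.pi)]
    exact integral_integral_swap hInt
  simp only [hS, integral_rot j k hjk] at hsw
  rw [intervalIntegral.integral_const, sub_zero] at hsw
  have h1 : ‖∫ y in S, (∫ θ in (0:ℝ)..(2 * Real.pi), f (rotLin j k θ y)) ∂(μH[d])‖ ≤
      K * (μH[d] S).toReal := by
    exact norm_setIntegral_le_of_norm_le_const hfin hK
  rw [hS, ← hsw, norm_smul, Real.norm_eq_abs, abs_of_pos (by positivity)] at h1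
  have h2 : (1:ℝ) ≤ 2 * Real.pi := by have := Real.pi_gt_three; linarith
  exact (le_mul_of_one_le_left (norm_nonneg _) h2).trans h1

lemma scale_bound (p N : ℕ) (hN0 : 0 < N) (hp : p ≤ N) (a r : ℝ) (ha : 0 < a) (hr : 0 < r)
    (hr1 : r ≤ 1) : r ^ 2 * (a * r ^ p) ^ (-(1 / (N : ℝ))) ≤ a ^ (-(1 / (N : ℝ))) := by
  rw [Real.mul_rpow ha.le (by positivity)]
  have h1 : (r ^ p) ^ (-(1 / (N : ℝ))) ≤ (r ^ N) ^ (-(1 / (N : ℝ))) :=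
    Real.rpow_le_rpow_of_nonpos (by positivity) (pow_le_pow_of_le_one hr.le hr1 hp) (by simp)
  have h2 : (r ^ N) ^ (-(1 / (N : ℝ))) = r⁻¹ := by
    rw [Real.rpow_neg (by positivity), one_div, Real.pow_rpow_inv_natCast hr.le hN0.ne']
  rw [h2] at h1
  have h3 : 0 ≤ a ^ (-(1 / (N : ℝ))) := by positivity
  calc r ^ 2 * (a ^ (-(1 / (N : ℝ))) * (r ^ p) ^ (-(1 / (N : ℝ))))
      ≤ r ^ 2 * (a ^ (-(1 / (N : ℝ))) * r⁻¹) := by gcongr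
    _ = r * a ^ (-(1 / (N : ℝ))) := by field_simp
    _ ≤ 1 * a ^ (-(1 / (N : ℝ))) := by gcongr
    _ = _ := one_mul _

lemma inner_bound {n : ℕ} (β : Fin n → ℕ) (j k : Fin n) (hjk : j ≠ k) (N : ℕ) (hN0 : 0 < N)
    (hp : β j ≤ N) (C : ℝ) (hC0 : 0 ≤ C)
    (ψ ψ' : ℝ → ℝ) (hψp : Function.Periodic ψ (2 * Real.pi))
    (hC : ∀ a b : ℝ, a ≠ 0 → 
      ‖∫ x in (0:ℝ)..(2 * Real.pi), (ψ x : ℂ) *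
        Complex.exp (Complex.I * ((a * Real.cos x ^ β j + b * Real.sin x ^ β k : ℝ) : ℂ))‖ ≤
      C * |a| ^ (-(1 / (N : ℝ))))
    (l : Fin n) 
    (hl : (l = j ∧ ψ = fun x => Real.cos x ^ 2) ∨ (l = k ∧ ψ = fun x => Real.sin x ^ 2))
    (lam : EuclideanSpace ℝ (Fin n)) (hlam : lam j ≠ 0) (y : EuclideanSpace ℝ (Fin n))
    (hy : ‖y‖ = 1) :
    ‖∫ θ in (0:ℝ)..(2 * Real.pi), ((rotLin j k θ y l ^ 2 : ℝ) : ℂ) *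
      Complex.exp (Complex.I * Complex.ofReal (∑ i, lam i * (rotLin j k θ y i) ^ (β i)))‖ ≤
    C * |lam j| ^ (-(1 / (N : ℝ))) := by
  obtain ⟨r, θ₀, hr0, hyj, hyk⟩ : ∃ r θ₀ : ℝ, 0 ≤ r ∧ y j = r * Real.cos θ₀ ∧ y k = r * Real.sin θ₀ :=
    ⟨‖(⟨y j, y k⟩ : ℂ)‖, Complex.arg ⟨y j, y k⟩, norm_nonneg _,
      (Complex.norm_mul_cos_arg ⟨y j, y k⟩).symm, (Complex.norm_mul_sin_arg ⟨y j, y k⟩).symm⟩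
  have hr1 : r ≤ 1 := by
    have h1 : y j ^ 2 + y k ^ 2 ≤ 1 := by
      have h2 := EuclideanSpace.norm_sq_eq y
      rw [hy] at h2
      have h3 : ∑ i ∈ ({j, k} : Finset (Fin n)), ‖y i‖ ^ 2 ≤ ∑ i, ‖y i‖ ^ 2 :=
        Finset.sum_le_sum_of_subset_of_nonneg (Finset.subset_univ _) (fun _ _ _ => by positivity)
      rw [Finset.sum_pair hjk] at h3
      simp only [Real.norm_eq_abs, sq_abs] at h2 h3
      linarith
    have h4 : r ^ 2 ≤ 1 := by
      have : r ^ 2 = y j ^ 2 + y k ^ 2 := by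
        rw [hyj, hyk]; linear_combination -(r^2) * Real.sin_sq_add_cos_sq θ₀
      linarith
    nlinarith
  have rj : ∀ θ, rotLin j k θ y j = r * Real.cos (θ + θ₀) := fun θ => by
    rw [rotLin_apply, if_pos rfl, hyj, hyk, Real.cos_add]; ring
  have rk : ∀ θ, rotLin j k θ y k = r * Real.sin (θ + θ₀) := fun θ => by
    rw [rotLin_apply, if_neg hjk.symm, if_pos rfl, hyj, hyk, Real.sin_add]; ring
  have rl : ∀ θ, rotLin j k θ y l ^ 2 = r ^ 2 * ψ (θ + θ₀) := fun θ => by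
    rcases hl with ⟨rfl, rfl⟩ | ⟨rfl, rfl⟩
    · rw [rj]; ring
    · rw [rk]; ring
  set A := ∑ i ∈ (Finset.univ.erase j).erase k, lam i * y i ^ β i with hA
  have hsum : ∀ θ, ∑ i, lam i * (rotLin j k θ y i) ^ (β i) =
      A + ((lam j * r ^ β j) * Real.cos (θ + θ₀) ^ β j + (lam k * r ^ β k) * Real.sin (θ + θ₀) ^ β k) := by
    intro θ
    rw [← Finset.add_sum_erase _ _ (Finset.mem_univ j),
      ← Finset.add_sum_erase _ _ (Finset.mem_erase.2 ⟨hjk.symm, Finset.mem_univ k⟩), rj, rk]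
    have : ∑ i ∈ (Finset.univ.erase j).erase k, lam i * (rotLin j k θ y i) ^ (β i) = A := by
      apply Finset.sum_congr rfl
      intro i hi
      simp only [Finset.mem_erase, Finset.mem_univ, and_true] at hi
      rw [rotLin_apply, if_neg hi.2, if_neg hi.1]
    rw [this, mul_pow, mul_pow]; ring
  let h : ℝ → ℂ := fun x => (ψ x : ℂ) * Complex.exp (Complex.I *
    (((lam j * r ^ β j) * Real.cos x ^ β j + (lam k * r ^ β k) * Real.sin x ^ β k : ℝ) : ℂ))
  have hper : Function.Periodic h (2 * Real.pi) := by
    intro x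
    simp only [h, hψp x, Real.cos_add_two_pi, Real.sin_add_two_pi]
  have e1 : ∫ θ in (0:ℝ)..(2 * Real.pi), ((rotLin j k θ y l ^ 2 : ℝ) : ℂ) *
      Complex.exp (Complex.I * Complex.ofReal (∑ i, lam i * (rotLin j k θ y i) ^ (β i))) =
      (((r ^ 2 : ℝ) : ℂ) * Complex.exp (Complex.I * (A : ℂ))) * ∫ x in (0:ℝ)..(2 * Real.pi), h x := by
    have e2 : ∫ x in (0:ℝ)..(2 * Real.pi), h x = ∫ θ in (0:ℝ)..(2 * Real.pi), h (θ + θ₀) := by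
      rw [intervalIntegral.integral_comp_add_right]
      have := hper.intervalIntegral_add_eq 0 θ₀
      rw [zero_add] at this
      rw [this, zero_add, add_comm]
    rw [e2, ← intervalIntegral.integral_const_mul]
    apply intervalIntegral.integral_congr
    intro θ _
    simp only [h]
    rw [rl, hsum, Complex.ofReal_add A, mul_add, Complex.exp_add, Complex.ofReal_mul]
    ring
  rw [e1, norm_mul, norm_mul, mul_comm Complex.I, Complex.norm_exp_ofReal_mul_I, mul_one,
    Complex.norm_real, Real.norm_eq_abs, abs_of_nonneg (by positivity)]
  rcases eq_or_lt_of_le hr0 with h0 | h0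
  · rw [← h0]; simp; positivity
  · have hb := hC (lam j * r ^ β j) (lam k * r ^ β k) (by positivity)
    rw [abs_mul, abs_of_pos (by positivity : 0 < r ^ β j)] at hb
    have hsc := scale_bound (β j) N hN0 hp |lam j| r (abs_pos.2 hlam) h0 hr1
    calc r ^ 2 * ‖∫ x in (0:ℝ)..(2 * Real.pi), h x‖
        ≤ r ^ 2 * (C * (|lam j| * r ^ β j) ^ (-(1 / (N : ℝ)))) := by gcongr
      _ = C * (r ^ 2 * (|lam j| * r ^ β j) ^ (-(1 / (N : ℝ)))) := by ring
      _ ≤ _ := by gcongr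

lemma exists_max {n : ℕ} (hn : 0 < n) (lam : EuclideanSpace ℝ (Fin n)) (hlam : lam ≠ 0) :
    ∃ j, lam j ≠ 0 ∧ ‖lam‖ / n ≤ |lam j| := by
  have : Nonempty (Fin n) := ⟨⟨0, hn⟩⟩
  obtain ⟨j, hj⟩ := Finite.exists_max (fun i => |lam i|)
  have hn1 : (1:ℝ) ≤ n := by exact_mod_cast hn
  have h1 : ‖lam‖ / n ≤ |lam j| := by
    rw [div_le_iff₀ (by positivity)]
    apply le_of_sq_le_sq _ (by positivity)
    rw [EuclideanSpace.norm_sq_eq]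
    calc ∑ i, ‖lam i‖ ^ 2 ≤ ∑ i : Fin n, |lam j| ^ 2 := by
          apply Finset.sum_le_sum
          intro i _
          rw [Real.norm_eq_abs]
          have := hj i
          gcongr
      _ = n * |lam j| ^ 2 := by simp
      _ ≤ (|lam j| * n) ^ 2 := by
        rw [mul_pow]
        nlinarith [sq_nonneg (|lam j|), mul_le_mul_of_nonneg_right hn1 (by positivity : (0:ℝ) ≤ n * |lam j| ^ 2)]
  refine ⟨j, ?_, h1⟩
  intro h0
  rw [h0, abs_zero] at h1
  have : 0 < ‖lam‖ / n := by have := norm_pos_iff.2 hlam; positivity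
  linarith

theorem sphere_oscillatory_decay (n : ℕ) (hn : 2 ≤ n) (β : Fin n → ℕ)
    (hβ : ∀ j, 3 ≤ β j) (βmax : ℕ) (hβmax : βmax = Finset.univ.sup β) :
    ∃ C : ℝ, ∀ lam : EuclideanSpace ℝ (Fin n), lam ≠ 0 →
      ‖∫ y in Metric.sphere (0 : EuclideanSpace ℝ (Fin n)) 1,
          Complex.exp (Complex.I * Complex.ofReal (∑ j, lam j * (y j) ^ (β j)))
            ∂(μH[(n : ℝ) - 1])‖
        ≤ C * ‖lam‖ ^ (-(1 / (βmax : ℝ))) := by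
  have hle : ∀ j, β j ≤ βmax := fun j => hβmax ▸ Finset.le_sup (Finset.mem_univ j)
  have hN0 : 0 < βmax := lt_of_lt_of_le (by have := hβ ⟨0, by omega⟩; omega) (hle ⟨0, by omega⟩)
  have hosc := fun j k => osc_circle (β j) (β k) βmax (hβ j) (hβ k) (max_le (hle j) (hle k))
  choose C hC0 hC using hosc
  have hexp : ∀ x : ℝ, ‖Complex.exp (Complex.I * (x : ℂ))‖ = 1 := fun x => by
    rw [mul_comm]; exact Complex.norm_exp_ofReal_mul_I _
  set S := Metric.sphere (0 : EuclideanSpace ℝ (Fin n)) 1 with hS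
  set d : ℝ := (n : ℝ) - 1
  have hSm : MeasurableSet S := Metric.isClosed_sphere.measurableSet
  rcases eq_or_ne (μH[d] S) ⊤ with hinf | hfin
  · refine ⟨0, fun lam _ => ?_⟩
    rw [integral_undef]
    · simp
    · intro hI
      have h1 : Integrable (fun _ : EuclideanSpace ℝ (Fin n) => (1:ℝ)) ((μH[d]).restrict S) := by
        have := hI.norm
        simpa only [hexp] using this
      rw [integrable_const_iff] at h1
      simp only [one_ne_zero, false_or] at h1
      have := h1.measure_univ_lt_top
      rw [Measure.restrict_apply_univ, hinf] at this
      exact lt_irrefl _ this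
  have hfin' : μH[d] S < ⊤ := lt_top_iff_ne_top.2 hfin
  have : IsFiniteMeasure ((μH[d] : Measure (EuclideanSpace ℝ (Fin n))).restrict S) :=
    ⟨by rw [Measure.restrict_apply_univ]; exact hfin'⟩
  set T := ∑ j, ∑ k, C j k with hT
  have hCT : ∀ j k, C j k ≤ T := fun j k =>
    (Finset.single_le_sum (f := fun k => C j k) (fun _ _ => hC0 _ _) (Finset.mem_univ k)).trans
      (Finset.single_le_sum (f := fun j => ∑ k, C j k)
        (fun _ _ => Finset.sum_nonneg fun _ _ => hC0 _ _) (Finset.mem_univ j))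
  have hT0 : 0 ≤ T := Finset.sum_nonneg fun _ _ => Finset.sum_nonneg fun _ _ => hC0 _ _
  refine ⟨n * (T * (μH[d] S).toReal) * ((n:ℝ)⁻¹) ^ (-(1 / (βmax : ℝ))), fun lam hlam => ?_⟩
  obtain ⟨j, hj0, hj⟩ := exists_max (by omega) lam hlam
  have hn0 : (0:ℝ) < n := by positivity
  have hlp : 0 < ‖lam‖ := norm_pos_iff.2 hlam
  let ph : EuclideanSpace ℝ (Fin n) → ℂ := fun y =>
    Complex.exp (Complex.I * Complex.ofReal (∑ j, lam j * (y j) ^ (β j)))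
  have hphc : Continuous ph := by
    apply Complex.continuous_exp.comp
    apply continuous_const.mul
    apply Complex.continuous_ofReal.comp
    apply continuous_finsetSum
    intro i _
    fun_prop
  have hfc : ∀ l : Fin n, Continuous (fun y : EuclideanSpace ℝ (Fin n) => ((y l ^ 2 : ℝ) : ℂ) * ph y) := by
    intro l
    refine Continuous.mul (Complex.continuous_ofReal.comp (by fun_prop)) hphc
  have hpiece : ∀ l : Fin n, ‖∫ y in S, ((y l ^ 2 : ℝ) : ℂ) * ph y ∂(μH[d])‖ ≤
      (T * |lam j| ^ (-(1 / (βmax : ℝ)))) * (μH[d] S).toReal := by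
    intro l
    have main : ∀ k, j ≠ k → ∀ ψ ψ' : ℝ → ℝ, (∀ x, HasDerivAt ψ (ψ' x) x) → Continuous ψ' →
        (∀ x, |ψ x| ≤ 1) → (∀ x, |ψ' x| ≤ 2) → Function.Periodic ψ (2 * Real.pi) →
        ((l = j ∧ ψ = fun x => Real.cos x ^ 2) ∨ (l = k ∧ ψ = fun x => Real.sin x ^ 2)) →
        ‖∫ y in S, ((y l ^ 2 : ℝ) : ℂ) * ph y ∂(μH[d])‖ ≤
      (T * |lam j| ^ (-(1 / (βmax : ℝ)))) * (μH[d] S).toReal := by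
      intro k hjk ψ ψ' h1 h2 h3 h4 h5 h6
      refine avg_bound j k hjk d hfin' _ (hfc l) _ (fun y hy => ?_)
      refine (inner_bound β j k hjk βmax hN0 (hle j) (C j k) (hC0 j k) ψ ψ' h5
        (fun a b ha => hC j k a b ha ψ ψ' h1 h2 h3 h4) l h6 lam hj0 y
        (mem_sphere_zero_iff_norm.1 hy)).trans ?_
      have := hCT j k
      gcongr
    by_cases hlj : l = j
    · obtain ⟨k, hk⟩ : ∃ k, k ≠ j := by
        have : Nontrivial (Fin n) := Fin.nontrivial_iff_two_le.2 hn
        exact exists_ne j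
      refine main k hk.symm (fun x => Real.cos x ^ 2) (fun x => 2 * Real.cos x * (-Real.sin x))
        (fun x => ?_) (by fun_prop) (fun x => ?_) (fun x => ?_) (fun x => ?_) (Or.inl ⟨hlj, rfl⟩)
      · simpa using (Real.hasDerivAt_cos x).fun_pow 2
      · rw [abs_of_nonneg (by positivity)]; exact Real.cos_sq_le_one x
      · rw [abs_mul, abs_mul, abs_neg, abs_two]
        have := Real.abs_cos_le_one x
        have := Real.abs_sin_le_one x
        nlinarith [abs_nonneg (Real.cos x), abs_nonneg (Real.sin x)]
      · simp only [Real.cos_add_two_pi]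
    · refine main l (Ne.symm hlj) (fun x => Real.sin x ^ 2) (fun x => 2 * Real.sin x * (Real.cos x))
        (fun x => ?_) (by fun_prop) (fun x => ?_) (fun x => ?_) (fun x => ?_) (Or.inr ⟨rfl, rfl⟩)
      · simpa using (Real.hasDerivAt_sin x).fun_pow 2
      · rw [abs_of_nonneg (by positivity)]; exact Real.sin_sq_le_one x
      · rw [abs_mul, abs_mul, abs_two]
        have := Real.abs_cos_le_one x
        have := Real.abs_sin_le_one x
        nlinarith [abs_nonneg (Real.cos x), abs_nonneg (Real.sin x)]
      · simp only [Real.sin_add_two_pi]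
  have hdec : ∫ y in S, ph y ∂(μH[d]) = ∑ l, ∫ y in S, ((y l ^ 2 : ℝ) : ℂ) * ph y ∂(μH[d]) := by
    rw [← integral_finsetSum]
    · apply setIntegral_congr_fun hSm
      intro y hy
      have h1 := EuclideanSpace.norm_sq_eq y
      rw [mem_sphere_zero_iff_norm.1 hy] at h1
      simp only [Real.norm_eq_abs, sq_abs] at h1
      simp only
      rw [← Finset.sum_mul, ← Complex.ofReal_sum, ← h1]
      simp
    · intro l _
      obtain ⟨B, hB⟩ := (isCompact_sphere (0 : EuclideanSpace ℝ (Fin n)) 1).exists_bound_of_continuousOn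
        (hfc l).continuousOn
      exact Integrable.of_bound (C := B) (hfc l).aestronglyMeasurable
        ((ae_restrict_mem hSm).mono hB)
  change ‖∫ y in S, ph y ∂(μH[d])‖ ≤ _
  rw [hdec]
  refine (norm_sum_le _ _).trans ?_
  refine (Finset.sum_le_sum fun l _ => hpiece l).trans ?_
  rw [Finset.sum_const, Finset.card_univ, Fintype.card_fin, nsmul_eq_mul]
  have h1 : |lam j| ^ (-(1 / (βmax : ℝ))) ≤ ((n:ℝ)⁻¹) ^ (-(1 / (βmax : ℝ))) * ‖lam‖ ^ (-(1 / (βmax : ℝ))) := by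
    rw [← Real.mul_rpow (by positivity) (by positivity)]
    apply Real.rpow_le_rpow_of_nonpos (by positivity) _ (by simp)
    rw [mul_comm, ← div_eq_mul_inv]; exact hj
  calc (n:ℝ) * ((T * |lam j| ^ (-(1 / (βmax : ℝ)))) * (μH[d] S).toReal)
      ≤ n * ((T * (((n:ℝ)⁻¹) ^ (-(1 / (βmax : ℝ))) * ‖lam‖ ^ (-(1 / (βmax : ℝ))))) * (μH[d] S).toReal) := by
        gcongr
    _ = _ := by ring
end
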